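/- Assume additionally that α < 1/2. Then for every t > 0 and every ρ > 0 one has lim_{δ→0+} E|y_δ(t δ^{-2(1-ρ)})|² = 0. -/

import Mathlib

open MeasureTheory ProbabilityTheory Filter Set
open scoped RealInnerProductSpace

/-- The covariance matrix entries `R_{ij}(x) = ∫_{ℝᵈ} cos(k·x) R̂_{ij}(k) dk`, where
`R̂_{ij}(k) = a(|k|)|k|^{-(2α+d-2)} (δ_{ij} - k_i k_j/|k|²)`. -/
noncomputable def covEntry (d : ℕ) (α : ℝ) (a : ℝ → ℝ)
    (x : EuclideanSpace ℝ (Fin d)) (i j : Fin d) : ℝ :=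
  ∫ k : EuclideanSpace ℝ (Fin d),
    Real.cos ⟪k, x⟫ *
      (a ‖k‖ * ‖k‖ ^ (-(2 * α + (d : ℝ) - 2)) *
        ((if i = j then (1:ℝ) else 0) - k i * k j / ‖k‖ ^ 2))


lemma gauss_cos_integrable {d : ℕ} {τ : ℝ} (hτ : 0 < τ) (x : EuclideanSpace ℝ (Fin d)) :
    Integrable (fun k : EuclideanSpace ℝ (Fin d) =>
      Real.exp (-τ * ‖k‖ ^ 2) * Real.cos ⟪k, x⟫) := by
  have h := (GaussianFourier.integrable_cexp_neg_mul_sq_norm_add (V := EuclideanSpace ℝ (Fin d))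
    (b := (τ : ℂ)) (by simpa using hτ) Complex.I x).re
  refine h.congr (Eventually.of_forall fun k => ?_)
  simp only [RCLike.re_to_complex, Complex.exp_re]
  congr 2
  · simp [← Complex.ofReal_pow]
  · simp [← Complex.ofReal_pow, real_inner_comm]

lemma gauss_cos_integral {d : ℕ} {τ : ℝ} (hτ : 0 < τ) (x : EuclideanSpace ℝ (Fin d)) :
    ∫ k : EuclideanSpace ℝ (Fin d), Real.exp (-τ * ‖k‖ ^ 2) * Real.cos ⟪k, x⟫
      = (Real.pi / τ) ^ ((d : ℝ) / 2) * Real.exp (-‖x‖ ^ 2 / (4 * τ)) := by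
  have hI := GaussianFourier.integrable_cexp_neg_mul_sq_norm_add (V := EuclideanSpace ℝ (Fin d))
    (b := (τ : ℂ)) (by simpa using hτ) Complex.I x
  have h := GaussianFourier.integral_cexp_neg_mul_sq_norm_add (V := EuclideanSpace ℝ (Fin d))
    (b := (τ : ℂ)) (by simpa using hτ) Complex.I x
  have h2 := integral_re hI
  rw [h] at h2
  have e1 : ∀ k : EuclideanSpace ℝ (Fin d),
      RCLike.re (Complex.exp (-(τ:ℂ) * (‖k‖:ℂ) ^ 2 + Complex.I * ((⟪x, k⟫ : ℝ) : ℂ)))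
      = Real.exp (-τ * ‖k‖ ^ 2) * Real.cos ⟪k, x⟫ := by
    intro k
    simp only [RCLike.re_to_complex, Complex.exp_re]
    congr 2
    · simp [← Complex.ofReal_pow]
    · simp [← Complex.ofReal_pow, real_inner_comm]
  simp only [e1] at h2
  rw [h2]
  have e2 : ((Real.pi:ℂ) / (τ:ℂ)) ^ ((Module.finrank ℝ (EuclideanSpace ℝ (Fin d)) : ℂ) / 2)
      * Complex.exp (Complex.I ^ 2 * (‖x‖:ℂ) ^ 2 / (4 * (τ:ℂ)))
      = (((Real.pi / τ) ^ ((d : ℝ) / 2) * Real.exp (-‖x‖ ^ 2 / (4 * τ)) : ℝ) : ℂ) := by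
    rw [Complex.ofReal_mul, Complex.ofReal_cpow (by positivity)]
    simp
  rw [e2]; exact Complex.ofReal_re _

/-- squared modulus of the trigonometric polynomial -/
noncomputable def trigSq {d : ℕ} {ι : Type*} (s : Finset ι) (c : ι → ℝ)
    (x : ι → EuclideanSpace ℝ (Fin d)) (k : EuclideanSpace ℝ (Fin d)) : ℝ :=
  (∑ m ∈ s, c m * Real.cos ⟪k, x m⟫) ^ 2 + (∑ m ∈ s, c m * Real.sin ⟪k, x m⟫) ^ 2

lemma trigSq_nonneg {d : ℕ} {ι : Type*} (s : Finset ι) (c : ι → ℝ)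
    (x : ι → EuclideanSpace ℝ (Fin d)) (k : EuclideanSpace ℝ (Fin d)) : 0 ≤ trigSq s c x k := by
  unfold trigSq; positivity

lemma trigSq_eq {d : ℕ} {ι : Type*} (s : Finset ι) (c : ι → ℝ)
    (x : ι → EuclideanSpace ℝ (Fin d)) (k : EuclideanSpace ℝ (Fin d)) :
    trigSq s c x k = ∑ m ∈ s, ∑ l ∈ s, c m * c l * Real.cos ⟪k, x m - x l⟫ := by
  unfold trigSq
  rw [sq, sq, Finset.sum_mul_sum, Finset.sum_mul_sum, ← Finset.sum_add_distrib]
  refine Finset.sum_congr rfl fun m _ => ?_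
  rw [← Finset.sum_add_distrib]
  refine Finset.sum_congr rfl fun l _ => ?_
  rw [inner_sub_right, Real.cos_sub]; ring

lemma trigSq_continuous {d : ℕ} {ι : Type*} (s : Finset ι) (c : ι → ℝ)
    (x : ι → EuclideanSpace ℝ (Fin d)) : Continuous (trigSq s c x) := by
  unfold trigSq; fun_prop

lemma gauss_trigSq {d : ℕ} {ι : Type*} (s : Finset ι) (c : ι → ℝ)
    (x : ι → EuclideanSpace ℝ (Fin d)) {τ : ℝ} (hτ : 0 < τ) :
    ∫⁻ k : EuclideanSpace ℝ (Fin d), ENNReal.ofReal (Real.exp (-τ * ‖k‖ ^ 2) * trigSq s c x k)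
      = ENNReal.ofReal ((Real.pi / τ) ^ ((d : ℝ) / 2) *
        ∑ m ∈ s, ∑ l ∈ s, c m * c l * Real.exp (-‖x m - x l‖ ^ 2 / (4 * τ))) := by
  have e : ∀ k : EuclideanSpace ℝ (Fin d), Real.exp (-τ * ‖k‖ ^ 2) * trigSq s c x k =
      ∑ m ∈ s, ∑ l ∈ s, c m * c l * (Real.exp (-τ * ‖k‖ ^ 2) * Real.cos ⟪k, x m - x l⟫) := by
    intro k
    rw [trigSq_eq, Finset.mul_sum]
    refine Finset.sum_congr rfl fun m _ => ?_
    rw [Finset.mul_sum]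
    refine Finset.sum_congr rfl fun l _ => ?_
    ring
  have hint : Integrable (fun k : EuclideanSpace ℝ (Fin d) =>
      Real.exp (-τ * ‖k‖ ^ 2) * trigSq s c x k) := by
    simp only [e]
    exact integrable_finsetSum _ fun m _ => integrable_finsetSum _ fun l _ =>
      (gauss_cos_integrable hτ _).const_mul _
  rw [← ofReal_integral_eq_lintegral_ofReal hint
    (Eventually.of_forall fun k => mul_nonneg (Real.exp_pos _).le (trigSq_nonneg ..))]
  congr 1
  simp only [e]
  rw [integral_finsetSum _ fun m _ => integrable_finsetSum _ fun l _ =>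
      (gauss_cos_integrable hτ _).const_mul _, Finset.mul_sum]
  refine Finset.sum_congr rfl fun m _ => ?_
  rw [integral_finsetSum _ fun l _ => (gauss_cos_integrable hτ _).const_mul _, Finset.mul_sum]
  refine Finset.sum_congr rfl fun l _ => ?_
  rw [integral_const_mul, gauss_cos_integral hτ]; ring

lemma mix_lower {β r : ℝ} (hβ : 0 < β) (hr : 0 < r) :
    ENNReal.ofReal (r ^ (-β) * Real.exp (-r ^ 2)) =
      ENNReal.ofReal (1 / Real.Gamma (β / 2)) *
      ∫⁻ u in Ioi (0:ℝ), ENNReal.ofReal (u ^ (β / 2 - 1) * Real.exp (-(1 + u) * r ^ 2)) := by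
  have hG : 0 < Real.Gamma (β / 2) := Real.Gamma_pos_of_pos (by positivity)
  have h := Real.integral_rpow_mul_exp_neg_mul_Ioi (a := β / 2) (r := r ^ 2)
    (by positivity) (by positivity)
  have hint : IntegrableOn (fun u : ℝ => u ^ (β / 2 - 1) * Real.exp (-(r ^ 2 * u))) (Ioi 0) := by
    by_contra hc
    rw [integral_undef hc] at h
    have : 0 < (1 / r ^ 2) ^ (β / 2) * Real.Gamma (β / 2) := by positivity
    linarith
  have h2 : ∫⁻ u in Ioi (0:ℝ), ENNReal.ofReal (u ^ (β / 2 - 1) * Real.exp (-(1 + u) * r ^ 2))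
      = ENNReal.ofReal (Real.exp (-r ^ 2)) * ∫⁻ u in Ioi (0:ℝ),
        ENNReal.ofReal (u ^ (β / 2 - 1) * Real.exp (-(r ^ 2 * u))) := by
    rw [← lintegral_const_mul' _ _ ENNReal.ofReal_ne_top]
    refine lintegral_congr fun u => ?_
    rw [← ENNReal.ofReal_mul (Real.exp_pos _).le]
    congr 1
    rw [mul_left_comm, ← Real.exp_add]; congr 2; ring
  rw [h2, ← ofReal_integral_eq_lintegral_ofReal hint, h, ← ENNReal.ofReal_mul (Real.exp_pos _).le,
    ← ENNReal.ofReal_mul (by positivity)]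
  · congr 1
    rw [one_div (r ^ 2), Real.inv_rpow (by positivity), ← Real.rpow_natCast r 2, ← Real.rpow_mul hr.le,
      Real.rpow_neg hr.le]
    have : ((2:ℕ):ℝ) * (β / 2) = β := by push_cast; ring
    rw [this]; field_simp
  · filter_upwards [ae_restrict_mem measurableSet_Ioi] with u hu
    have : 0 < u := hu
    positivity

lemma mix_trigSq {d : ℕ} (hd : 0 < d) {ι : Type*} (s : Finset ι) (c : ι → ℝ)
    (x : ι → EuclideanSpace ℝ (Fin d)) {β : ℝ} (hβ : 0 < β) :
    ∫⁻ k : EuclideanSpace ℝ (Fin d),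
      ENNReal.ofReal (‖k‖ ^ (-β) * Real.exp (-‖k‖ ^ 2) * trigSq s c x k)
      = ENNReal.ofReal (1 / Real.Gamma (β / 2)) * ∫⁻ u in Ioi (0:ℝ),
        ENNReal.ofReal (u ^ (β / 2 - 1) * ((Real.pi / (1 + u)) ^ ((d : ℝ) / 2) *
        ∑ m ∈ s, ∑ l ∈ s, c m * c l * Real.exp (-‖x m - x l‖ ^ 2 / (4 * (1 + u))))) := by
  have : Nonempty (Fin d) := ⟨⟨0, hd⟩⟩
  have h1 : ∫⁻ k : EuclideanSpace ℝ (Fin d),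
      ENNReal.ofReal (‖k‖ ^ (-β) * Real.exp (-‖k‖ ^ 2) * trigSq s c x k) =
      ∫⁻ k : EuclideanSpace ℝ (Fin d), ENNReal.ofReal (1 / Real.Gamma (β / 2)) *
        ∫⁻ u in Ioi (0:ℝ), ENNReal.ofReal (u ^ (β / 2 - 1)) *
          ENNReal.ofReal (Real.exp (-(1 + u) * ‖k‖ ^ 2) * trigSq s c x k) := by
    refine lintegral_congr_ae ?_
    have hne : ∀ᵐ k : EuclideanSpace ℝ (Fin d), k ≠ 0 := by
      simp [ae_iff]
    filter_upwards [hne] with k hk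
    have hk' : 0 < ‖k‖ := norm_pos_iff.mpr hk
    rw [ENNReal.ofReal_mul (by positivity), mix_lower hβ hk', mul_assoc]
    congr 1
    rw [← lintegral_mul_const' _ _ ENNReal.ofReal_ne_top]
    refine setLIntegral_congr_fun measurableSet_Ioi fun u hu => ?_
    have hu' : 0 < u := hu
    rw [← ENNReal.ofReal_mul (by positivity), ← ENNReal.ofReal_mul (by positivity)]
    congr 1; ring
  rw [h1, lintegral_const_mul' _ _ ENNReal.ofReal_ne_top, lintegral_lintegral_swap]
  · congr 1
    refine setLIntegral_congr_fun measurableSet_Ioi fun u hu => ?_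
    have hu' : 0 < u := hu
    rw [lintegral_const_mul' _ _ ENNReal.ofReal_ne_top, gauss_trigSq s c x (by linarith),
      ← ENNReal.ofReal_mul (by positivity)]
  · have := (trigSq_continuous s c x).measurable
    apply Measurable.aemeasurable
    unfold Function.uncurry
    fun_prop


lemma sum_range_gauss {b ℓ : ℝ} (hb : 0 < b) (hℓ : 0 < ℓ) (n : ℕ) :
    ∑ j ∈ Finset.range n, ℓ * Real.exp (-b * ((j:ℝ) * ℓ) ^ 2) ≤ ℓ + Real.sqrt (Real.pi / b) / 2 := by
  rcases n with _ | n
  · simp; positivity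
  rw [Finset.sum_range_succ']
  have hanti : AntitoneOn (fun x : ℝ => Real.exp (-(b * ℓ ^ 2) * x ^ 2)) (Icc 0 (0 + (n:ℝ))) := by
    intro x hx y hy hxy
    have := hx.1
    apply Real.exp_le_exp.mpr
    have : x ^ 2 ≤ y ^ 2 := by gcongr
    have : 0 < b * ℓ ^ 2 := by positivity
    nlinarith
  have h1 := hanti.sum_le_integral
  have h2 : ∫ x in (0:ℝ)..(0 + (n:ℝ)), Real.exp (-(b * ℓ ^ 2) * x ^ 2)
      ≤ ∫ x in Ioi (0:ℝ), Real.exp (-(b * ℓ ^ 2) * x ^ 2) := by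
    rw [intervalIntegral.integral_of_le (by simp)]
    apply setIntegral_mono_set
    · exact (integrable_exp_neg_mul_sq (by positivity)).integrableOn
    · exact Eventually.of_forall fun x => (Real.exp_pos _).le
    · exact (Ioc_subset_Ioi_self).eventuallyLE
  rw [integral_gaussian_Ioi] at h2
  have h3 : Real.sqrt (Real.pi / (b * ℓ ^ 2)) = Real.sqrt (Real.pi / b) / ℓ := by
    rw [← div_div, Real.sqrt_div (by positivity), Real.sqrt_sq hℓ.le]
  rw [h3] at h2
  have h4 : ∑ j ∈ Finset.range n, ℓ * Real.exp (-b * (((j+1:ℕ):ℝ) * ℓ) ^ 2)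
      = ℓ * ∑ j ∈ Finset.range n, Real.exp (-(b * ℓ ^ 2) * (0 + ((j + 1 : ℕ) : ℝ)) ^ 2) := by
    rw [Finset.mul_sum]
    refine Finset.sum_congr rfl fun j _ => ?_
    congr 2; push_cast; ring
  rw [h4]
  have h5 := mul_le_mul_of_nonneg_left (h1.trans h2) hℓ.le
  have h6 : ℓ * (Real.sqrt (Real.pi / b) / ℓ / 2) = Real.sqrt (Real.pi / b) / 2 := by
    field_simp
  rw [h6] at h5
  simp only [Nat.cast_zero, zero_mul]
  norm_num
  norm_num at h5
  linarith

lemma sum_gauss_two_sided {b ℓ : ℝ} (hb : 0 < b) (hℓ : 0 < ℓ) (n m : ℕ) :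
    ∑ j ∈ Finset.range n, ℓ * Real.exp (-b * (((m:ℝ) - (j:ℝ)) * ℓ) ^ 2)
      ≤ 2 * (ℓ + Real.sqrt (Real.pi / b) / 2) := by
  have key : ∀ j ∈ Finset.range n, ℓ * Real.exp (-b * (((m:ℝ) - (j:ℝ)) * ℓ) ^ 2) ≤
      (if j ≤ m then ℓ * Real.exp (-b * (((m - j : ℕ):ℝ) * ℓ) ^ 2) else 0) +
      (if m ≤ j then ℓ * Real.exp (-b * (((j - m : ℕ):ℝ) * ℓ) ^ 2) else 0) := by
    intro j _
    rcases le_total j m with h | h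
    · rw [if_pos h, Nat.cast_sub h]
      have : 0 ≤ (if m ≤ j then ℓ * Real.exp (-b * (((j - m : ℕ):ℝ) * ℓ) ^ 2) else 0) := by
        split_ifs <;> positivity
      linarith
    · rw [if_pos h, Nat.cast_sub h]
      have : 0 ≤ (if j ≤ m then ℓ * Real.exp (-b * (((m - j : ℕ):ℝ) * ℓ) ^ 2) else 0) := by
        split_ifs <;> positivity
      have e : (((m:ℝ) - (j:ℝ)) * ℓ) ^ 2 = (((j:ℝ) - (m:ℝ)) * ℓ) ^ 2 := by ring
      rw [e]; linarith
  refine (Finset.sum_le_sum key).trans ?_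
  rw [Finset.sum_add_distrib, ← Finset.sum_filter, ← Finset.sum_filter, two_mul]
  have gen : ∀ (S : Finset ℕ) (g : ℕ → ℕ), Set.InjOn g S →
      ∑ j ∈ S, ℓ * Real.exp (-b * (((g j : ℕ):ℝ) * ℓ) ^ 2) ≤ ℓ + Real.sqrt (Real.pi / b) / 2 := by
    intro S g hg
    have e := Finset.sum_image (f := fun i : ℕ => ℓ * Real.exp (-b * (((i : ℕ):ℝ) * ℓ) ^ 2)) hg
    rw [← e]
    obtain ⟨N, hN⟩ := (S.image g).exists_nat_subset_range
    refine (Finset.sum_le_sum_of_subset_of_nonneg hN fun i _ _ => by positivity).trans ?_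
    exact sum_range_gauss hb hℓ N
  apply add_le_add
  · apply gen _ (fun j => m - j)
    intro x hx y hy hxy
    simp at hx hy hxy; omega
  · apply gen _ (fun j => j - m)
    intro x hx y hy hxy
    simp at hx hy hxy; omega

lemma double_sum_bound {d : ℕ} {v : EuclideanSpace ℝ (Fin d)} (hv : ‖v‖ = 1) {ℓ s0 η τ : ℝ}
    (hℓ : 0 < ℓ) (hℓ1 : ℓ ≤ 1) (hη : 0 ≤ η) (hτ : 1 ≤ τ) {n : ℕ}
    (z : Fin n → EuclideanSpace ℝ (Fin d)) (hz : ∀ m l, ‖z m - z l‖ ≤ 2)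
    (c : Fin n → ℝ) (hc : ∀ m, |c m| ≤ ℓ * η) :
    ∑ m : Fin n, ∑ l : Fin n, c m * c l * Real.exp (-‖((s0 + m * ℓ) • v + z m) -
      ((s0 + l * ℓ) • v + z l)‖ ^ 2 / (4 * τ)) ≤ 24 * Real.sqrt τ * (η ^ 2 * (n * ℓ)) := by
  have hτ0 : 0 < τ := by linarith
  have h1 : ∀ m l : Fin n, c m * c l * Real.exp (-‖((s0 + m * ℓ) • v + z m) -
      ((s0 + l * ℓ) • v + z l)‖ ^ 2 / (4 * τ)) ≤
      (ℓ * η ^ 2 * Real.exp 1) * (ℓ * Real.exp (-(1 / (8 * τ)) * (((m:ℝ) - (l:ℝ)) * ℓ) ^ 2)) := by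
    intro m l
    have e1 : ((s0 + m * ℓ) • v + z m) - ((s0 + l * ℓ) • v + z l)
        = (((m:ℝ) - (l:ℝ)) * ℓ) • v + (z m - z l) := by
      module
    rw [e1]
    set A := ((m:ℝ) - (l:ℝ)) * ℓ
    have h2 : |A| ≤ ‖A • v + (z m - z l)‖ + 2 := by
      have : ‖A • v‖ ≤ ‖A • v + (z m - z l)‖ + ‖z m - z l‖ := by
        have := norm_sub_le (A • v + (z m - z l)) (z m - z l)
        simpa using this
      rw [norm_smul, hv, mul_one, Real.norm_eq_abs] at this
      linarith [hz m l]
    set B := ‖A • v + (z m - z l)‖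
    have hB : 0 ≤ B := norm_nonneg _
    have h3 : A ^ 2 ≤ 2 * B ^ 2 + 8 := by
      rw [← sq_abs]
      have : |A| ^ 2 ≤ (B + 2) ^ 2 := by gcongr
      nlinarith [sq_nonneg (B - 2)]
    have h4 : -B ^ 2 / (4 * τ) ≤ 1 + -(1 / (8 * τ)) * A ^ 2 := by
      rw [div_le_iff₀ (by positivity)]
      have : (1 + -(1 / (8 * τ)) * A ^ 2) * (4 * τ) = 4 * τ - A ^ 2 / 2 := by
        field_simp; ring
      rw [this]; nlinarith
    have h5 : Real.exp (-B ^ 2 / (4 * τ)) ≤ Real.exp 1 * Real.exp (-(1 / (8 * τ)) * A ^ 2) := by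
      rw [← Real.exp_add]; exact Real.exp_le_exp.mpr h4
    have h6 : c m * c l ≤ (ℓ * η) * (ℓ * η) := by
      refine (le_abs_self _).trans ?_
      rw [abs_mul]
      exact mul_le_mul (hc m) (hc l) (abs_nonneg _) (by positivity)
    calc c m * c l * Real.exp (-B ^ 2 / (4 * τ)) ≤
        (ℓ * η) * (ℓ * η) * (Real.exp 1 * Real.exp (-(1 / (8 * τ)) * A ^ 2)) :=
          mul_le_mul h6 h5 (Real.exp_pos _).le (by positivity)
      _ = _ := by ring
  have hs : 1 ≤ Real.sqrt τ := Real.one_le_sqrt.mpr hτ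
  have hpi : Real.sqrt (Real.pi / (1 / (8 * τ))) ≤ 5.04 * Real.sqrt τ := by
    rw [Real.sqrt_le_left (by positivity), mul_pow, Real.sq_sqrt hτ0.le]
    field_simp
    nlinarith [Real.pi_lt_d2]
  have h7 : ∀ m : Fin n, ∑ l : Fin n, c m * c l * Real.exp (-‖((s0 + m * ℓ) • v + z m) -
      ((s0 + l * ℓ) • v + z l)‖ ^ 2 / (4 * τ)) ≤ 24 * Real.sqrt τ * (η ^ 2 * ℓ) := by
    intro m
    refine (Finset.sum_le_sum fun l _ => h1 m l).trans ?_
    rw [← Finset.mul_sum]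
    have h8 := sum_gauss_two_sided (b := 1 / (8 * τ)) (by positivity) hℓ n m
    rw [← Fin.sum_univ_eq_sum_range
      (fun j : ℕ => ℓ * Real.exp (-(1 / (8 * τ)) * (((m:ℝ) - (j:ℝ)) * ℓ) ^ 2))] at h8
    have h9 : 2 * (ℓ + Real.sqrt (Real.pi / (1 / (8 * τ))) / 2) ≤ 8 * Real.sqrt τ := by linarith
    have he := Real.exp_one_lt_d9
    calc _ ≤ (ℓ * η ^ 2 * Real.exp 1) * (8 * Real.sqrt τ) :=
          mul_le_mul_of_nonneg_left (h8.trans h9) (by positivity)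
      _ ≤ (ℓ * η ^ 2 * 3) * (8 * Real.sqrt τ) := by gcongr; linarith
      _ = _ := by ring
  refine (Finset.sum_le_sum fun m _ => h7 m).trans ?_
  simp
  apply le_of_eq; ring

lemma mix_finite {d : ℕ} {β : ℝ} (hβ : 0 < β) (hβd : β < d - 1) :
    ∫⁻ u in Ioi (0:ℝ), ENNReal.ofReal (u ^ (β / 2 - 1) * ((Real.pi / (1 + u)) ^ ((d : ℝ) / 2) *
      (24 * Real.sqrt (1 + u)))) < ⊤ := by
  have hd : (1:ℝ) < d := by linarith
  set C := 24 * Real.pi ^ ((d:ℝ) / 2)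
  have hC : 0 < C := by positivity
  have e : ∀ u : ℝ, 0 < u → u ^ (β / 2 - 1) * ((Real.pi / (1 + u)) ^ ((d : ℝ) / 2) *
      (24 * Real.sqrt (1 + u))) = C * (u ^ (β / 2 - 1) * (1 + u) ^ (-((d - 1 : ℝ) / 2))) := by
    intro u hu
    rw [Real.div_rpow Real.pi_pos.le (by positivity), Real.sqrt_eq_rpow]
    have : (1 + u) ^ (-((d - 1 : ℝ) / 2)) = (1 + u) ^ (1 / 2 : ℝ) / (1 + u) ^ ((d:ℝ) / 2) := by
      rw [← Real.rpow_sub (by positivity)]; congr 1; ring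
    rw [this]; simp only [C]; ring
  rw [← Ioc_union_Ioi_eq_Ioi (zero_le_one' ℝ)]
  refine (lintegral_union_le _ _ _).trans_lt (ENNReal.add_lt_top.mpr ⟨?_, ?_⟩)
  · have hi : IntegrableOn (fun u : ℝ => C * u ^ (β / 2 - 1)) (Ioc 0 1) := by
      apply Integrable.const_mul
      have := (intervalIntegral.intervalIntegrable_rpow' (a := 0) (b := 1) (r := β / 2 - 1)
        (by linarith))
      rwa [intervalIntegrable_iff_integrableOn_Ioc_of_le zero_le_one] at this
    refine lt_of_le_of_lt ?_ hi.lintegral_lt_top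
    refine setLIntegral_mono' measurableSet_Ioc fun u hu => ENNReal.ofReal_le_ofReal ?_
    rw [e u hu.1]
    have h1 : (1 + u) ^ (-((d - 1 : ℝ) / 2)) ≤ 1 :=
      Real.rpow_le_one_of_one_le_of_nonpos (by linarith [hu.1]) (by linarith)
    have : 0 ≤ u ^ (β / 2 - 1) := Real.rpow_nonneg hu.1.le _
    gcongr
    nlinarith
  · have hi : IntegrableOn (fun u : ℝ => C * u ^ (β / 2 - 1 + (-((d - 1 : ℝ) / 2)))) (Ioi 1) := by
      apply Integrable.const_mul
      exact integrableOn_Ioi_rpow_of_lt (by linarith) zero_lt_one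
    refine lt_of_le_of_lt ?_ hi.lintegral_lt_top
    refine setLIntegral_mono' measurableSet_Ioi fun u hu => ENNReal.ofReal_le_ofReal ?_
    have hu' : 1 < u := hu
    have hu0 : 0 < u := by linarith
    rw [e u hu0, Real.rpow_add hu0]
    have h1 : (1 + u) ^ (-((d - 1 : ℝ) / 2)) ≤ u ^ (-((d - 1 : ℝ) / 2)) :=
      Real.rpow_le_rpow_of_nonpos hu0 (by linarith) (by linarith)
    gcongr

lemma trig_est {d : ℕ} {β : ℝ} (hβ : 0 < β) (hβd : β < d - 1) :
    ∃ C : ℝ, 0 < C ∧ ∀ (v : EuclideanSpace ℝ (Fin d)), ‖v‖ = 1 → ∀ (ℓ s0 η : ℝ), 0 < ℓ → ℓ ≤ 1 →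
    0 ≤ η → ∀ (n : ℕ) (z : Fin n → EuclideanSpace ℝ (Fin d)), (∀ m l, ‖z m - z l‖ ≤ 2) →
    ∀ (c : Fin n → ℝ), (∀ m, |c m| ≤ ℓ * η) →
    ∫⁻ k : EuclideanSpace ℝ (Fin d), ENNReal.ofReal (‖k‖ ^ (-β) * Real.exp (-‖k‖ ^ 2) *
      trigSq Finset.univ c (fun m : Fin n => (s0 + m * ℓ) • v + z m) k)
      ≤ ENNReal.ofReal (C * (η ^ 2 * (n * ℓ))) := by
  have hfin := mix_finite hβ hβd
  set I0 := ∫⁻ u in Ioi (0:ℝ), ENNReal.ofReal (u ^ (β / 2 - 1) *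
    ((Real.pi / (1 + u)) ^ ((d : ℝ) / 2) * (24 * Real.sqrt (1 + u))))
  have hd : 0 < d := by
    rcases Nat.eq_zero_or_pos d with h | h
    · subst h; norm_num at hβd; linarith
    · exact h
  have hG : 0 < Real.Gamma (β / 2) := Real.Gamma_pos_of_pos (by positivity)
  refine ⟨1 / Real.Gamma (β / 2) * (I0.toReal + 1), by positivity, ?_⟩
  intro v hv ℓ s0 η hℓ hℓ1 hη n z hz c hc
  rw [mix_trigSq hd _ _ _ hβ]
  have h1 : ∫⁻ u in Ioi (0:ℝ), ENNReal.ofReal (u ^ (β / 2 - 1) *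
      ((Real.pi / (1 + u)) ^ ((d : ℝ) / 2) * ∑ m : Fin n, ∑ l : Fin n, c m * c l *
        Real.exp (-‖((s0 + m * ℓ) • v + z m) - ((s0 + l * ℓ) • v + z l)‖ ^ 2 / (4 * (1 + u)))))
      ≤ I0 * ENNReal.ofReal (η ^ 2 * (n * ℓ)) := by
    rw [← lintegral_mul_const' _ _ ENNReal.ofReal_ne_top]
    refine setLIntegral_mono' measurableSet_Ioi fun u hu => ?_
    have hu' : 0 < u := hu
    rw [← ENNReal.ofReal_mul (by positivity)]
    apply ENNReal.ofReal_le_ofReal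
    have := double_sum_bound (s0 := s0) hv hℓ hℓ1 hη (by linarith : (1:ℝ) ≤ 1 + u) z hz c hc
    calc _ ≤ u ^ (β / 2 - 1) * ((Real.pi / (1 + u)) ^ ((d : ℝ) / 2) *
          (24 * Real.sqrt (1 + u) * (η ^ 2 * (n * ℓ)))) := by gcongr
      _ = _ := by ring
  refine (mul_le_mul_right h1 _).trans ?_
  have h2 : I0 ≤ ENNReal.ofReal (I0.toReal + 1) := by
    conv_lhs => rw [← ENNReal.ofReal_toReal hfin.ne]
    exact ENNReal.ofReal_le_ofReal (by linarith)
  rw [mul_assoc (1 / Real.Gamma (β / 2)),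
    ENNReal.ofReal_mul (by positivity : (0:ℝ) ≤ 1 / Real.Gamma (β / 2)),
    ENNReal.ofReal_mul (by positivity : (0:ℝ) ≤ I0.toReal + 1)]
  exact mul_le_mul_right (mul_le_mul_left h2 _) _


lemma sq_sub_le_integral (g g' : ℝ → ℝ) (hg : ∀ θ, HasDerivAt g (g' θ) θ) (hc : Continuous g') :
    (g 1 - g 0) ^ 2 ≤ ∫ θ in (0:ℝ)..1, (g' θ) ^ 2 := by
  have h1 : ∫ θ in (0:ℝ)..1, g' θ = g 1 - g 0 :=
    intervalIntegral.integral_eq_sub_of_hasDerivAt (fun θ _ => hg θ) (hc.intervalIntegrable _ _)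
  set c := g 1 - g 0
  have h2 : 0 ≤ ∫ θ in (0:ℝ)..1, (g' θ - c) ^ 2 :=
    intervalIntegral.integral_nonneg zero_le_one fun θ _ => sq_nonneg _
  have h3 : ∫ θ in (0:ℝ)..1, (g' θ - c) ^ 2 = (∫ θ in (0:ℝ)..1, (g' θ) ^ 2) - 2 * c * c + c ^ 2 := by
    have e : ∀ θ, (g' θ - c) ^ 2 = (g' θ) ^ 2 - 2 * c * g' θ + c ^ 2 := fun θ => by ring
    simp only [e]
    rw [intervalIntegral.integral_add, intervalIntegral.integral_sub,
      intervalIntegral.integral_const_mul, h1]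
    · simp
    all_goals exact Continuous.intervalIntegrable (by fun_prop) _ _
  rw [h3] at h2; nlinarith

lemma inner_cs_sum {d n : ℕ} (k : EuclideanSpace ℝ (Fin d)) (ξ : Fin n → EuclideanSpace ℝ (Fin d))
    (ℓ : ℝ) (w : Fin n → ℝ) :
    (∑ m, ℓ * (⟪k, ξ m⟫ * w m)) ^ 2 ≤ ‖k‖ ^ 2 * ∑ i : Fin d, (∑ m, (ℓ * ξ m i) * w m) ^ 2 := by
  have e : ∑ m, ℓ * (⟪k, ξ m⟫ * w m) = ∑ i : Fin d, k i * (∑ m, (ℓ * ξ m i) * w m) := by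
    simp only [Finset.mul_sum]
    rw [Finset.sum_comm]
    refine Finset.sum_congr rfl fun m _ => ?_
    rw [PiLp.inner_apply, Finset.sum_mul, Finset.mul_sum]
    refine Finset.sum_congr rfl fun i _ => ?_
    simp; ring
  rw [e, EuclideanSpace.norm_sq_eq]
  simp only [Real.norm_eq_abs, sq_abs]
  exact Finset.sum_mul_sq_le_sq_mul_sq _ _ _

lemma trig_diff_pt {d n : ℕ} (x' ξ : Fin n → EuclideanSpace ℝ (Fin d)) (ℓ : ℝ)
    (k : EuclideanSpace ℝ (Fin d)) :
    (∑ m, ℓ * Real.cos ⟪k, x' m + ξ m⟫ - ∑ m, ℓ * Real.cos ⟪k, x' m⟫) ^ 2 +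
    (∑ m, ℓ * Real.sin ⟪k, x' m + ξ m⟫ - ∑ m, ℓ * Real.sin ⟪k, x' m⟫) ^ 2 ≤
    ∫ θ in (0:ℝ)..1, ‖k‖ ^ 2 * ∑ i : Fin d,
      trigSq Finset.univ (fun m => ℓ * ξ m i) (fun m => x' m + θ • ξ m) k := by
  have hlin : ∀ (m : Fin n) (θ : ℝ), HasDerivAt (fun θ : ℝ => ⟪k, x' m + θ • ξ m⟫) ⟪k, ξ m⟫ θ := by
    intro m θ
    have e : (fun θ : ℝ => ⟪k, x' m + θ • ξ m⟫) = fun θ : ℝ => ⟪k, x' m⟫ + θ * ⟪k, ξ m⟫ := by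
      funext θ; rw [inner_add_right, inner_smul_right]
    rw [e]
    simpa using ((hasDerivAt_id θ).mul_const ⟪k, ξ m⟫).const_add ⟪k, x' m⟫
  have hc := sq_sub_le_integral (fun θ => ∑ m, ℓ * Real.cos ⟪k, x' m + θ • ξ m⟫)
    (fun θ => ∑ m, ℓ * (-Real.sin ⟪k, x' m + θ • ξ m⟫ * ⟪k, ξ m⟫))
    (fun θ => HasDerivAt.fun_sum fun m _ => ((hlin m θ).cos).const_mul ℓ) (by fun_prop)
  have hs := sq_sub_le_integral (fun θ => ∑ m, ℓ * Real.sin ⟪k, x' m + θ • ξ m⟫)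
    (fun θ => ∑ m, ℓ * (Real.cos ⟪k, x' m + θ • ξ m⟫ * ⟪k, ξ m⟫))
    (fun θ => HasDerivAt.fun_sum fun m _ => ((hlin m θ).sin).const_mul ℓ) (by fun_prop)
  simp only [one_smul, zero_smul, add_zero] at hc hs
  refine (add_le_add hc hs).trans ?_
  rw [← intervalIntegral.integral_add]
  · apply intervalIntegral.integral_mono_on zero_le_one
    · exact Continuous.intervalIntegrable (by fun_prop) _ _
    · refine Continuous.intervalIntegrable ?_ _ _
      unfold trigSq; fun_prop
    · intro θ _
      have h1 := inner_cs_sum k ξ ℓ (fun m => Real.sin ⟪k, x' m + θ • ξ m⟫)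
      have h2 := inner_cs_sum k ξ ℓ (fun m => Real.cos ⟪k, x' m + θ • ξ m⟫)
      unfold trigSq
      rw [Finset.sum_add_distrib, mul_add, add_comm]
      refine add_le_add ?_ ?_
      · refine le_trans (le_of_eq ?_) h2
        congr 1
        exact Finset.sum_congr rfl fun m _ => by ring
      · refine le_trans (le_of_eq ?_) h1
        rw [← neg_sq, ← Finset.sum_neg_distrib]
        congr 1
        exact Finset.sum_congr rfl fun m _ => by ring
  all_goals exact Continuous.intervalIntegrable (by fun_prop) _ _

lemma trig_diff_est {d : ℕ} {β K : ℝ} (hβ : 0 < β) (hβd : β < d - 1) (hK : 0 < K) :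
    ∃ C : ℝ, 0 < C ∧ ∀ (v : EuclideanSpace ℝ (Fin d)), ‖v‖ = 1 → ∀ (ℓ s0 η : ℝ), 0 < ℓ → ℓ ≤ 1 →
    0 ≤ η → ∀ (n : ℕ) (z z' : Fin n → EuclideanSpace ℝ (Fin d)), (∀ m l, ‖z m - z l‖ ≤ 2) →
    (∀ m l, ‖z' m - z' l‖ ≤ 2) → (∀ m, ‖z m - z' m‖ ≤ η) →
    ∫⁻ k in Metric.closedBall (0 : EuclideanSpace ℝ (Fin d)) K,
      ENNReal.ofReal (‖k‖ ^ (-β) * Real.exp (-‖k‖ ^ 2) *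
      trigSq Finset.univ (Sum.elim (fun _ : Fin n => ℓ) (fun _ : Fin n => -ℓ))
        (Sum.elim (fun m : Fin n => (s0 + m * ℓ) • v + z m)
          (fun m : Fin n => (s0 + m * ℓ) • v + z' m)) k)
      ≤ ENNReal.ofReal (C * (η ^ 2 * (n * ℓ))) := by
  obtain ⟨C, hC, H⟩ := trig_est hβ hβd
  have hd : 0 < d := by
    rcases Nat.eq_zero_or_pos d with h | h
    · subst h; norm_num at hβd; linarith
    · exact h
  refine ⟨K ^ 2 * (d * C), by positivity, ?_⟩
  intro v hv ℓ s0 η hℓ hℓ1 hη n z z' hz hz' hzz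
  set x' : Fin n → EuclideanSpace ℝ (Fin d) := fun m => (s0 + m * ℓ) • v + z' m with hx'
  set ξ : Fin n → EuclideanSpace ℝ (Fin d) := fun m => z m - z' m with hξ
  have hpt : ∀ k ∈ Metric.closedBall (0 : EuclideanSpace ℝ (Fin d)) K,
      ENNReal.ofReal (‖k‖ ^ (-β) * Real.exp (-‖k‖ ^ 2) *
      trigSq Finset.univ (Sum.elim (fun _ : Fin n => ℓ) (fun _ : Fin n => -ℓ))
        (Sum.elim (fun m : Fin n => (s0 + m * ℓ) • v + z m)
          (fun m : Fin n => (s0 + m * ℓ) • v + z' m)) k) ≤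
      ENNReal.ofReal (K ^ 2) * ∑ i : Fin d, ∫⁻ θ in Ioc (0:ℝ) 1,
        ENNReal.ofReal (‖k‖ ^ (-β) * Real.exp (-‖k‖ ^ 2) *
          trigSq Finset.univ (fun m => ℓ * ξ m i) (fun m => x' m + θ • ξ m) k) := by
    intro k hk
    have hkK : ‖k‖ ≤ K := by simpa using hk
    have e1 : trigSq Finset.univ (Sum.elim (fun _ : Fin n => ℓ) (fun _ : Fin n => -ℓ))
        (Sum.elim (fun m : Fin n => (s0 + m * ℓ) • v + z m)
          (fun m : Fin n => (s0 + m * ℓ) • v + z' m)) k =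
        (∑ m, ℓ * Real.cos ⟪k, x' m + ξ m⟫ - ∑ m, ℓ * Real.cos ⟪k, x' m⟫) ^ 2 +
        (∑ m, ℓ * Real.sin ⟪k, x' m + ξ m⟫ - ∑ m, ℓ * Real.sin ⟪k, x' m⟫) ^ 2 := by
      unfold trigSq
      simp only [Fintype.sum_sum_type, Sum.elim_inl, Sum.elim_inr, neg_mul,
        Finset.sum_neg_distrib, hx', hξ, ← sub_eq_add_neg]
      have : ∀ m : Fin n, (s0 + m * ℓ) • v + z' m + (z m - z' m) = (s0 + m * ℓ) • v + z m :=
        fun m => by abel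
      simp only [this]
    rw [e1]
    have h2 := trig_diff_pt x' ξ ℓ k
    have hcont : ∀ i : Fin d, Continuous fun θ : ℝ =>
        trigSq Finset.univ (fun m => ℓ * ξ m i) (fun m => x' m + θ • ξ m) k := by
      intro i; unfold trigSq; fun_prop
    have hw : 0 ≤ ‖k‖ ^ (-β) * Real.exp (-‖k‖ ^ 2) := by positivity
    rw [intervalIntegral.integral_const_mul, intervalIntegral.integral_finsetSum
      (fun i _ => (hcont i).intervalIntegrable _ _)] at h2
    have hnn : ∀ i : Fin d, 0 ≤ ∫ θ in (0:ℝ)..1,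
        trigSq Finset.univ (fun m => ℓ * ξ m i) (fun m => x' m + θ • ξ m) k := fun i =>
      intervalIntegral.integral_nonneg zero_le_one fun θ _ => trigSq_nonneg ..
    have h3 : (∑ m, ℓ * Real.cos ⟪k, x' m + ξ m⟫ - ∑ m, ℓ * Real.cos ⟪k, x' m⟫) ^ 2 +
        (∑ m, ℓ * Real.sin ⟪k, x' m + ξ m⟫ - ∑ m, ℓ * Real.sin ⟪k, x' m⟫) ^ 2 ≤
        K ^ 2 * ∑ i : Fin d, ∫ θ in (0:ℝ)..1,
        trigSq Finset.univ (fun m => ℓ * ξ m i) (fun m => x' m + θ • ξ m) k := by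
      refine h2.trans ?_
      have := Finset.sum_nonneg fun i (_ : i ∈ Finset.univ) => hnn i
      gcongr
    refine (ENNReal.ofReal_le_ofReal (mul_le_mul_of_nonneg_left h3 hw)).trans ?_
    rw [mul_left_comm, ENNReal.ofReal_mul (by positivity), Finset.mul_sum,
      ENNReal.ofReal_sum_of_nonneg (fun i _ => mul_nonneg hw (hnn i))]
    gcongr with i
    rw [← intervalIntegral.integral_const_mul, intervalIntegral.integral_of_le zero_le_one,
      ofReal_integral_eq_lintegral_ofReal]
    · have := (((hcont i).const_mul (‖k‖ ^ (-β) * Real.exp (-‖k‖ ^ 2))).intervalIntegrable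
        (μ := volume) 0 1)
      rwa [intervalIntegrable_iff_integrableOn_Ioc_of_le zero_le_one] at this
    · exact Eventually.of_forall fun θ => mul_nonneg hw (trigSq_nonneg ..)
  have hmeas : ∀ i : Fin d, Measurable (Function.uncurry
      fun (k : EuclideanSpace ℝ (Fin d)) (θ : ℝ) => ENNReal.ofReal (‖k‖ ^ (-β) *
      Real.exp (-‖k‖ ^ 2) *
          trigSq Finset.univ (fun m => ℓ * ξ m i) (fun m => x' m + θ • ξ m) k)) := by
    intro i
    have : Measurable fun p : EuclideanSpace ℝ (Fin d) × ℝ => trigSq Finset.univ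
        (fun m => ℓ * ξ m i) (fun m => x' m + p.2 • ξ m) p.1 := by
      apply Continuous.measurable
      unfold trigSq; fun_prop
    unfold Function.uncurry
    fun_prop
  refine (setLIntegral_mono' Metric.isClosed_closedBall.measurableSet hpt).trans ?_
  refine (setLIntegral_le_lintegral _ _).trans ?_
  rw [lintegral_const_mul' _ _ ENNReal.ofReal_ne_top, lintegral_finsetSum _ fun i _ =>
    (hmeas i).lintegral_prod_right]
  have hi : ∀ i : Fin d, ∫⁻ k : EuclideanSpace ℝ (Fin d), ∫⁻ θ in Ioc (0:ℝ) 1,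
        ENNReal.ofReal (‖k‖ ^ (-β) * Real.exp (-‖k‖ ^ 2) *
          trigSq Finset.univ (fun m => ℓ * ξ m i) (fun m => x' m + θ • ξ m) k)
        ≤ ENNReal.ofReal (C * (η ^ 2 * (n * ℓ))) := by
    intro i
    rw [lintegral_lintegral_swap (hmeas i).aemeasurable]
    have : ∀ θ ∈ Ioc (0:ℝ) 1, ∫⁻ k : EuclideanSpace ℝ (Fin d),
        ENNReal.ofReal (‖k‖ ^ (-β) * Real.exp (-‖k‖ ^ 2) *
          trigSq Finset.univ (fun m => ℓ * ξ m i) (fun m => x' m + θ • ξ m) k)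
        ≤ ENNReal.ofReal (C * (η ^ 2 * (n * ℓ))) := by
      intro θ hθ
      have e : (fun m => x' m + θ • ξ m) =
          fun m : Fin n => (s0 + m * ℓ) • v + (z' m + θ • ξ m) := by
        funext m; simp only [hx']; abel
      rw [e]
      refine H v hv ℓ s0 η hℓ hℓ1 hη n _ ?_ _ ?_
      · intro m l
        have : z' m + θ • ξ m - (z' l + θ • ξ l) =
            (1 - θ) • (z' m - z' l) + θ • (z m - z l) := by
          simp only [hξ]; module
        rw [this]
        refine (norm_add_le _ _).trans ?_
        rw [norm_smul, norm_smul, Real.norm_of_nonneg hθ.1.le,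
          Real.norm_of_nonneg (by linarith [hθ.2] : 0 ≤ 1 - θ)]
        nlinarith [hz m l, hz' m l, hθ.1, hθ.2]
      · intro m
        rw [abs_mul, abs_of_pos hℓ]
        have : |ξ m i| ≤ ‖ξ m‖ := by
          simpa using PiLp.norm_apply_le (ξ m) i
        gcongr
        exact this.trans (hzz m)
    refine (setLIntegral_mono' measurableSet_Ioc this).trans ?_
    simp
  refine (mul_le_mul_right (Finset.sum_le_sum fun i _ => hi i) _).trans ?_
  simp only [Finset.sum_const, Finset.card_univ, Fintype.card_fin, nsmul_eq_mul]
  rw [← ENNReal.ofReal_natCast, ← ENNReal.ofReal_mul (by positivity),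
    ← ENNReal.ofReal_mul (by positivity)]
  apply le_of_eq; congr 1; ring


/-- diagonal spectral weight -/
noncomputable def wgt (d : ℕ) (α : ℝ) (a : ℝ → ℝ) (i : Fin d) (k : EuclideanSpace ℝ (Fin d)) : ℝ :=
  a ‖k‖ * ‖k‖ ^ (-(2 * α + (d : ℝ) - 2)) * (1 - k i * k i / ‖k‖ ^ 2)

/-- variance of the linear combination of the i-th component -/
noncomputable def qf (d : ℕ) (α : ℝ) (a : ℝ → ℝ) (i : Fin d) {ι : Type} [Fintype ι] (c : ι → ℝ)
    (x : ι → EuclideanSpace ℝ (Fin d)) : ℝ :=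
  ∑ m, ∑ l, c m * covEntry d α a (x m - x l) i i * c l

lemma wgt_bound {d : ℕ} (hd : 2 ≤ d) {α : ℝ} (hα2 : α < 1 / 2) {K : ℝ} (hK : 0 < K) {a : ℝ → ℝ}
    (ha_nonneg : ∀ r : ℝ, 0 ≤ r → 0 ≤ a r)
    (ha_bdd : ∃ M : ℝ, ∀ r : ℝ, 0 ≤ r → a r ≤ M)
    (ha_supp : ∀ r : ℝ, K < r → a r = 0) :
    ∃ A β : ℝ, 0 < A ∧ 0 < β ∧ β < d - 1 ∧ ∀ (i : Fin d) (k : EuclideanSpace ℝ (Fin d)), k ≠ 0 →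
      0 ≤ wgt d α a i k ∧ wgt d α a i k ≤
        (Metric.closedBall (0 : EuclideanSpace ℝ (Fin d)) K).indicator
          (fun k => A * (‖k‖ ^ (-β) * Real.exp (-‖k‖ ^ 2))) k := by
  obtain ⟨M, hM⟩ := ha_bdd
  have hd' : (2:ℝ) ≤ d := by exact_mod_cast hd
  set β0 := 2 * α + (d:ℝ) - 2 with hβ0
  set β := max β0 ((d - 1) / 2) with hβ
  have hM0 : 0 ≤ M := (ha_nonneg 0 le_rfl).trans (hM 0 le_rfl)
  refine ⟨(M + 1) * K ^ (β - β0) * Real.exp (K ^ 2), β, by positivity, ?_, ?_, ?_⟩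
  · exact lt_max_of_lt_right (by linarith)
  · exact max_lt (by rw [hβ0]; linarith) (by linarith)
  intro i k hk
  have hkp : 0 < ‖k‖ := norm_pos_iff.2 hk
  have hki : k i * k i ≤ ‖k‖ ^ 2 := by
    have : |k i| ≤ ‖k‖ := by simpa using PiLp.norm_apply_le k i
    rw [← sq, ← sq_abs]; gcongr
  have h0 : 0 ≤ 1 - k i * k i / ‖k‖ ^ 2 := by
    rw [sub_nonneg, div_le_one (by positivity)]; exact hki
  have h1 : 1 - k i * k i / ‖k‖ ^ 2 ≤ 1 := by
    have : 0 ≤ k i * k i / ‖k‖ ^ 2 := div_nonneg (mul_self_nonneg _) (by positivity)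
    linarith
  have ha0 := ha_nonneg ‖k‖ hkp.le
  refine ⟨by unfold wgt; positivity, ?_⟩
  by_cases hkK : ‖k‖ ≤ K
  · rw [indicator_of_mem (by simpa using hkK)]
    have e1 : ‖k‖ ^ (-β0) = ‖k‖ ^ (-β) * ‖k‖ ^ (β - β0) := by
      rw [← Real.rpow_add hkp]; congr 1; ring
    have e2 : ‖k‖ ^ (β - β0) ≤ K ^ (β - β0) :=
      Real.rpow_le_rpow hkp.le hkK (by linarith [le_max_left β0 ((d - 1) / 2)])
    have e3 : 1 ≤ Real.exp (K ^ 2) * Real.exp (-‖k‖ ^ 2) := by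
      rw [← Real.exp_add]; apply Real.one_le_exp; nlinarith
    unfold wgt
    rw [← hβ0, e1]
    have hp : 0 ≤ ‖k‖ ^ (-β) := by positivity
    calc a ‖k‖ * (‖k‖ ^ (-β) * ‖k‖ ^ (β - β0)) * (1 - k i * k i / ‖k‖ ^ 2)
        ≤ (M + 1) * (‖k‖ ^ (-β) * K ^ (β - β0)) * 1 := by
          gcongr
          exact (hM _ hkp.le).trans (by linarith)
      _ ≤ (M + 1) * (‖k‖ ^ (-β) * K ^ (β - β0)) * (Real.exp (K ^ 2) * Real.exp (-‖k‖ ^ 2)) := by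
          gcongr
      _ = _ := by ring
  · rw [indicator_of_notMem (by simpa using hkK)]
    unfold wgt
    rw [ha_supp _ (not_le.1 hkK)]; simp

lemma wgt_meas {d : ℕ} {α : ℝ} {a : ℝ → ℝ} (ha_meas : Measurable a) (i : Fin d) :
    Measurable (wgt d α a i) := by
  unfold wgt
  have h1 : Measurable fun k : EuclideanSpace ℝ (Fin d) => a ‖k‖ := ha_meas.comp measurable_norm
  have h2 : Measurable fun k : EuclideanSpace ℝ (Fin d) => k i := by fun_prop
  have h3 : Measurable fun k : EuclideanSpace ℝ (Fin d) => ‖k‖ ^ (-(2 * α + (d : ℝ) - 2)) := by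
    fun_prop
  exact (h1.mul h3).mul (measurable_const.sub ((h2.mul h2).div (measurable_norm.pow_const 2)))

lemma exists_unit {d : ℕ} (hd : 2 ≤ d) : ∃ v : EuclideanSpace ℝ (Fin d), ‖v‖ = 1 :=
  ⟨EuclideanSpace.single ⟨0, by omega⟩ 1, by simp⟩

lemma wgt_est {d : ℕ} (hd : 2 ≤ d) {α : ℝ} (hα2 : α < 1 / 2) {K : ℝ} (hK : 0 < K) {a : ℝ → ℝ}
    (ha_nonneg : ∀ r : ℝ, 0 ≤ r → 0 ≤ a r)
    (ha_bdd : ∃ M : ℝ, ∀ r : ℝ, 0 ≤ r → a r ≤ M) (ha_meas : Measurable a)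
    (ha_supp : ∀ r : ℝ, K < r → a r = 0) :
    ∃ A β : ℝ, 0 < A ∧ 0 < β ∧ β < d - 1 ∧ ∀ (i : Fin d), Integrable (wgt d α a i) ∧
      ∀ {ι : Type} [Fintype ι] (c : ι → ℝ) (x : ι → EuclideanSpace ℝ (Fin d)),
      ENNReal.ofReal (qf d α a i c x) ≤ ENNReal.ofReal A *
      ∫⁻ k in Metric.closedBall (0 : EuclideanSpace ℝ (Fin d)) K,
      ENNReal.ofReal (‖k‖ ^ (-β) * Real.exp (-‖k‖ ^ 2) * trigSq Finset.univ c x k) := by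
  obtain ⟨A, β, hA, hβ, hβd, H⟩ := wgt_bound hd hα2 hK ha_nonneg ha_bdd ha_supp
  refine ⟨A, β, hA, hβ, hβd, fun i => ?_⟩
  have hae : ∀ᵐ k : EuclideanSpace ℝ (Fin d), k ≠ 0 := by
    have : Nontrivial (EuclideanSpace ℝ (Fin d)) := by
      obtain ⟨v, hv⟩ := exists_unit hd
      exact ⟨v, 0, fun h => by simp [h] at hv⟩
    exact Measure.ae_ne volume 0
  have hpt : ∀ᵐ k : EuclideanSpace ℝ (Fin d), ∀ T : ℝ, 0 ≤ T → ENNReal.ofReal (T * wgt d α a i k) ≤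
      (Metric.closedBall (0 : EuclideanSpace ℝ (Fin d)) K).indicator
        (fun k => ENNReal.ofReal A *
          ENNReal.ofReal (‖k‖ ^ (-β) * Real.exp (-‖k‖ ^ 2) * T)) k := by
    filter_upwards [hae] with k hk T hT
    have h := (H i k hk).2
    by_cases hkK : k ∈ Metric.closedBall (0 : EuclideanSpace ℝ (Fin d)) K
    · rw [indicator_of_mem hkK] at h ⊢
      rw [← ENNReal.ofReal_mul hA.le]
      apply ENNReal.ofReal_le_ofReal
      calc _ ≤ T * _ := mul_le_mul_of_nonneg_left h hT
        _ = _ := by ring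
    · rw [indicator_of_notMem hkK] at h ⊢
      have := (H i k hk).1
      rw [show wgt d α a i k = 0 by linarith]; simp
  have hmeasK := (Metric.isClosed_closedBall (x := (0 : EuclideanSpace ℝ (Fin d))) (ε := K)).measurableSet
  have hint : Integrable (wgt d α a i) := by
    refine ⟨(wgt_meas ha_meas i).aestronglyMeasurable, ?_⟩
    rw [hasFiniteIntegral_iff_norm]
    obtain ⟨v, hv⟩ := exists_unit hd
    obtain ⟨C, hC, HC⟩ := trig_est (d := d) hβ hβd
    have := HC v hv 1 0 1 one_pos le_rfl zero_le_one 1 (fun _ => 0) (by simp) (fun _ => 1) (by simp)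
    have e : ∀ k : EuclideanSpace ℝ (Fin d), trigSq Finset.univ (fun _ : Fin 1 => (1:ℝ))
      (fun m : Fin 1 => (0 + (m:ℝ) * 1) • v + 0) k = 1 := by
      intro k; simp [trigSq]
    simp only [e] at this
    calc ∫⁻ k, ENNReal.ofReal ‖wgt d α a i k‖
        ≤ ∫⁻ k, (Metric.closedBall (0 : EuclideanSpace ℝ (Fin d)) K).indicator (fun k =>
          ENNReal.ofReal A * ENNReal.ofReal (‖k‖ ^ (-β) * Real.exp (-‖k‖ ^ 2) * 1)) k := by
          apply lintegral_mono_ae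
          filter_upwards [hae, hpt] with k hk hk2
          rw [Real.norm_of_nonneg (H i k hk).1]
          simpa using hk2 1 zero_le_one
      _ ≤ ∫⁻ k : EuclideanSpace ℝ (Fin d), ENNReal.ofReal A *
          ENNReal.ofReal (‖k‖ ^ (-β) * Real.exp (-‖k‖ ^ 2) * 1) := by
          apply lintegral_mono
          exact indicator_le_self _ _
      _ ≤ ENNReal.ofReal A * ENNReal.ofReal _ := by
          rw [lintegral_const_mul' _ _ ENNReal.ofReal_ne_top]
          exact mul_le_mul_right this _
      _ < ⊤ := ENNReal.mul_lt_top ENNReal.ofReal_lt_top ENNReal.ofReal_lt_top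
  refine ⟨hint, ?_⟩
  intro ι _ c x
  have hcosint : ∀ y : EuclideanSpace ℝ (Fin d),
      Integrable (fun k => Real.cos ⟪k, y⟫ * wgt d α a i k) := by
    intro y
    refine hint.bdd_mul (c := 1) (Continuous.aestronglyMeasurable (by fun_prop)) ?_
    exact Eventually.of_forall fun k => by simpa using Real.abs_cos_le_one _
  have hcov : ∀ y, covEntry d α a y i i = ∫ k, Real.cos ⟪k, y⟫ * wgt d α a i k := by
    intro y; simp [covEntry, wgt]
  have hq : qf d α a i c x = ∫ k, trigSq Finset.univ c x k * wgt d α a i k := by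
    unfold qf
    simp only [trigSq_eq, hcov, Finset.sum_mul]
    rw [integral_finsetSum]
    · refine Finset.sum_congr rfl fun m _ => ?_
      rw [integral_finsetSum]
      · refine Finset.sum_congr rfl fun l _ => ?_
        rw [mul_right_comm, ← integral_const_mul]
        congr 1; funext k; ring
      · intro l _
        refine ((hcosint (x m - x l)).const_mul (c m * c l)).congr (Eventually.of_forall fun k => ?_)
        simp only; ring
    · intro m _
      refine integrable_finsetSum _ fun l _ => ?_
      refine ((hcosint (x m - x l)).const_mul (c m * c l)).congr (Eventually.of_forall fun k => ?_)
      simp only; ring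
  have hqint : Integrable (fun k => trigSq Finset.univ c x k * wgt d α a i k) := by
    simp only [trigSq_eq, Finset.sum_mul]
    refine integrable_finsetSum _ fun m _ => integrable_finsetSum _ fun l _ => ?_
    refine ((hcosint (x m - x l)).const_mul (c m * c l)).congr (Eventually.of_forall fun k => ?_)
    simp only; ring
  rw [hq, ofReal_integral_eq_lintegral_ofReal hqint]
  · rw [← lintegral_const_mul' _ _ ENNReal.ofReal_ne_top, ← lintegral_indicator hmeasK]
    apply lintegral_mono_ae
    filter_upwards [hpt] with k hk
    have := hk _ (trigSq_nonneg Finset.univ c x k)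
    simpa [indicator] using this
  · filter_upwards [hae] with k hk
    exact mul_nonneg (trigSq_nonneg ..) (H i k hk).1

/-- The two variance bounds. -/
lemma qf_bounds {d : ℕ} (hd : 2 ≤ d) {α : ℝ} (hα2 : α < 1 / 2) {K : ℝ} (hK : 0 < K) {a : ℝ → ℝ}
    (ha_nonneg : ∀ r : ℝ, 0 ≤ r → 0 ≤ a r)
    (ha_bdd : ∃ M : ℝ, ∀ r : ℝ, 0 ≤ r → a r ≤ M) (ha_meas : Measurable a)
    (ha_supp : ∀ r : ℝ, K < r → a r = 0) (v : EuclideanSpace ℝ (Fin d)) (hv : ‖v‖ = 1) :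
    ∃ C : ℝ, 0 < C ∧ ∀ (i : Fin d) (ℓ s0 : ℝ), 0 < ℓ → ℓ ≤ 1 →
      ∀ (n : ℕ) (z : Fin n → EuclideanSpace ℝ (Fin d)), (∀ m l, ‖z m - z l‖ ≤ 2) →
      qf d α a i (fun _ => ℓ) (fun m : Fin n => (s0 + m * ℓ) • v + z m) ≤ C * (n * ℓ) ∧
      ∀ (z' : Fin n → EuclideanSpace ℝ (Fin d)) (η : ℝ), 0 ≤ η → (∀ m l, ‖z' m - z' l‖ ≤ 2) →
      (∀ m, ‖z m - z' m‖ ≤ η) →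
      qf d α a i (Sum.elim (fun _ : Fin n => ℓ) (fun _ : Fin n => -ℓ))
        (Sum.elim (fun m : Fin n => (s0 + m * ℓ) • v + z m)
          (fun m : Fin n => (s0 + m * ℓ) • v + z' m)) ≤ C * (η ^ 2 * (n * ℓ)) := by
  obtain ⟨A, β, hA, hβ, hβd, H⟩ := wgt_est hd hα2 hK ha_nonneg ha_bdd ha_meas ha_supp
  obtain ⟨C1, hC1, H1⟩ := trig_est (d := d) hβ hβd
  obtain ⟨C2, hC2, H2⟩ := trig_diff_est (d := d) hβ hβd hK
  refine ⟨A * (C1 + C2), by positivity, ?_⟩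
  intro i ℓ s0 hℓ hℓ1 n z hz
  constructor
  · have h := (H i).2 (fun _ => ℓ) (fun m : Fin n => (s0 + m * ℓ) • v + z m)
    have h2 := H1 v hv ℓ s0 1 hℓ hℓ1 zero_le_one n z hz (fun _ => ℓ) (by simp [abs_of_pos hℓ])
    have h3 := h.trans (mul_le_mul_right ((setLIntegral_le_lintegral _ _).trans h2) _)
    rw [← ENNReal.ofReal_mul hA.le, ENNReal.ofReal_le_ofReal_iff (by positivity)] at h3
    refine h3.trans ?_
    rw [mul_assoc, one_pow, one_mul]
    gcongr; linarith
  · intro z' η hη hz' hzz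
    have h := (H i).2 (Sum.elim (fun _ : Fin n => ℓ) (fun _ : Fin n => -ℓ))
        (Sum.elim (fun m : Fin n => (s0 + m * ℓ) • v + z m)
          (fun m : Fin n => (s0 + m * ℓ) • v + z' m))
    have h2 := H2 v hv ℓ s0 η hℓ hℓ1 hη n z z' hz hz' hzz
    have h3 := h.trans (mul_le_mul_right h2 _)
    rw [← ENNReal.ofReal_mul hA.le, ENNReal.ofReal_le_ofReal_iff (by positivity)] at h3
    refine h3.trans ?_
    rw [mul_assoc]
    gcongr; linarith


lemma gauss_scalar {d : ℕ} {α : ℝ} {a : ℝ → ℝ} {Ω : Type*} [MeasurableSpace Ω] {P : Measure Ω}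
    {F : Ω → EuclideanSpace ℝ (Fin d) → EuclideanSpace ℝ (Fin d)}
    (hF_gauss : ∀ (N : ℕ) (x c : Fin N → EuclideanSpace ℝ (Fin d)),
      Measure.map (fun ω => ∑ j : Fin N, ⟪c j, F ω (x j)⟫) P =
        gaussianReal 0 (Real.toNNReal (∑ j : Fin N, ∑ l : Fin N,
          ∑ i : Fin d, ∑ i' : Fin d,
            c j i * covEntry d α a (x j - x l) i i' * c l i')))
    (i : Fin d) {ι : Type} [Fintype ι] (c : ι → ℝ) (x : ι → EuclideanSpace ℝ (Fin d)) :
    Measure.map (fun ω => ∑ m, c m * F ω (x m) i) P =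
      gaussianReal 0 (Real.toNNReal (qf d α a i c x)) := by
  have e := Fintype.equivFin ι
  have h := hF_gauss (Fintype.card ι) (fun j => x (e.symm j))
    (fun j => EuclideanSpace.single i (c (e.symm j)))
  have e1 : (fun ω => ∑ m, c m * F ω (x m) i) = fun ω => ∑ j : Fin (Fintype.card ι),
      ⟪(EuclideanSpace.single i (c (e.symm j)) : EuclideanSpace ℝ (Fin d)), F ω (x (e.symm j))⟫ := by
    funext ω
    rw [← e.symm.sum_comp]
    refine Finset.sum_congr rfl fun j _ => ?_
    rw [EuclideanSpace.inner_single_left]; simp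
  rw [e1, h]
  congr 2
  unfold qf
  rw [← e.symm.sum_comp]
  refine Finset.sum_congr rfl fun j _ => ?_
  rw [← e.symm.sum_comp]
  refine Finset.sum_congr rfl fun l _ => ?_
  rw [Finset.sum_eq_single i, Finset.sum_eq_single i]
  · simp
  · intro b _ hb; simp [hb]
  · simp
  · intro b _ hb; simp [hb]
  · simp

lemma gauss_exp {Ω : Type*} [MeasurableSpace Ω] {P : Measure Ω} {Y : Ω → ℝ} {q σ2 : ℝ}
    (hY : Measure.map Y P = gaussianReal 0 (Real.toNNReal q)) (hm : Measurable Y)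
    (hq : q ≤ σ2) (hσ : 0 < σ2) (t : ℝ) :
    ∫⁻ ω, ENNReal.ofReal (Real.exp (t * Y ω)) ∂P ≤ ENNReal.ofReal (Real.exp (σ2 * t ^ 2 / 2)) := by
  have h := mgf_gaussianReal hY t
  have hint : Integrable (fun ω => Real.exp (t * Y ω)) P := by
    have h2 := integrable_exp_mul_gaussianReal (μ := 0) (v := Real.toNNReal q) t
    rw [← hY] at h2
    exact h2.comp_measurable hm
  rw [← ofReal_integral_eq_lintegral_ofReal hint (Eventually.of_forall fun ω => (Real.exp_pos _).le)]
  apply ENNReal.ofReal_le_ofReal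
  unfold mgf at h
  rw [h]
  apply Real.exp_le_exp.2
  have : (Real.toNNReal q : ℝ) ≤ σ2 := by
    rw [Real.coe_toNNReal']; exact max_le hq hσ.le
  have := mul_le_mul_of_nonneg_right this (sq_nonneg t)
  simp only [zero_mul, zero_add]
  linarith

lemma gauss_tail {Ω : Type*} [MeasurableSpace Ω] {P : Measure Ω} {Y : Ω → ℝ} {q σ2 : ℝ}
    (hY : Measure.map Y P = gaussianReal 0 (Real.toNNReal q)) (hm : Measurable Y)
    (hq : q ≤ σ2) (hσ : 0 < σ2) {lam : ℝ} (hl : 0 ≤ lam) :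
    P {ω | lam ≤ |Y ω|} ≤ ENNReal.ofReal (2 * Real.exp (-lam ^ 2 / (2 * σ2))) := by
  have key : ∀ s : ℝ, s ^ 2 = 1 → P {ω | lam ≤ s * Y ω} ≤
      ENNReal.ofReal (Real.exp (-lam ^ 2 / (2 * σ2))) := by
    intro s hs
    set t := lam / σ2 with ht
    have ht0 : 0 ≤ t := by positivity
    have hsub : {ω | lam ≤ s * Y ω} ⊆ {ω | ENNReal.ofReal (Real.exp (t * lam)) ≤
        ENNReal.ofReal (Real.exp ((t * s) * Y ω))} := by
      intro ω hω
      simp only [mem_setOf_eq] at hω ⊢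
      apply ENNReal.ofReal_le_ofReal
      apply Real.exp_le_exp.2
      rw [mul_assoc]; gcongr
    have hmk := meas_ge_le_lintegral_div (μ := P)
      (f := fun ω => ENNReal.ofReal (Real.exp ((t * s) * Y ω))) (by fun_prop)
      (ε := ENNReal.ofReal (Real.exp (t * lam)))
      (by simpa using Real.exp_pos _) ENNReal.ofReal_ne_top
    refine (measure_mono hsub).trans (hmk.trans ?_)
    refine (ENNReal.div_le_div_right (gauss_exp hY hm hq hσ (t * s)) _).trans ?_
    rw [← ENNReal.ofReal_div_of_pos (Real.exp_pos _), ← Real.exp_sub]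
    apply ENNReal.ofReal_le_ofReal
    apply Real.exp_le_exp.2
    rw [mul_pow, hs, ht]
    apply le_of_eq; field_simp; ring
  have hsub : {ω | lam ≤ |Y ω|} ⊆ {ω | lam ≤ 1 * Y ω} ∪ {ω | lam ≤ (-1) * Y ω} := by
    intro ω hω
    rcases le_abs.1 (mem_setOf_eq ▸ hω) with h | h
    · left; simpa using h
    · right; simpa using h
  refine (measure_mono hsub).trans ((measure_union_le _ _).trans ?_)
  rw [two_mul, ENNReal.ofReal_add (Real.exp_pos _).le (Real.exp_pos _).le]
  exact add_le_add (key 1 (by norm_num)) (key (-1) (by norm_num))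

lemma pow_le_fact_exp (n : ℕ) (x : ℝ) :
    |x| ^ n ≤ n.factorial * (Real.exp x + Real.exp (-x)) := by
  have h := Real.pow_div_factorial_le_exp |x| (abs_nonneg x) n
  rw [div_le_iff₀ (by positivity)] at h
  refine h.trans ?_
  rw [mul_comm]
  gcongr
  rcases abs_cases x with ⟨h, _⟩ | ⟨h, _⟩ <;> rw [h] <;>
  linarith [Real.exp_pos x, Real.exp_pos (-x)]

lemma gauss_moment {Ω : Type*} [MeasurableSpace Ω] {P : Measure Ω} {Y : Ω → ℝ} {q σ : ℝ}
    (hY : Measure.map Y P = gaussianReal 0 (Real.toNNReal q)) (hm : Measurable Y)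
    (hq : q ≤ σ ^ 2) (hσ : 0 < σ) (n : ℕ) :
    ∫⁻ ω, ENNReal.ofReal (|Y ω| ^ n) ∂P ≤
      ENNReal.ofReal (2 * n.factorial * Real.exp 1 * σ ^ n) := by
  have hpt : ∀ ω, ENNReal.ofReal (|Y ω| ^ n) ≤ ENNReal.ofReal (σ ^ n * n.factorial) *
      (ENNReal.ofReal (Real.exp (σ⁻¹ * Y ω)) + ENNReal.ofReal (Real.exp ((-σ⁻¹) * Y ω))) := by
    intro ω
    rw [← ENNReal.ofReal_add (Real.exp_pos _).le (Real.exp_pos _).le,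
      ← ENNReal.ofReal_mul (by positivity)]
    apply ENNReal.ofReal_le_ofReal
    have := pow_le_fact_exp n (σ⁻¹ * Y ω)
    rw [abs_mul, abs_of_pos (inv_pos.2 hσ), mul_pow] at this
    have h2 := mul_le_mul_of_nonneg_left this (by positivity : 0 ≤ σ ^ n)
    rw [← mul_assoc, ← mul_pow, mul_inv_cancel₀ hσ.ne', one_pow, one_mul] at h2
    rw [mul_assoc, neg_mul]; exact h2
  refine (lintegral_mono hpt).trans ?_
  rw [lintegral_const_mul' _ _ ENNReal.ofReal_ne_top, lintegral_add_left (by fun_prop)]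
  have h1 := gauss_exp hY hm hq (by positivity) σ⁻¹
  have h2 := gauss_exp hY hm hq (by positivity) (-σ⁻¹)
  refine (mul_le_mul_right (add_le_add h1 h2) _).trans ?_
  rw [← ENNReal.ofReal_add (Real.exp_pos _).le (Real.exp_pos _).le,
      ← ENNReal.ofReal_mul (by positivity)]
  apply ENNReal.ofReal_le_ofReal
  have e : σ ^ 2 * (-σ⁻¹) ^ 2 / 2 = 1 / 2 := by field_simp
  have e' : σ ^ 2 * (σ⁻¹) ^ 2 / 2 = 1 / 2 := by field_simp
  rw [e, e']
  have : Real.exp (1/2) ≤ Real.exp 1 := Real.exp_le_exp.2 (by norm_num)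
  calc _ = σ ^ n * n.factorial * 2 * Real.exp (1/2) := by ring
    _ ≤ σ ^ n * n.factorial * 2 * Real.exp 1 := by gcongr
    _ = _ := by ring

/-- Consequences for the field. -/
lemma field_props {d : ℕ} (hd : 2 ≤ d) {α : ℝ} (hα2 : α < 1 / 2) {K : ℝ} (hK : 0 < K) {a : ℝ → ℝ}
    (ha_nonneg : ∀ r : ℝ, 0 ≤ r → 0 ≤ a r)
    (ha_bdd : ∃ M : ℝ, ∀ r : ℝ, 0 ≤ r → a r ≤ M) (ha_meas : Measurable a)
    (ha_supp : ∀ r : ℝ, K < r → a r = 0) (v : EuclideanSpace ℝ (Fin d)) (hv : ‖v‖ = 1)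
    {Ω : Type*} [MeasurableSpace Ω] {P : Measure Ω}
    {F : Ω → EuclideanSpace ℝ (Fin d) → EuclideanSpace ℝ (Fin d)}
    (hF_meas : Measurable (Function.uncurry F))
    (hF_gauss : ∀ (N : ℕ) (x c : Fin N → EuclideanSpace ℝ (Fin d)),
      Measure.map (fun ω => ∑ j : Fin N, ⟪c j, F ω (x j)⟫) P =
        gaussianReal 0 (Real.toNNReal (∑ j : Fin N, ∑ l : Fin N,
          ∑ i : Fin d, ∑ i' : Fin d,
            c j i * covEntry d α a (x j - x l) i i' * c l i'))) :
    ∃ C : ℝ, 0 < C ∧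
      (∀ (i : Fin d) (n : ℕ) (x : EuclideanSpace ℝ (Fin d)),
        ∫⁻ ω, ENNReal.ofReal (|F ω x i| ^ n) ∂P ≤
          ENNReal.ofReal (2 * n.factorial * Real.exp 1 * C ^ n)) ∧
      (∀ (i : Fin d) (n : ℕ) (x x' : EuclideanSpace ℝ (Fin d)),
        ∫⁻ ω, ENNReal.ofReal (|F ω x i - F ω x' i| ^ n) ∂P ≤
          ENNReal.ofReal (2 * n.factorial * Real.exp 1 * (C * ‖x - x'‖) ^ n)) ∧
      (∀ (i : Fin d) (ℓ s0 : ℝ), 0 < ℓ → ℓ ≤ 1 →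
        ∀ (n : ℕ) (z : Fin n → EuclideanSpace ℝ (Fin d)), 0 < n → (∀ m l, ‖z m - z l‖ ≤ 2) →
        (∀ lam : ℝ, 0 ≤ lam → P {ω | lam ≤ |∑ m : Fin n, ℓ * F ω ((s0 + m * ℓ) • v + z m) i|} ≤
          ENNReal.ofReal (2 * Real.exp (-lam ^ 2 / (2 * (C ^ 2 * (n * ℓ)))))) ∧
        ∀ (z' : Fin n → EuclideanSpace ℝ (Fin d)) (η : ℝ), 0 < η → (∀ m l, ‖z' m - z' l‖ ≤ 2) →
        (∀ m, ‖z m - z' m‖ ≤ η) →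
        ∀ lam : ℝ, 0 ≤ lam → P {ω | lam ≤ |∑ m : Fin n, ℓ * (F ω ((s0 + m * ℓ) • v + z m) i -
            F ω ((s0 + m * ℓ) • v + z' m) i)|} ≤
          ENNReal.ofReal (2 * Real.exp (-lam ^ 2 / (2 * (C ^ 2 * (η ^ 2 * (n * ℓ))))))) := by
  obtain ⟨C, hC, H⟩ := qf_bounds hd hα2 hK ha_nonneg ha_bdd ha_meas ha_supp v hv
  have hFm : ∀ (x : EuclideanSpace ℝ (Fin d)) (i : Fin d), Measurable fun ω => F ω x i := by
    intro x i
    have : Measurable fun ω => F ω x := hF_meas.comp (measurable_id.prodMk measurable_const)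
    have h2 : Measurable fun y : EuclideanSpace ℝ (Fin d) => y i := by fun_prop
    exact h2.comp this
  refine ⟨Real.sqrt C, Real.sqrt_pos.2 hC, ?_, ?_, ?_⟩
  · intro i n x
    have h := gauss_scalar hF_gauss i (fun _ : Fin 1 => (1:ℝ)) (fun m : Fin 1 => (0 + (m:ℝ) * 1) • v + x)
    have h2 := (H i 1 0 one_pos le_rfl 1 (fun _ => x) (by simp)).1
    have := gauss_moment (σ := Real.sqrt C) h (by fun_prop) (h2.trans (by simp [Real.sq_sqrt hC.le])) (Real.sqrt_pos.2 hC) n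
    simpa using this
  · intro i n x x'
    rcases eq_or_ne x x' with rfl | hne
    · rcases Nat.eq_zero_or_pos n with rfl | hn
      · have := gauss_moment (σ := Real.sqrt C) (gauss_scalar hF_gauss i (fun _ : Fin 1 => (1:ℝ)) (fun m : Fin 1 => (0 + (m:ℝ) * 1) • v + x)) (by fun_prop) ((H i 1 0 one_pos le_rfl 1 (fun _ => x) (by simp)).1.trans (by simp [Real.sq_sqrt hC.le])) (Real.sqrt_pos.2 hC) 0
        simpa using this
      · simp [hn.ne']
    have hp : 0 < ‖x - x'‖ := norm_pos_iff.2 (sub_ne_zero.2 hne)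
    have h := gauss_scalar hF_gauss i (Sum.elim (fun _ : Fin 1 => (1:ℝ)) (fun _ : Fin 1 => (-1:ℝ)))
      (Sum.elim (fun m : Fin 1 => (0 + (m:ℝ) * 1) • v + x) (fun m : Fin 1 => (0 + (m:ℝ) * 1) • v + x'))
    have h2 := (H i 1 0 one_pos le_rfl 1 (fun _ => x) (by simp)).2 (fun _ => x') ‖x - x'‖ hp.le (by simp)
      (fun _ => le_rfl)
    have := gauss_moment (σ := Real.sqrt C * ‖x - x'‖) h (by fun_prop) (h2.trans (by simp [mul_pow, Real.sq_sqrt hC.le])) (mul_pos (Real.sqrt_pos.2 hC) hp) n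
    simpa [← sub_eq_add_neg] using this
  · intro i ℓ s0 hℓ hℓ1 n z hn hz
    have hn' : (0:ℝ) < n := by exact_mod_cast hn
    constructor
    · intro lam hlam
      have h := gauss_scalar hF_gauss i (fun _ : Fin n => ℓ) (fun m : Fin n => (s0 + (m:ℝ) * ℓ) • v + z m)
      rw [Real.sq_sqrt hC.le]
      exact gauss_tail h (by fun_prop) (H i ℓ s0 hℓ hℓ1 n z hz).1 (by positivity) hlam
    · intro z' η hη hz' hzz lam hlam
      have h := gauss_scalar hF_gauss i (Sum.elim (fun _ : Fin n => ℓ) (fun _ : Fin n => -ℓ))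
        (Sum.elim (fun m : Fin n => (s0 + m * ℓ) • v + z m)
          (fun m : Fin n => (s0 + m * ℓ) • v + z' m))
      rw [Real.sq_sqrt hC.le]
      have := gauss_tail h (by fun_prop) ((H i ℓ s0 hℓ hℓ1 n z hz).2 z' η hη.le hz' hzz) (by positivity) hlam
      simpa [Fintype.sum_sum_type, mul_sub, Finset.sum_sub_distrib, ← sub_eq_add_neg] using this


/-- dyadic lattice point -/
noncomputable def dpt (d : ℕ) (k : ℕ) (u : Fin d → ℤ) : EuclideanSpace ℝ (Fin d) :=
  WithLp.toLp 2 fun j => (u j : ℝ) / 2 ^ k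

/-- dyadic floor -/
noncomputable def dfl (d : ℕ) (k : ℕ) (x : EuclideanSpace ℝ (Fin d)) : Fin d → ℤ :=
  fun j => ⌊2 ^ k * x j⌋

lemma norm_le_card_mul {d : ℕ} {y : EuclideanSpace ℝ (Fin d)} {ε : ℝ} (hε : 0 ≤ ε)
    (h : ∀ j, |y j| ≤ ε) : ‖y‖ ≤ d * ε := by
  rw [EuclideanSpace.norm_eq]
  apply Real.sqrt_le_iff.2
  refine ⟨by positivity, ?_⟩
  calc ∑ j, ‖y j‖ ^ 2 ≤ ∑ j : Fin d, ε ^ 2 := by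
        gcongr with j; simpa using h j
    _ = d * ε ^ 2 := by simp
    _ ≤ (d * ε) ^ 2 := by
        rw [mul_pow]
        rcases Nat.eq_zero_or_pos d with rfl | hd
        · simp
        · have : (1:ℝ) ≤ d := by exact_mod_cast hd
          have h2 : (d:ℝ) ≤ d ^ 2 := by nlinarith
          gcongr

lemma dpt_dfl_close {d : ℕ} (k : ℕ) (x : EuclideanSpace ℝ (Fin d)) (j : Fin d) :
    |dpt d k (dfl d k x) j - x j| ≤ 1 / 2 ^ k := by
  have h1 := Int.floor_le ((2:ℝ) ^ k * x j)
  have h2 := Int.lt_floor_add_one ((2:ℝ) ^ k * x j)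
  have e : dpt d k (dfl d k x) j = (⌊2 ^ k * x j⌋ : ℝ) / 2 ^ k := rfl
  have hp : (0:ℝ) < 2 ^ k := by positivity
  rw [e, abs_le]
  constructor
  · rw [← sub_nonneg]
    have : (⌊2 ^ k * x j⌋ : ℝ) / 2 ^ k - x j - -(1 / 2 ^ k) = (⌊2 ^ k * x j⌋ + 1 - 2 ^ k * x j) / 2 ^ k := by
      field_simp; ring
    rw [this]; exact div_nonneg (by linarith) hp.le
  · rw [← sub_nonneg]
    have : 1 / 2 ^ k - ((⌊2 ^ k * x j⌋ : ℝ) / 2 ^ k - x j) = (1 - ⌊2 ^ k * x j⌋ + 2 ^ k * x j) / 2 ^ k := by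
      field_simp; ring
    rw [this]; exact div_nonneg (by linarith) hp.le

lemma dpt_dfl_norm {d : ℕ} (k : ℕ) (x : EuclideanSpace ℝ (Fin d)) :
    ‖dpt d k (dfl d k x) - x‖ ≤ d * (1 / 2 ^ k) :=
  norm_le_card_mul (by positivity) fun j => dpt_dfl_close k x j

lemma dpt_dfl_norm' {d : ℕ} (k : ℕ) (x : EuclideanSpace ℝ (Fin d)) :
    ‖dpt d k (dfl d k x)‖ ≤ d + ‖x‖ := by
  have h := dpt_dfl_norm k x
  have h2 : (d:ℝ) * (1 / 2 ^ k) ≤ d * 1 := by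
    gcongr
    rw [div_le_one (by positivity)]; exact one_le_pow₀ (by norm_num)
  have h3 : dpt d k (dfl d k x) = (dpt d k (dfl d k x) - x) + x := by abel
  rw [h3]
  exact (norm_add_le _ _).trans (by linarith)

/-- square root of one half -/
noncomputable def sh : ℝ := Real.sqrt (1 / 2)

lemma sh_sq : sh ^ 2 = 1 / 2 := Real.sq_sqrt (by norm_num)
lemma sh_pos : 0 < sh := Real.sqrt_pos.2 (by norm_num)
lemma sh_lt : sh < 3 / 4 := by
  have := sh_sq; have := sh_pos; nlinarith

lemma chain_det {d : ℕ} {f : EuclideanSpace ℝ (Fin d) → ℝ} (hf : Continuous f) {N : ℝ} (hN : 0 ≤ N)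
    (h0 : ∀ u, |f (dpt d 0 u)| ≤ N * Real.sqrt (1 + ‖dpt d 0 u‖))
    (h1 : ∀ k u e, (∀ j, |e j| ≤ 1) → |f (dpt d k (u + e)) - f (dpt d k u)| ≤
      N * sh ^ k * Real.sqrt (1 + ‖dpt d k u‖)) :
    (∀ x, |f x| ≤ 10 * N * Real.sqrt (1 + d + ‖x‖)) ∧
    ∀ (k : ℕ) x x', ‖x - x'‖ ≤ 1 / 2 ^ k →
      |f x - f x'| ≤ 10 * N * sh ^ k * Real.sqrt (1 + d + ‖x‖) := by
  have hs := sh_pos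
  have hs2 := sh_lt
  have hL : ∀ (k : ℕ) (x : EuclideanSpace ℝ (Fin d)), Real.sqrt (1 + ‖dpt d k (dfl d k x)‖) ≤
      Real.sqrt (1 + d + ‖x‖) := by
    intro k x; apply Real.sqrt_le_sqrt; linarith [dpt_dfl_norm' k x]
  have step : ∀ (k : ℕ) x, |f (dpt d (k+1) (dfl d (k+1) x)) - f (dpt d k (dfl d k x))| ≤
      N * sh ^ (k+1) * Real.sqrt (1 + d + ‖x‖) := by
    intro k x
    have e1 : dpt d k (dfl d k x) = dpt d (k+1) (fun j => 2 * dfl d k x j) := by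
      ext j; simp only [dpt]; push_cast; rw [pow_succ]; field_simp
    have h := h1 (k+1) (fun j => 2 * dfl d k x j) (fun j => dfl d (k+1) x j - 2 * dfl d k x j) ?_
    · have e2 : ((fun j => 2 * dfl d k x j) + fun j => dfl d (k+1) x j - 2 * dfl d k x j) = dfl d (k+1) x := by
        funext j; simp
      rw [e2, ← e1] at h
      exact h.trans (mul_le_mul_of_nonneg_left (hL k x) (by positivity))
    · intro j
      simp only [dfl]
      have a1 := Int.floor_le ((2:ℝ) ^ k * x j)
      have a2 := Int.lt_floor_add_one ((2:ℝ) ^ k * x j)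
      have b1 := Int.floor_le ((2:ℝ) ^ (k+1) * x j)
      have b2 := Int.lt_floor_add_one ((2:ℝ) ^ (k+1) * x j)
      have e3 : (2:ℝ) ^ (k+1) * x j = 2 * (2 ^ k * x j) := by ring
      rw [abs_le]
      constructor
      · have : (2 * ⌊(2:ℝ) ^ k * x j⌋ : ℝ) < ⌊(2:ℝ) ^ (k+1) * x j⌋ + 1 := by linarith
        have : 2 * ⌊(2:ℝ) ^ k * x j⌋ < ⌊(2:ℝ) ^ (k+1) * x j⌋ + 1 := by exact_mod_cast this
        linarith
      · have : (⌊(2:ℝ) ^ (k+1) * x j⌋ : ℝ) < 2 * ⌊(2:ℝ) ^ k * x j⌋ + 2 := by linarith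
        have : ⌊(2:ℝ) ^ (k+1) * x j⌋ < 2 * ⌊(2:ℝ) ^ k * x j⌋ + 2 := by exact_mod_cast this
        linarith
  have lim : ∀ x, Tendsto (fun n => f (dpt d n (dfl d n x))) atTop (nhds (f x)) := by
    intro x
    refine (hf.tendsto x).comp ?_
    rw [tendsto_iff_norm_sub_tendsto_zero]
    refine squeeze_zero (fun _ => norm_nonneg _) (fun n => dpt_dfl_norm n x) ?_
    have : Tendsto (fun n : ℕ => (d:ℝ) * (1 / 2) ^ n) atTop (nhds (d * 0)) :=
      (tendsto_pow_atTop_nhds_zero_of_lt_one (by norm_num) (by norm_num)).const_mul _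
    simpa using this
  have chain : ∀ (k : ℕ) x, |f x - f (dpt d k (dfl d k x))| ≤ 3 * N * sh ^ k * Real.sqrt (1 + d + ‖x‖) := by
    intro k x
    set L := Real.sqrt (1 + d + ‖x‖) with hLdef
    have hL0 : 0 ≤ L := Real.sqrt_nonneg _
    have hn : ∀ n, k ≤ n → |f (dpt d n (dfl d n x)) - f (dpt d k (dfl d k x))| ≤
        3 * N * L * (sh ^ k - sh ^ n) := by
      intro n hn
      induction n, hn using Nat.le_induction with
      | base => simp
      | succ n hn ih =>
        have hst := step n x
        rw [← hLdef] at hst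
        have tri := abs_sub_le (f (dpt d (n+1) (dfl d (n+1) x))) (f (dpt d n (dfl d n x))) (f (dpt d k (dfl d k x)))
        have key : N * sh ^ (n+1) * L ≤ 3 * N * L * (sh ^ n - sh ^ (n+1)) := by
          have hx : 0 ≤ N * L * sh ^ n := by positivity
          rw [pow_succ]; nlinarith
        linarith
    have hlim : Tendsto (fun n => |f (dpt d n (dfl d n x)) - f (dpt d k (dfl d k x))|) atTop
        (nhds |f x - f (dpt d k (dfl d k x))|) := ((lim x).sub_const _).abs
    refine le_of_tendsto hlim ?_
    filter_upwards [eventually_ge_atTop k] with n hkn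
    refine (hn n hkn).trans ?_
    have : 0 ≤ 3 * N * L * sh ^ n := by positivity
    linarith
  constructor
  · intro x
    have hc := chain 0 x
    have h00 := (h0 (dfl d 0 x)).trans (mul_le_mul_of_nonneg_left (hL 0 x) hN)
    have : |f x| ≤ |f x - f (dpt d 0 (dfl d 0 x))| + |f (dpt d 0 (dfl d 0 x))| := by
      have := abs_add_le (f x - f (dpt d 0 (dfl d 0 x))) (f (dpt d 0 (dfl d 0 x)))
      simpa using this
    have : 0 ≤ N * Real.sqrt (1 + d + ‖x‖) := by positivity
    simp only [pow_zero, mul_one] at hc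
    linarith
  · intro k x x' hxx
    have hk1 : (1:ℝ) / 2 ^ k ≤ 1 := by
      rw [div_le_one (by positivity)]; exact one_le_pow₀ (by norm_num)
    set L := Real.sqrt (1 + d + ‖x‖) with hLdef
    have hL0 : 0 ≤ L := Real.sqrt_nonneg _
    have hL' : Real.sqrt (1 + d + ‖x'‖) ≤ 2 * L := by
      apply Real.sqrt_le_iff.2
      refine ⟨by positivity, ?_⟩
      rw [mul_pow, hLdef, Real.sq_sqrt (by positivity)]
      have : ‖x'‖ ≤ ‖x‖ + ‖x - x'‖ := by
        have := norm_sub_norm_le x' x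
        rw [norm_sub_rev] at this; linarith
      have : (0:ℝ) ≤ d := by positivity
      have := norm_nonneg x
      linarith
    have c1 := chain k x
    have c2 := chain k x'
    have mid := h1 k (dfl d k x) (fun j => dfl d k x' j - dfl d k x j) ?_
    · have e2 : (dfl d k x + fun j => dfl d k x' j - dfl d k x j) = dfl d k x' := by
        funext j; simp
      rw [e2] at mid
      have mid2 := mid.trans (mul_le_mul_of_nonneg_left (hL k x) (by positivity))
      have c2' := c2.trans (mul_le_mul_of_nonneg_left hL' (by positivity))
      have t1 := abs_sub_le (f x) (f (dpt d k (dfl d k x))) (f x')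
      have t2 := abs_sub_le (f (dpt d k (dfl d k x))) (f (dpt d k (dfl d k x'))) (f x')
      rw [abs_sub_comm (f (dpt d k (dfl d k x))) (f (dpt d k (dfl d k x')))] at t2
      rw [abs_sub_comm (f (dpt d k (dfl d k x'))) (f x')] at t2
      have : 0 ≤ N * sh ^ k * L := by positivity
      linarith
    · intro j
      simp only [dfl]
      have hj : |x j - x' j| ≤ 1 / 2 ^ k := by
        have := PiLp.norm_apply_le (x - x') j
        simp only [PiLp.sub_apply, Real.norm_eq_abs] at this
        exact this.trans hxx
      rw [le_div_iff₀ (by positivity), ← abs_of_pos (by positivity : (0:ℝ) < 2 ^ k), ← abs_mul, abs_le] at hj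
      have a1 := Int.floor_le ((2:ℝ) ^ k * x j)
      have a2 := Int.lt_floor_add_one ((2:ℝ) ^ k * x j)
      have b1 := Int.floor_le ((2:ℝ) ^ k * x' j)
      have b2 := Int.lt_floor_add_one ((2:ℝ) ^ k * x' j)
      obtain ⟨j1, j2⟩ := hj
      rw [abs_le]
      constructor
      · have : (⌊(2:ℝ) ^ k * x j⌋ : ℝ) < ⌊(2:ℝ) ^ k * x' j⌋ + 2 := by nlinarith
        have : ⌊(2:ℝ) ^ k * x j⌋ < ⌊(2:ℝ) ^ k * x' j⌋ + 2 := by exact_mod_cast this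
        linarith
      · have : (⌊(2:ℝ) ^ k * x' j⌋ : ℝ) < ⌊(2:ℝ) ^ k * x j⌋ + 2 := by nlinarith
        have : ⌊(2:ℝ) ^ k * x' j⌋ < ⌊(2:ℝ) ^ k * x j⌋ + 2 := by exact_mod_cast this
        linarith


/-- product weight on the integer lattice -/
noncomputable def lw (d : ℕ) (u : Fin d → ℤ) : ℝ := ∏ j, ((1 + |(u j : ℝ)|) ^ 2)⁻¹

lemma lw_pos {d : ℕ} (u : Fin d → ℤ) : 0 < lw d u := by
  unfold lw; exact Finset.prod_pos fun j _ => by positivity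

lemma summable_int_w : Summable fun n : ℤ => ((1 + |(n : ℝ)|) ^ 2)⁻¹ := by
  have h : Summable fun n : ℕ => ((1 + (n : ℝ)) ^ 2)⁻¹ := by
    have := (summable_nat_add_iff 1).2 (Real.summable_nat_pow_inv.2 (by norm_num : 1 < 2))
    refine this.congr fun n => ?_
    push_cast; rw [add_comm]
  apply Summable.of_nat_of_neg
  · simpa using h
  · simpa using h

lemma summable_lw (d : ℕ) : Summable (lw d) := by
  refine summable_of_sum_le (c := ∏ j : Fin d, ∑' n : ℤ, ((1 + |(n : ℝ)|) ^ 2)⁻¹)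
    (fun u => (lw_pos u).le) fun s => ?_
  have hsub : s ⊆ Fintype.piFinset fun j : Fin d => s.image fun u => u j := by
    intro u hu
    rw [Fintype.mem_piFinset]
    exact fun j => Finset.mem_image_of_mem _ hu
  refine (Finset.sum_le_sum_of_subset_of_nonneg hsub fun u _ _ => (lw_pos u).le).trans ?_
  unfold lw
  rw [← Finset.prod_univ_sum (fun j : Fin d => s.image fun u => u j)
    (fun (j : Fin d) (n : ℤ) => ((1 + |(n : ℝ)|) ^ 2)⁻¹)]
  refine Finset.prod_le_prod (fun j _ => Finset.sum_nonneg fun n _ => by positivity) fun j _ => ?_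
  exact summable_int_w.sum_le_tsum _ fun n _ => by positivity

lemma lw_inv_le {d : ℕ} (k : ℕ) (u : Fin d → ℤ) :
    1 ≤ lw d u * (2 ^ k * (1 + ‖dpt d k u‖)) ^ (2 * d) := by
  have hj : ∀ j, 1 + |(u j : ℝ)| ≤ 2 ^ k * (1 + ‖dpt d k u‖) := by
    intro j
    have h := PiLp.norm_apply_le (dpt d k u) j
    have e : dpt d k u j = (u j : ℝ) / 2 ^ k := rfl
    rw [e, Real.norm_eq_abs, abs_div, abs_of_pos (by positivity : (0:ℝ) < 2 ^ k), div_le_iff₀ (by positivity)] at h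
    have : (1:ℝ) ≤ 2 ^ k := one_le_pow₀ (by norm_num)
    linarith
  set B := 2 ^ k * (1 + ‖dpt d k u‖)
  unfold lw
  have e : B ^ (2 * d) = ∏ j : Fin d, B ^ 2 := by
    simp [pow_mul]
  rw [e, ← Finset.prod_mul_distrib]
  refine Finset.one_le_prod fun j => ?_
  rw [inv_mul_eq_div, one_le_div (by positivity)]
  exact fun _ => pow_le_pow_left₀ (by positivity) (hj j) 2

lemma pow_to_sqrt {h k q : ℕ} {D A W B : ℝ} (hD : 0 ≤ D) (hA : 0 ≤ A) (hB : 1 ≤ B)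
    (hqh : q ≤ h) (hh : 0 < h) (hW : A ^ (2 * h) = W)
    (H : 2 ^ (k * h) * D ^ (2 * h) ≤ W * B ^ q) : D ≤ A * sh ^ k * Real.sqrt B := by
  have hB0 : 0 ≤ B := by linarith
  have h1 : (2 ^ k * D ^ 2) ^ h ≤ (A ^ 2 * B) ^ h := by
    calc (2 ^ k * D ^ 2) ^ h = 2 ^ (k * h) * D ^ (2 * h) := by rw [mul_pow, ← pow_mul, ← pow_mul]
      _ ≤ W * B ^ q := H
      _ ≤ W * B ^ h := by
        have : 0 ≤ W := by rw [← hW]; positivity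
        gcongr
      _ = _ := by rw [mul_pow, ← pow_mul, hW]
  have h2 := (pow_le_pow_iff_left₀ (by positivity) (by positivity) hh.ne').1 h1
  have hs := sh_sq
  apply le_of_sq_le_sq _ (by have := sh_pos; positivity)
  rw [mul_pow, mul_pow, Real.sq_sqrt hB0, ← pow_mul, mul_comm k 2, pow_mul, hs]
  have e : ((1:ℝ)/2) ^ k * 2 ^ k = 1 := by rw [← mul_pow]; norm_num
  calc D ^ 2 = (1/2) ^ k * (2 ^ k * D ^ 2) := by rw [← mul_assoc, e, one_mul]
    _ ≤ (1/2) ^ k * (A ^ 2 * B) := by gcongr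
    _ = _ := by ring

lemma tsum_ofReal_lt_top {ι : Type*} {g : ι → ℝ} (hg : Summable g) :
    ∑' i, ENNReal.ofReal (g i) < ⊤ := hg.tsum_ofReal_lt_top

/-- polynomial envelope and modulus of continuity with good moments -/
lemma field_env {d : ℕ} (hd : 2 ≤ d) {Ω : Type*} [MeasurableSpace Ω] {P : Measure Ω}
    {F : Ω → EuclideanSpace ℝ (Fin d) → EuclideanSpace ℝ (Fin d)}
    (hF_meas : Measurable (Function.uncurry F)) (hcont : ∀ᵐ ω ∂P, Continuous (F ω))
    {C : ℝ} (hC : 0 < C)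
    (m0 : ∀ (i : Fin d) (n : ℕ) (x : EuclideanSpace ℝ (Fin d)),
        ∫⁻ ω, ENNReal.ofReal (|F ω x i| ^ n) ∂P ≤
          ENNReal.ofReal (2 * n.factorial * Real.exp 1 * C ^ n))
    (m1 : ∀ (i : Fin d) (n : ℕ) (x x' : EuclideanSpace ℝ (Fin d)),
        ∫⁻ ω, ENNReal.ofReal (|F ω x i - F ω x' i| ^ n) ∂P ≤
          ENNReal.ofReal (2 * n.factorial * Real.exp 1 * (C * ‖x - x'‖) ^ n)) :
    ∃ N : Ω → ℝ, Measurable N ∧ (∀ ω, 0 ≤ N ω) ∧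
      ∫⁻ ω, ENNReal.ofReal (N ω ^ (4 * d + 2)) ∂P < ⊤ ∧
      ∀ᵐ ω ∂P, (∀ x, ‖F ω x‖ ≤ N ω * Real.sqrt (1 + d + ‖x‖)) ∧
        ∀ (k : ℕ) x x', ‖x - x'‖ ≤ 1 / 2 ^ k →
          ‖F ω x - F ω x'‖ ≤ N ω * sh ^ k * Real.sqrt (1 + d + ‖x‖) := by
  have hFm : ∀ (x : EuclideanSpace ℝ (Fin d)) (i : Fin d), Measurable fun ω => F ω x i := by
    intro x i
    have : Measurable fun ω => F ω x := hF_meas.comp (measurable_id.prodMk measurable_const)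
    have h2 : Measurable fun y : EuclideanSpace ℝ (Fin d) => y i := by fun_prop
    exact h2.comp this
  set p := 4 * d + 2 with hp
  set S : Finset (Fin d → ℤ) := Fintype.piFinset fun _ => Finset.Icc (-1) 1 with hS
  set T0 : Fin d → (Fin d → ℤ) → Ω → ENNReal := fun i u ω =>
    ENNReal.ofReal (lw d u * |F ω (dpt d 0 u) i| ^ p) with hT0
  set T1 : Fin d → ℕ → (Fin d → ℤ) → (Fin d → ℤ) → Ω → ENNReal := fun i k u e ω =>
    ENNReal.ofReal ((2 ^ (k * (p - 1)) * lw d u) *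
      |F ω (dpt d k (u + e)) i - F ω (dpt d k u) i| ^ p) with hT1
  set W : Ω → ENNReal := fun ω => ∑ i, (∑' u, T0 i u ω + ∑' k, ∑' u, ∑ e ∈ S, T1 i k u e ω) with hW
  have hT0m : ∀ i u, Measurable (T0 i u) := by
    intro i u; simp only [hT0]; fun_prop
  have hT1m : ∀ i k u e, Measurable (T1 i k u e) := by
    intro i k u e; simp only [hT1]; fun_prop
  have hWm : Measurable W := by
    refine Finset.measurable_fun_sum _ fun i _ => ?_
    refine (Measurable.tsum fun u => hT0m i u).add ?_
    refine Measurable.tsum fun k => Measurable.tsum fun u => ?_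
    exact Finset.measurable_fun_sum _ fun e _ => hT1m i k u e
  have hlw := tsum_ofReal_lt_top (summable_lw d)
  have hWint : ∫⁻ ω, W ω ∂P < ⊤ := by
    simp only [hW]
    rw [lintegral_finsetSum _ fun i _ => ?_]
    swap
    · refine (Measurable.tsum fun u => hT0m i u).add ?_
      refine Measurable.tsum fun k => Measurable.tsum fun u => ?_
      exact Finset.measurable_fun_sum _ fun e _ => hT1m i k u e
    refine ENNReal.sum_lt_top.2 fun i _ => ?_
    rw [lintegral_add_left (Measurable.tsum fun u => hT0m i u)]
    refine ENNReal.add_lt_top.2 ⟨?_, ?_⟩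
    · rw [lintegral_tsum fun u => (hT0m i u).aemeasurable]
      have : ∀ u, ∫⁻ ω, T0 i u ω ∂P ≤ ENNReal.ofReal (lw d u) *
          ENNReal.ofReal (2 * p.factorial * Real.exp 1 * C ^ p) := by
        intro u
        simp only [hT0]
        simp only [ENNReal.ofReal_mul (lw_pos u).le]
        rw [lintegral_const_mul' _ _ ENNReal.ofReal_ne_top]
        exact mul_le_mul_right (m0 i p _) _
      refine (ENNReal.tsum_le_tsum this).trans_lt ?_
      rw [ENNReal.tsum_mul_right]
      exact ENNReal.mul_lt_top hlw ENNReal.ofReal_lt_top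
    · rw [lintegral_tsum fun k => (Measurable.tsum fun u =>
        Finset.measurable_fun_sum _ fun e _ => hT1m i k u e).aemeasurable]
      set c := 2 * p.factorial * Real.exp 1 * (C * d) ^ p with hc
      have h1 : ∀ k u, ∀ e ∈ S, ∫⁻ ω, T1 i k u e ω ∂P ≤
          ENNReal.ofReal ((1/2) ^ k) * (ENNReal.ofReal (lw d u) * ENNReal.ofReal c) := by
        intro k u e he
        simp only [hT1]
        have hpos : 0 ≤ 2 ^ (k * (p - 1)) * lw d u := by have := (lw_pos u).le; positivity
        simp only [ENNReal.ofReal_mul hpos]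
        rw [lintegral_const_mul' _ _ ENNReal.ofReal_ne_top]
        refine (mul_le_mul_right (m1 i p _ _) _).trans ?_
        rw [← ENNReal.ofReal_mul hpos, ← ENNReal.ofReal_mul (lw_pos u).le,
          ← ENNReal.ofReal_mul (by positivity)]
        apply ENNReal.ofReal_le_ofReal
        have hn : ‖dpt d k (u + e) - dpt d k u‖ ≤ d * (1 / 2 ^ k) := by
          refine norm_le_card_mul (by positivity) fun j => ?_
          have ej : (dpt d k (u + e) - dpt d k u) j = (e j : ℝ) / 2 ^ k := by
            have : (dpt d k (u + e) - dpt d k u) j = ((u + e) j : ℤ) / 2 ^ k - (u j : ℝ) / 2 ^ k := rfl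
            rw [this, Pi.add_apply]; push_cast; ring
          rw [ej, abs_div, abs_of_pos (by positivity : (0:ℝ) < 2 ^ k)]
          gcongr
          rw [hS, Fintype.mem_piFinset] at he
          have := Finset.mem_Icc.1 (he j)
          have h3 : |e j| ≤ 1 := abs_le.2 this
          have h4 : ((|e j| : ℤ) : ℝ) ≤ ((1 : ℤ) : ℝ) := Int.cast_le.2 h3
          simpa using h4
        have hb := (lw_pos u).le
        calc 2 ^ (k * (p - 1)) * lw d u * (2 * p.factorial * Real.exp 1 *
              (C * ‖dpt d k (u + e) - dpt d k u‖) ^ p)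
            ≤ 2 ^ (k * (p - 1)) * lw d u * (2 * p.factorial * Real.exp 1 *
              (C * (d * (1 / 2 ^ k))) ^ p) := by gcongr
          _ = (2 ^ (k * (p - 1)) * (1 / 2 ^ k) ^ p) * (lw d u * c) := by
              rw [hc, ← mul_assoc C, mul_pow (C * d)]; ring
          _ = (1/2) ^ k * (lw d u * c) := by
              congr 1
              have : p = (p - 1) + 1 := by omega
              rw [pow_mul, one_div_pow]
              conv_lhs => rw [this, pow_succ]
              simp only [Nat.add_sub_cancel]
              field_simp
              rw [← mul_pow]; norm_num
      have h2 : ∀ k, ∫⁻ ω, ∑' u, ∑ e ∈ S, T1 i k u e ω ∂P ≤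
          ENNReal.ofReal ((1/2) ^ k) * ((∑' u, ENNReal.ofReal (lw d u)) * (S.card * ENNReal.ofReal c)) := by
        intro k
        rw [lintegral_tsum fun u => (Finset.measurable_fun_sum _ fun e _ => hT1m i k u e).aemeasurable]
        rw [← ENNReal.tsum_mul_right, ← ENNReal.tsum_mul_left]
        refine ENNReal.tsum_le_tsum fun u => ?_
        rw [lintegral_finsetSum _ fun e _ => hT1m i k u e]
        refine (Finset.sum_le_sum (h1 k u)).trans ?_
        rw [Finset.sum_const, nsmul_eq_mul]
        apply le_of_eq; ring
      refine (ENNReal.tsum_le_tsum h2).trans_lt ?_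
      rw [ENNReal.tsum_mul_right]
      refine ENNReal.mul_lt_top (tsum_ofReal_lt_top (summable_geometric_of_lt_one (by norm_num) (by norm_num))) ?_
      exact ENNReal.mul_lt_top hlw (ENNReal.mul_lt_top (by simp) ENNReal.ofReal_lt_top)
  set N0 : Ω → ℝ := fun ω => (W ω).toReal ^ ((p:ℝ)⁻¹) with hN0
  have hN0p : ∀ ω, N0 ω ^ p = (W ω).toReal := fun ω =>
    Real.rpow_inv_natCast_pow ENNReal.toReal_nonneg (by omega)
  have hN0n : ∀ ω, 0 ≤ N0 ω := fun ω => by positivity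
  refine ⟨fun ω => d * (10 * N0 ω), ?_, fun ω => by have := hN0n ω; positivity, ?_, ?_⟩
  · have : Measurable fun ω => (W ω).toReal := hWm.ennreal_toReal
    simp only [hN0]; fun_prop
  · have : ∀ ω, ENNReal.ofReal ((d * (10 * N0 ω)) ^ p) ≤ ENNReal.ofReal ((d * 10) ^ p) * W ω := by
      intro ω
      rw [← mul_assoc, mul_pow, hN0p, ENNReal.ofReal_mul (by positivity)]
      exact mul_le_mul_right ENNReal.ofReal_toReal_le _
    refine (lintegral_mono this).trans_lt ?_
    rw [lintegral_const_mul' _ _ ENNReal.ofReal_ne_top]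
    exact ENNReal.mul_lt_top ENNReal.ofReal_lt_top hWint
  · filter_upwards [hcont, ae_lt_top hWm hWint.ne] with ω hc hWf
    have hcoord : ∀ i : Fin d, (∀ x, |F ω x i| ≤ 10 * N0 ω * Real.sqrt (1 + d + ‖x‖)) ∧
        ∀ (k : ℕ) x x', ‖x - x'‖ ≤ 1 / 2 ^ k →
        |F ω x i - F ω x' i| ≤ 10 * N0 ω * sh ^ k * Real.sqrt (1 + d + ‖x‖) := by
      intro i
      have hle : ∀ t : ENNReal, t ≤ (∑' u, T0 i u ω + ∑' k, ∑' u, ∑ e ∈ S, T1 i k u e ω) → t ≤ W ω := by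
        intro t ht
        refine ht.trans ?_
        exact Finset.single_le_sum (f := fun i => (∑' u, T0 i u ω + ∑' k, ∑' u, ∑ e ∈ S, T1 i k u e ω))
          (fun _ _ => by positivity) (Finset.mem_univ i)
      have hreal : ∀ r : ℝ, ENNReal.ofReal r ≤ W ω → r ≤ N0 ω ^ p := by
        intro r hr
        rw [hN0p]
        exact (ENNReal.ofReal_le_iff_le_toReal hWf.ne).1 hr
      have hp2 : p = 2 * (2 * d + 1) := by omega
      have hcf : Continuous fun x => F ω x i := by
        have h2 : Continuous fun y : EuclideanSpace ℝ (Fin d) => y i := by fun_prop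
        exact h2.comp hc
      have hgen : ∀ (k : ℕ) u (D : ℝ), 0 ≤ D → ENNReal.ofReal ((2 ^ (k * (p - 1)) * lw d u) * D ^ p) ≤ W ω →
          D ≤ N0 ω * sh ^ k * Real.sqrt (1 + ‖dpt d k u‖) := by
        intro k u D hD hDW
        refine pow_to_sqrt (h := 2 * d + 1) (q := 2 * d) hD (hN0n ω)
          (by linarith [norm_nonneg (dpt d k u)]) (by omega) (by omega) rfl ?_
        rw [← hp2]
        have h1 := hreal _ hDW
        have h2 := lw_inv_le k u
        have h3 := (lw_pos u).le
        have e : (2:ℝ) ^ (k * (p - 1)) = 2 ^ (k * (2 * d + 1)) * (2 ^ k) ^ (2 * d) := by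
          rw [← pow_mul, ← pow_add]; congr 1
          have : p - 1 = (2 * d + 1) + 2 * d := by omega
          rw [this]; ring
        set B := 1 + ‖dpt d k u‖
        have hB : 0 < B := by positivity
        rw [mul_pow] at h2
        rw [e] at h1
        calc 2 ^ (k * (2 * d + 1)) * D ^ p
            ≤ 2 ^ (k * (2 * d + 1)) * D ^ p * (lw d u * ((2 ^ k) ^ (2 * d) * B ^ (2 * d))) :=
              le_mul_of_one_le_right (by positivity) h2
          _ = (2 ^ (k * (2 * d + 1)) * (2 ^ k) ^ (2 * d) * lw d u * D ^ p) * B ^ (2 * d) := by ring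
          _ ≤ _ := by gcongr
      refine chain_det hcf (hN0n ω) ?_ ?_
      · intro u
        have := hgen 0 u |F ω (dpt d 0 u) i| (abs_nonneg _) ?_
        · simpa using this
        · apply hle
          refine le_trans ?_ le_self_add
          refine le_trans (le_of_eq ?_) (ENNReal.le_tsum u)
          simp [hT0]
      · intro k u e he
        refine hgen k u _ (abs_nonneg _) ?_
        apply hle
        refine le_trans ?_ le_add_self
        refine le_trans ?_ (ENNReal.le_tsum k)
        refine le_trans ?_ (ENNReal.le_tsum u)
        refine Finset.single_le_sum (f := fun e => T1 i k u e ω) (fun _ _ => by positivity) ?_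
        rw [hS, Fintype.mem_piFinset]
        intro j
        exact Finset.mem_Icc.2 (abs_le.1 (he j))
    have hs := sh_pos
    constructor
    · intro x
      have := norm_le_card_mul (y := F ω x) (by have := hN0n ω; positivity) (fun j => (hcoord j).1 x)
      exact this.trans (le_of_eq (by ring))
    · intro k x x' hx
      have := norm_le_card_mul (y := F ω x - F ω x') (by have := hN0n ω; positivity) (fun j => (hcoord j).2 k x x' hx)
      exact this.trans (le_of_eq (by ring))


lemma ode_growth {d : ℕ} {v : EuclideanSpace ℝ (Fin d)} (hv : ‖v‖ = 1) {δ N : ℝ} (hδ : 0 < δ)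
    (hδ1 : δ ≤ 1) (hN : 0 ≤ N) {f : EuclideanSpace ℝ (Fin d) → EuclideanSpace ℝ (Fin d)}
    (hf : ∀ x, ‖f x‖ ≤ N * Real.sqrt (1 + d + ‖x‖)) {x : ℝ → EuclideanSpace ℝ (Fin d)}
    (hx0 : x 0 = 0) (hx : ∀ s, 0 ≤ s → HasDerivAt x (v + δ • f (x s)) s) {s : ℝ} (hs : 0 ≤ s) :
    ‖x s‖ ≤ (1 + d) ^ 2 * (1 + N) ^ 2 * (1 + s) ^ 2 := by
  set c : ℝ := 1 + d with hc
  have hc1 : 1 ≤ c := by rw [hc]; have : (0:ℝ) ≤ d := by positivity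
                         linarith
  set φ : ℝ → ℝ := fun s => c ^ 2 + ‖x s‖ ^ 2 with hφ
  have hφ1 : ∀ s, 1 ≤ φ s := fun s => by
    have : 0 ≤ ‖x s‖ ^ 2 := by positivity
    simp only [hφ]; nlinarith
  set h : ℝ → ℝ := fun s => Real.sqrt (Real.sqrt (φ s)) with hh
  have hh1 : ∀ s, 1 ≤ Real.sqrt (φ s) := fun s => Real.one_le_sqrt.2 (hφ1 s)
  have hh2 : ∀ s, 1 ≤ h s := fun s => Real.one_le_sqrt.2 (hh1 s)
  have hsq : ∀ s, h s ^ 2 = Real.sqrt (φ s) := fun s => Real.sq_sqrt (by linarith [hh1 s])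
  have hsq2 : ∀ s, Real.sqrt (φ s) ^ 2 = φ s := fun s => Real.sq_sqrt (by linarith [hφ1 s])
  have hxle : ∀ s, ‖x s‖ ≤ h s ^ 2 := fun s => by
    rw [hsq]; apply Real.le_sqrt_of_sq_le; simp only [hφ]; nlinarith
  have hder : ∀ s, 0 ≤ s → HasDerivAt h (2 * ⟪x s, v + δ • f (x s)⟫ / (2 * Real.sqrt (φ s)) /
      (2 * Real.sqrt (Real.sqrt (φ s)))) s := by
    intro s hs
    have h1 : HasDerivAt φ (2 * ⟪x s, v + δ • f (x s)⟫) s := ((hx s hs).norm_sq).const_add _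
    exact (h1.sqrt (by linarith [hφ1 s])).sqrt (by linarith [hh1 s])
  have hbd : ∀ s, 0 ≤ s → |2 * ⟪x s, v + δ • f (x s)⟫ / (2 * Real.sqrt (φ s)) /
      (2 * Real.sqrt (Real.sqrt (φ s)))| ≤ 1 + N := by
    intro s hs
    have e1 : Real.sqrt (Real.sqrt (φ s)) = h s := rfl
    rw [e1, ← hsq s]
    have hp : 0 < h s := by linarith [hh2 s]
    rw [abs_div, abs_div, abs_of_pos (by positivity : 0 < 2 * h s ^ 2), abs_of_pos (by positivity : 0 < 2 * h s),
      div_div, div_le_iff₀ (by positivity)]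
    have h3 : Real.sqrt (1 + d + ‖x s‖) ≤ 2 * h s := by
      apply Real.sqrt_le_iff.2
      refine ⟨by positivity, ?_⟩
      have : c ≤ h s ^ 2 := by
        rw [hsq]; apply Real.le_sqrt_of_sq_le; simp only [hφ]; nlinarith [sq_nonneg ‖x s‖]
      have := hxle s
      rw [mul_pow]; rw [← hc]; nlinarith
    have h4 : ‖v + δ • f (x s)‖ ≤ 1 + 2 * N * h s := by
      refine (norm_add_le _ _).trans ?_
      rw [hv, norm_smul, Real.norm_of_nonneg hδ.le]
      have := (hf (x s)).trans (mul_le_mul_of_nonneg_left h3 hN)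
      have h5 : δ * ‖f (x s)‖ ≤ 1 * ‖f (x s)‖ := by gcongr
      linarith
    have h5 : |⟪x s, v + δ • f (x s)⟫| ≤ h s ^ 2 * (1 + 2 * N * h s) :=
      (abs_real_inner_le_norm _ _).trans (mul_le_mul (hxle s) h4 (norm_nonneg _) (by positivity))
    rw [abs_mul, abs_two]
    have h6 : 1 + 2 * N * h s ≤ 2 * (1 + N) * h s := by nlinarith [hh2 s]
    have h7 : h s ^ 2 * (1 + 2 * N * h s) ≤ h s ^ 2 * (2 * (1 + N) * h s) := by gcongr
    nlinarith
  have hmv := norm_image_sub_le_of_norm_deriv_le_segment' (f := h) (a := 0) (b := s) (C := 1 + N)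
    (fun u hu => (hder u hu.1).hasDerivWithinAt) (fun u hu => hbd u hu.1) s ⟨hs, le_rfl⟩
  have h0 : h 0 ≤ c := by
    simp only [hh, hφ, hx0, norm_zero]
    rw [zero_pow two_ne_zero, add_zero, Real.sqrt_sq (by linarith)]
    apply Real.sqrt_le_iff.2; constructor <;> nlinarith
  have h1 : h s ≤ c * (1 + N) * (1 + s) := by
    have := (abs_le.1 (by simpa using hmv)).2
    have : c + (1 + N) * s ≤ c * (1 + N) * (1 + s) := by
      have : 0 ≤ N * s := by positivity
      have : 0 ≤ (c - 1) * (s + N * s) := by apply mul_nonneg <;> linarith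
      have : 0 ≤ c * N := by positivity
      nlinarith
    linarith
  refine (hxle s).trans ?_
  rw [← mul_pow, ← mul_pow]
  exact pow_le_pow_left₀ (by linarith [hh2 s]) h1 2

/-- One time-step discretization error. -/
lemma ode_step {d : ℕ} {v : EuclideanSpace ℝ (Fin d)} (hv : ‖v‖ = 1) {δ N B T V : ℝ} (hδ : 0 < δ)
    (hδ1 : δ ≤ 1) (hN : 0 ≤ N) {f : EuclideanSpace ℝ (Fin d) → EuclideanSpace ℝ (Fin d)}
    (hf : ∀ x, ‖f x‖ ≤ N * Real.sqrt (1 + d + ‖x‖))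
    (hf2 : ∀ (k : ℕ) x x', ‖x - x'‖ ≤ 1 / 2 ^ k →
          ‖f x - f x'‖ ≤ N * sh ^ k * Real.sqrt (1 + d + ‖x‖)) {x : ℝ → EuclideanSpace ℝ (Fin d)}
    (hx : ∀ s, 0 ≤ s → HasDerivAt x (v + δ • f (x s)) s)
    (hB : ∀ s, 0 ≤ s → s ≤ T → ‖x s‖ ≤ B) (hV : N * Real.sqrt (1 + d + B) ≤ V)
    {ℓ μ ε : ℝ} (hℓ : 0 < ℓ) (k : ℕ) (hk : ℓ * (1 + V) + μ ≤ 1 / 2 ^ k) (hε : sh ^ k * V ≤ ε)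
    {s : ℝ} (hs : 0 ≤ s) (hsT : s + ℓ ≤ T) {w : EuclideanSpace ℝ (Fin d)}
    (hw : ‖w - (x s - s • v)‖ ≤ μ) :
    ‖(x (s + ℓ) - (s + ℓ) • v) - (x s - s • v) - (δ * ℓ) • f (s • v + w)‖ ≤ δ * ℓ * ε := by
  have hsh := sh_pos
  have hVf : ∀ u, 0 ≤ u → u ≤ T → ‖f (x u)‖ ≤ V := by
    intro u hu huT
    refine (hf (x u)).trans (le_trans ?_ hV)
    gcongr
    exact hB u hu huT
  have hV0 : 0 ≤ V := (norm_nonneg _).trans (hVf s hs (by linarith))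
  have hmove : ∀ u ∈ Icc s (s + ℓ), ‖x u - x s‖ ≤ (1 + V) * (u - s) := by
    refine norm_image_sub_le_of_norm_deriv_le_segment'
      (fun u hu => (hx u (hs.trans hu.1)).hasDerivWithinAt) (fun u hu => ?_)
    refine (norm_add_le _ _).trans ?_
    rw [hv, norm_smul, Real.norm_of_nonneg hδ.le]
    have := hVf u (hs.trans hu.1) (by linarith [hu.2])
    nlinarith [norm_nonneg (f (x u))]
  have hclose : ∀ u ∈ Icc s (s + ℓ), ‖f (x u) - f (s • v + w)‖ ≤ ε := by
    intro u hu
    have h1 : ‖x u - (s • v + w)‖ ≤ 1 / 2 ^ k := by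
      have e : x u - (s • v + w) = (x u - x s) - (w - (x s - s • v)) := by abel
      rw [e]
      refine (norm_sub_le _ _).trans (le_trans ?_ hk)
      have h2 := hmove u hu
      have h3 : (1 + V) * (u - s) ≤ (1 + V) * ℓ := by
        gcongr; linarith [hu.2]
      linarith
    refine (hf2 k _ _ h1).trans (le_trans ?_ hε)
    have : N * Real.sqrt (1 + d + ‖x u‖) ≤ V := by
      refine le_trans ?_ hV
      gcongr
      exact hB u (hs.trans hu.1) (by linarith [hu.2])
    calc _ = sh ^ k * (N * Real.sqrt (1 + d + ‖x u‖)) := by ring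
      _ ≤ _ := by gcongr
  have hmv := norm_image_sub_le_of_norm_deriv_le_segment'
    (f := fun u => x u - u • v - (δ * u) • f (s • v + w)) (a := s) (b := s + ℓ) (C := δ * ε)
    (f' := fun u => (v + δ • f (x u)) - (1:ℝ) • v - (δ * 1) • f (s • v + w)) ?_ ?_ (s + ℓ)
    ⟨by linarith, le_rfl⟩
  · have e : (x (s + ℓ) - (s + ℓ) • v) - (x s - s • v) - (δ * ℓ) • f (s • v + w) =
      (x (s + ℓ) - (s + ℓ) • v - (δ * (s + ℓ)) • f (s • v + w)) -
        (x s - s • v - (δ * s) • f (s • v + w)) := by module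
    rw [e]
    refine hmv.trans (le_of_eq ?_)
    ring
  · intro u hu
    have h1 : HasDerivAt (fun u : ℝ => u • v) ((1:ℝ) • v) u := (hasDerivAt_id u).smul_const v
    have h2 : HasDerivAt (fun u : ℝ => (δ * u) • f (s • v + w)) ((δ * 1) • f (s • v + w)) u :=
      ((hasDerivAt_id u).const_mul δ).smul_const _
    exact (((hx u (hs.trans hu.1)).sub h1).sub h2).hasDerivWithinAt
  · intro u hu
    have e : (v + δ • f (x u)) - (1:ℝ) • v - (δ * 1) • f (s • v + w) =
      δ • (f (x u) - f (s • v + w)) := by module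
    rw [e, norm_smul, Real.norm_of_nonneg hδ.le]
    have := hclose u ⟨hu.1, hu.2.le⟩
    gcongr


/-- dyadic truncation of an index -/
def tr (g m : ℕ) : ℕ := m / 2 ^ g * 2 ^ g

lemma tr_zero (m : ℕ) : tr 0 m = m := by simp [tr]

lemma tr_top {h m : ℕ} (hm : m < 2 ^ h) : tr h m = 0 := by
  simp [tr, Nat.div_eq_of_lt hm]

lemma tr_le (g m : ℕ) : tr g m ≤ m := Nat.div_mul_le_self m _

lemma tr_succ (g m : ℕ) : ∃ q, tr (g+1) m = 2 * q * 2 ^ g ∧ (tr g m = tr (g+1) m ∨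
    tr g m = (2 * q + 1) * 2 ^ g) := by
  refine ⟨m / 2 ^ (g+1), ?_, ?_⟩
  · unfold tr; rw [pow_succ]; ring
  · unfold tr
    rw [pow_succ, ← Nat.div_div_eq_div_mul]
    rcases Nat.mod_two_eq_zero_or_one (m / 2 ^ g) with h | h
    · left
      have : m / 2 ^ g = 2 * (m / 2 ^ g / 2) := by omega
      conv_lhs => rw [this]
      ring
    · right
      have : m / 2 ^ g = 2 * (m / 2 ^ g / 2) + 1 := by omega
      conv_lhs => rw [this]

lemma multiscale {E : Type*} [NormedAddCommGroup E] [NormedSpace ℝ E] {J : ℕ} {y yt : ℕ → E}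
    {G : ℕ → E → E} {δ ℓ ε μ Θ : ℝ} (hδ : 0 < δ) (hℓ : 0 < ℓ) (hΘ : 1 ≤ Θ)
    (hε0 : 0 ≤ ε) (hε : ε ≤ δ) (hμ0 : 0 ≤ μ) (hμ : 2 * μ ≤ δ * Real.sqrt ℓ) (hμ1 : 2 * μ ≤ 1)
    (hT : δ * Real.sqrt (2 ^ J * ℓ) ≤ 1)
    (hJ : J * Θ * (δ * (Θ + 3) * Real.sqrt (2 ^ J * ℓ)) ≤ 1 / 2)
    (ha : ∀ m < 2 ^ J, ‖y (m+1) - y m - (δ * ℓ) • G m (yt m)‖ ≤ δ * ℓ * ε)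
    (hyt : ∀ m < 2 ^ J, ‖yt m - y m‖ ≤ μ)
    (hb : ∀ h ≤ J, ∀ b < 2 ^ (J - h),
      ‖∑ m ∈ Finset.range (2 ^ h), ℓ • G (b * 2 ^ h + m) (yt (b * 2 ^ h))‖ ≤
        Θ * Real.sqrt (2 ^ h * ℓ))
    (hc : ∀ h ≤ J, ∀ g < h, ∀ b < 2 ^ (J - h),
      (∀ m < 2 ^ h, ∀ l < 2 ^ h, ‖yt (b * 2 ^ h + tr g m) - yt (b * 2 ^ h + tr g l)‖ ≤ 2) →
      (∀ m < 2 ^ h, ∀ l < 2 ^ h, ‖yt (b * 2 ^ h + tr (g+1) m) - yt (b * 2 ^ h + tr (g+1) l)‖ ≤ 2) →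
      (∀ m < 2 ^ h, ‖yt (b * 2 ^ h + tr g m) - yt (b * 2 ^ h + tr (g+1) m)‖ ≤
        δ * (Θ + 2) * Real.sqrt (2 ^ g * ℓ) + 2 * μ) →
      ‖∑ m ∈ Finset.range (2 ^ h), ℓ • (G (b * 2 ^ h + m) (yt (b * 2 ^ h + tr g m)) -
        G (b * 2 ^ h + m) (yt (b * 2 ^ h + tr (g+1) m)))‖ ≤
        Θ * (δ * (Θ + 2) * Real.sqrt (2 ^ g * ℓ) + 2 * μ) *
          (Real.sqrt (2 ^ h * ℓ) * Real.sqrt (2 ^ (h - g)))) :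
    ∀ h ≤ J, ∀ b < 2 ^ (J - h), ‖y ((b+1) * 2 ^ h) - y (b * 2 ^ h)‖ ≤
      δ * (Θ + 2) * Real.sqrt (2 ^ h * ℓ) := by
  have hsq : ∀ h ≤ J, Real.sqrt (2 ^ h * ℓ) ≤ Real.sqrt (2 ^ J * ℓ) := by
    intro h hh
    apply Real.sqrt_le_sqrt
    gcongr
    norm_num
  intro h
  induction h using Nat.strong_induction_on with
  | _ h ih =>
  intro hh b hb'
  have hidx : ∀ m < 2 ^ h, b * 2 ^ h + m < 2 ^ J := by
    intro m hm
    have : 2 ^ J = 2 ^ (J - h) * 2 ^ h := by rw [← pow_add]; congr 1; omega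
    rw [this]
    calc b * 2 ^ h + m < b * 2 ^ h + 2 ^ h := by omega
      _ = (b + 1) * 2 ^ h := by ring
      _ ≤ _ := Nat.mul_le_mul_right _ hb'
  have htr : ∀ g, ∀ m < 2 ^ h, tr g m < 2 ^ h := fun g m hm => (tr_le g m).trans_lt hm
  -- one scale increments
  have hinc : ∀ g < h, ∀ m < 2 ^ h, ‖y (b * 2 ^ h + tr g m) - y (b * 2 ^ h + tr (g+1) m)‖ ≤
      δ * (Θ + 2) * Real.sqrt (2 ^ g * ℓ) := by
    intro g hg m hm
    obtain ⟨q, hq1, hq2⟩ := tr_succ g m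
    rcases hq2 with hq2 | hq2
    · rw [hq2, sub_self, norm_zero]; positivity
    · have e0 : b * 2 ^ h = b * 2 ^ (h - g) * 2 ^ g := by
        rw [mul_assoc, ← pow_add]; congr 2; omega
      have hlt := hidx _ (htr g m hm)
      rw [hq2, hq1]
      rw [e0] at hlt ⊢
      rw [hq2] at hlt
      have e1 : b * 2 ^ (h - g) * 2 ^ g + (2 * q + 1) * 2 ^ g = (b * 2 ^ (h - g) + 2 * q + 1) * 2 ^ g := by
        ring
      have e2 : b * 2 ^ (h - g) * 2 ^ g + 2 * q * 2 ^ g = (b * 2 ^ (h - g) + 2 * q) * 2 ^ g := by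
        ring
      rw [e1] at hlt ⊢
      rw [e2]
      refine ih g hg (by omega) _ ?_
      have e3 : 2 ^ J = 2 ^ (J - g) * 2 ^ g := by rw [← pow_add]; congr 1; omega
      rw [e3] at hlt
      have := Nat.lt_of_mul_lt_mul_right hlt
      omega
  -- spread
  have hspread : ∀ g ≤ h, ∀ m < 2 ^ h, ‖y (b * 2 ^ h + tr g m) - y (b * 2 ^ h)‖ ≤ 1 / 2 := by
    intro g hg m hm
    have key : ‖y (b * 2 ^ h + tr g m) - y (b * 2 ^ h)‖ ≤
        ((h - g : ℕ) : ℝ) * (δ * (Θ + 2) * Real.sqrt (2 ^ J * ℓ)) := by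
      induction hg using Nat.decreasingInduction with
      | self => rw [tr_top hm]; simp
      | of_succ g hg ihg =>
        have h1 := hinc g hg m hm
        have h2 : δ * (Θ + 2) * Real.sqrt (2 ^ g * ℓ) ≤ δ * (Θ + 2) * Real.sqrt (2 ^ J * ℓ) := by
          have := hsq g (by omega)
          gcongr
        have h3 := norm_sub_le_norm_sub_add_norm_sub (y (b * 2 ^ h + tr g m))
          (y (b * 2 ^ h + tr (g+1) m)) (y (b * 2 ^ h))
        have e : ((h - g : ℕ) : ℝ) = ((h - (g+1) : ℕ) : ℝ) + 1 := by
          have : h - g = (h - (g+1)) + 1 := by omega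
          rw [this]; push_cast; rfl
        rw [e, add_mul, one_mul]
        linarith
    refine key.trans (le_trans ?_ hJ)
    have h1 : ((h - g : ℕ) : ℝ) ≤ J * Θ := by
      have : ((h - g : ℕ) : ℝ) ≤ J := by exact_mod_cast (by omega)
      have : (0:ℝ) ≤ J := by positivity
      nlinarith
    gcongr
    norm_num
  have hpair : ∀ g ≤ h, ∀ m < 2 ^ h, ∀ l < 2 ^ h,
      ‖yt (b * 2 ^ h + tr g m) - yt (b * 2 ^ h + tr g l)‖ ≤ 2 := by
    intro g hg m hm l hl
    have a1 := hspread g hg m hm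
    have a2 := hspread g hg l hl
    have a3 := hyt _ (hidx _ (htr g m hm))
    have a4 := hyt _ (hidx _ (htr g l hl))
    have e : yt (b * 2 ^ h + tr g m) - yt (b * 2 ^ h + tr g l) =
      ((yt (b * 2 ^ h + tr g m) - y (b * 2 ^ h + tr g m)) +
      (y (b * 2 ^ h + tr g m) - y (b * 2 ^ h))) -
      ((yt (b * 2 ^ h + tr g l) - y (b * 2 ^ h + tr g l)) + (y (b * 2 ^ h + tr g l) - y (b * 2 ^ h))) := by
      abel
    rw [e]
    refine (norm_sub_le _ _).trans ?_
    have := norm_add_le (yt (b * 2 ^ h + tr g m) - y (b * 2 ^ h + tr g m)) (y (b * 2 ^ h + tr g m) - y (b * 2 ^ h))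
    have := norm_add_le (yt (b * 2 ^ h + tr g l) - y (b * 2 ^ h + tr g l)) (y (b * 2 ^ h + tr g l) - y (b * 2 ^ h))
    linarith
  have hdiff : ∀ g < h, ∀ m < 2 ^ h, ‖yt (b * 2 ^ h + tr g m) - yt (b * 2 ^ h + tr (g+1) m)‖ ≤
        δ * (Θ + 2) * Real.sqrt (2 ^ g * ℓ) + 2 * μ := by
    intro g hg m hm
    have a1 := hinc g hg m hm
    have a3 := hyt _ (hidx _ (htr g m hm))
    have a4 := hyt _ (hidx _ (htr (g+1) m hm))
    have e : yt (b * 2 ^ h + tr g m) - yt (b * 2 ^ h + tr (g+1) m) =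
      ((yt (b * 2 ^ h + tr g m) - y (b * 2 ^ h + tr g m)) +
      (y (b * 2 ^ h + tr g m) - y (b * 2 ^ h + tr (g+1) m))) -
      ((yt (b * 2 ^ h + tr (g+1) m) - y (b * 2 ^ h + tr (g+1) m))) := by
      abel
    rw [e]
    refine (norm_sub_le _ _).trans ?_
    have := norm_add_le (yt (b * 2 ^ h + tr g m) - y (b * 2 ^ h + tr g m)) (y (b * 2 ^ h + tr g m) - y (b * 2 ^ h + tr (g+1) m))
    linarith
  -- main decomposition
  have htel : ∀ m < 2 ^ h, G (b * 2 ^ h + m) (yt (b * 2 ^ h + m)) =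
      G (b * 2 ^ h + m) (yt (b * 2 ^ h)) + ∑ g ∈ Finset.range h,
        (G (b * 2 ^ h + m) (yt (b * 2 ^ h + tr g m)) -
        G (b * 2 ^ h + m) (yt (b * 2 ^ h + tr (g+1) m))) := by
    intro m hm
    rw [Finset.sum_range_sub' (fun g => G (b * 2 ^ h + m) (yt (b * 2 ^ h + tr g m))), tr_zero, tr_top hm]
    simp
  have hsum : y ((b+1) * 2 ^ h) - y (b * 2 ^ h) =
      ∑ m ∈ Finset.range (2 ^ h), (y (b * 2 ^ h + m + 1) - y (b * 2 ^ h + m) -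
        (δ * ℓ) • G (b * 2 ^ h + m) (yt (b * 2 ^ h + m))) +
      δ • (∑ m ∈ Finset.range (2 ^ h), ℓ • G (b * 2 ^ h + m) (yt (b * 2 ^ h)) +
        ∑ g ∈ Finset.range h, ∑ m ∈ Finset.range (2 ^ h),
          ℓ • (G (b * 2 ^ h + m) (yt (b * 2 ^ h + tr g m)) -
        G (b * 2 ^ h + m) (yt (b * 2 ^ h + tr (g+1) m)))) := by
    rw [Finset.sum_comm, ← Finset.sum_add_distrib]
    have e1 : ∑ m ∈ Finset.range (2 ^ h), (y (b * 2 ^ h + m + 1) - y (b * 2 ^ h + m)) =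
        y ((b+1) * 2 ^ h) - y (b * 2 ^ h) := by
      have := Finset.sum_range_sub (fun m => y (b * 2 ^ h + m)) (2 ^ h)
      simp only [← add_assoc, add_zero] at this
      rw [this]; congr 2; ring
    rw [Finset.sum_sub_distrib, e1, Finset.smul_sum]
    rw [sub_add, eq_comm, sub_eq_self, sub_eq_zero]
    refine Finset.sum_congr rfl fun m hm => ?_
    rw [htel m (Finset.mem_range.1 hm), ← Finset.smul_sum, ← smul_add, smul_smul]
  rw [hsum]
  have h2h : (0:ℝ) < 2 ^ h * ℓ := by positivity
  set S := Real.sqrt (2 ^ h * ℓ) with hS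
  have hS0 : 0 < S := Real.sqrt_pos.2 h2h
  have hSS : S * S = 2 ^ h * ℓ := Real.mul_self_sqrt h2h.le
  set R := Real.sqrt (2 ^ J * ℓ) with hR
  have hSR : S ≤ R := hsq h hh
  have hR0 : 0 < R := hS0.trans_le hSR
  -- error term
  have t1 : ‖∑ m ∈ Finset.range (2 ^ h), (y (b * 2 ^ h + m + 1) - y (b * 2 ^ h + m) -
        (δ * ℓ) • G (b * 2 ^ h + m) (yt (b * 2 ^ h + m)))‖ ≤ δ * S := by
    refine (norm_sum_le_of_le _ fun m hm => ha _ (hidx m (Finset.mem_range.1 hm))).trans ?_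
    rw [Finset.sum_const, Finset.card_range, nsmul_eq_mul]
    push_cast
    calc (2:ℝ) ^ h * (δ * ℓ * ε) = δ * (S * S * ε) := by rw [hSS]; ring
      _ ≤ δ * (S * (R * δ)) := by
        rw [mul_assoc]
        gcongr
      _ ≤ δ * (S * 1) := by gcongr; linarith
      _ = δ * S := by ring
  have t3 : ∀ g ∈ Finset.range h, ‖∑ m ∈ Finset.range (2 ^ h),
          ℓ • (G (b * 2 ^ h + m) (yt (b * 2 ^ h + tr g m)) -
        G (b * 2 ^ h + m) (yt (b * 2 ^ h + tr (g+1) m)))‖ ≤ S * (Θ * (δ * (Θ + 3) * R)) := by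
    intro g hg
    have hg' := Finset.mem_range.1 hg
    refine (hc h hh g hg' b hb' (hpair g hg'.le) (hpair (g+1) hg') (hdiff g hg')).trans ?_
    have e1 : Real.sqrt (2 ^ g * ℓ) * Real.sqrt (2 ^ (h - g)) = S := by
      rw [← Real.sqrt_mul (by positivity), hS]; congr 1
      have : (2:ℝ) ^ h = 2 ^ g * 2 ^ (h - g) := by rw [← pow_add]; congr 1; omega
      rw [this]; ring
    have e2 : 2 * μ ≤ δ * Real.sqrt (2 ^ g * ℓ) := by
      refine hμ.trans ?_
      gcongr
      have : (1:ℝ) ≤ 2 ^ g := one_le_pow₀ (by norm_num)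
      nlinarith
    calc Θ * (δ * (Θ + 2) * Real.sqrt (2 ^ g * ℓ) + 2 * μ) * (S * Real.sqrt (2 ^ (h - g)))
        ≤ Θ * (δ * (Θ + 2) * Real.sqrt (2 ^ g * ℓ) + δ * Real.sqrt (2 ^ g * ℓ)) * (S * Real.sqrt (2 ^ (h - g))) := by
          gcongr
      _ = S * (Θ * (δ * (Θ + 3) * (Real.sqrt (2 ^ g * ℓ) * Real.sqrt (2 ^ (h - g))))) := by ring
      _ ≤ _ := by rw [e1]; gcongr
  have t3' : ‖∑ g ∈ Finset.range h, ∑ m ∈ Finset.range (2 ^ h),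
          ℓ • (G (b * 2 ^ h + m) (yt (b * 2 ^ h + tr g m)) -
        G (b * 2 ^ h + m) (yt (b * 2 ^ h + tr (g+1) m)))‖ ≤ S := by
    refine (norm_sum_le_of_le _ t3).trans ?_
    rw [Finset.sum_const, Finset.card_range, nsmul_eq_mul]
    have hJh : (h:ℝ) ≤ J := by exact_mod_cast hh
    calc (h:ℝ) * (S * (Θ * (δ * (Θ + 3) * R))) ≤ J * (S * (Θ * (δ * (Θ + 3) * R))) := by gcongr
      _ = S * (J * Θ * (δ * (Θ + 3) * R)) := by ring
      _ ≤ S * 1 := by gcongr; linarith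
      _ = S := mul_one S
  have t2 := hb h hh b hb'
  refine (norm_add_le _ _).trans ?_
  rw [norm_smul, Real.norm_of_nonneg hδ.le]
  have t4 := norm_add_le (∑ m ∈ Finset.range (2 ^ h), ℓ • G (b * 2 ^ h + m) (yt (b * 2 ^ h)))
    (∑ g ∈ Finset.range h, ∑ m ∈ Finset.range (2 ^ h),
          ℓ • (G (b * 2 ^ h + m) (yt (b * 2 ^ h + tr g m)) -
        G (b * 2 ^ h + m) (yt (b * 2 ^ h + tr (g+1) m))))
  have t5 := mul_le_mul_of_nonneg_left (t4.trans (add_le_add t2 t3')) hδ.le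
  linarith


/-- Gaussian tails for the block sums of the field. -/
def TailP {d : ℕ} (v : EuclideanSpace ℝ (Fin d)) {Ω : Type*} [MeasurableSpace Ω] (P : Measure Ω)
    (F : Ω → EuclideanSpace ℝ (Fin d) → EuclideanSpace ℝ (Fin d)) (C : ℝ) : Prop :=
  ∀ (i : Fin d) (ℓ s0 : ℝ), 0 < ℓ → ℓ ≤ 1 →
        ∀ (n : ℕ) (z : Fin n → EuclideanSpace ℝ (Fin d)), 0 < n → (∀ m l, ‖z m - z l‖ ≤ 2) →
        (∀ lam : ℝ, 0 ≤ lam → P {ω | lam ≤ |∑ m : Fin n, ℓ * F ω ((s0 + m * ℓ) • v + z m) i|} ≤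
          ENNReal.ofReal (2 * Real.exp (-lam ^ 2 / (2 * (C ^ 2 * (n * ℓ)))))) ∧
        ∀ (z' : Fin n → EuclideanSpace ℝ (Fin d)) (η : ℝ), 0 < η → (∀ m l, ‖z' m - z' l‖ ≤ 2) →
        (∀ m, ‖z m - z' m‖ ≤ η) →
        ∀ lam : ℝ, 0 ≤ lam → P {ω | lam ≤ |∑ m : Fin n, ℓ * (F ω ((s0 + m * ℓ) • v + z m) i -
            F ω ((s0 + m * ℓ) • v + z' m) i)|} ≤
          ENNReal.ofReal (2 * Real.exp (-lam ^ 2 / (2 * (C ^ 2 * (η ^ 2 * (n * ℓ))))))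

lemma uni_bd {Ω ι : Type*} [MeasurableSpace Ω] {P : Measure Ω} (S : Finset ι) (A : ι → Set Ω)
    {c K : ℝ} (hK : (S.card : ℝ) ≤ K) (hc : 0 ≤ c) (hA : ∀ i ∈ S, P (A i) ≤ ENNReal.ofReal c) :
    P (⋃ i ∈ S, A i) ≤ ENNReal.ofReal (K * c) := by
  refine (measure_biUnion_finset_le S A).trans ?_
  refine (Finset.sum_le_card_nsmul _ _ _ hA).trans ?_
  rw [nsmul_eq_mul, ← ENNReal.ofReal_natCast, ← ENNReal.ofReal_mul (by positivity)]
  apply ENNReal.ofReal_le_ofReal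
  gcongr

lemma block_one {d : ℕ} {v : EuclideanSpace ℝ (Fin d)} {Ω : Type*} [MeasurableSpace Ω] {P : Measure Ω}
    {F : Ω → EuclideanSpace ℝ (Fin d) → EuclideanSpace ℝ (Fin d)} {C : ℝ} (hC : 0 < C)
    (H : TailP v P F C) (Grid : Finset (EuclideanSpace ℝ (Fin d))) (i : Fin d) {ℓ : ℝ} (s0 : ℝ)
    (hℓ : 0 < ℓ) (hℓ1 : ℓ ≤ 1) {Θ : ℝ} (hΘ : 0 ≤ Θ) (h : ℕ) :
    ∃ B : Set Ω, P B ≤ ENNReal.ofReal (Grid.card * (2 * Real.exp (-Θ ^ 2 / (2 * C ^ 2)))) ∧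
      ∀ ω ∉ B, ∀ ζ ∈ Grid, |∑ m ∈ Finset.range (2 ^ h), ℓ * F ω ((s0 + m * ℓ) • v + ζ) i| ≤
        Θ * Real.sqrt (2 ^ h * ℓ) := by
  have hpos : (0:ℝ) < 2 ^ h * ℓ := by positivity
  refine ⟨⋃ ζ ∈ Grid, {ω | Θ * Real.sqrt (2 ^ h * ℓ) ≤
    |∑ m : Fin (2 ^ h), ℓ * F ω ((s0 + m * ℓ) • v + ζ) i|}, ?_, ?_⟩
  · refine uni_bd _ _ le_rfl (by positivity) fun ζ _ => ?_
    refine ((H i ℓ s0 hℓ hℓ1 (2 ^ h) (fun _ => ζ) (by positivity) (by simp)).1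
      (Θ * Real.sqrt (2 ^ h * ℓ)) (by positivity)).trans (le_of_eq ?_)
    congr 3
    rw [mul_pow, Real.sq_sqrt hpos.le]
    push_cast
    field_simp
  · intro ω hω ζ hζ
    simp only [mem_iUnion, mem_ofPred_eq, not_exists, not_le] at hω
    have := hω ζ hζ
    rw [Fin.sum_univ_eq_sum_range (fun m => ℓ * F ω ((s0 + m * ℓ) • v + ζ) i)] at this
    exact this.le

lemma block_two {d : ℕ} {v : EuclideanSpace ℝ (Fin d)} {Ω : Type*} [MeasurableSpace Ω] {P : Measure Ω}
    {F : Ω → EuclideanSpace ℝ (Fin d) → EuclideanSpace ℝ (Fin d)} {C : ℝ} (hC : 0 < C)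
    (H : TailP v P F C) (Grid : Finset (EuclideanSpace ℝ (Fin d))) (i : Fin d) {ℓ : ℝ} (s0 : ℝ)
    (hℓ : 0 < ℓ) (hℓ1 : ℓ ≤ 1) {Θ η : ℝ} (hΘ : 0 ≤ Θ) (hη : 0 < η) {h g : ℕ} (hg : g ≤ h)
    (hr : (Grid.card : ℝ) ^ 2 * Real.exp (-Θ ^ 2 / (2 * C ^ 2)) ≤ 1) :
    ∃ B : Set Ω, P B ≤ ENNReal.ofReal (2 * (Grid.card ^ 2 * Real.exp (-Θ ^ 2 / (2 * C ^ 2)))) ∧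
      ∀ ω ∉ B, ∀ w w' : ℕ → EuclideanSpace ℝ (Fin d),
        (∀ q < 2 ^ (h - g), w q ∈ Grid) → (∀ q < 2 ^ (h - g), w' q ∈ Grid) →
        (∀ q < 2 ^ (h - g), ∀ l < 2 ^ (h - g), ‖w q - w l‖ ≤ 2) →
        (∀ q < 2 ^ (h - g), ∀ l < 2 ^ (h - g), ‖w' q - w' l‖ ≤ 2) →
        (∀ q < 2 ^ (h - g), ‖w q - w' q‖ ≤ η) →
        |∑ m ∈ Finset.range (2 ^ h), ℓ * (F ω ((s0 + m * ℓ) • v + w (m / 2 ^ g)) i -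
          F ω ((s0 + m * ℓ) • v + w' (m / 2 ^ g)) i)| ≤
        Θ * η * (Real.sqrt (2 ^ h * ℓ) * Real.sqrt (2 ^ (h - g))) := by
  classical
  have hpos : (0:ℝ) < 2 ^ h * ℓ := by positivity
  have hlt : ∀ m : Fin (2 ^ h), (m : ℕ) / 2 ^ g < 2 ^ (h - g) := by
    intro m
    rw [Nat.div_lt_iff_lt_mul (by positivity), ← pow_add]
    have : h - g + g = h := by omega
    rw [this]; exact m.2
  set W := Fintype.piFinset (fun _ : Fin (2 ^ (h - g)) => Grid) with hW
  set S := (W ×ˢ W).filter (fun p => (∀ q l, ‖p.1 q - p.1 l‖ ≤ 2) ∧ (∀ q l, ‖p.2 q - p.2 l‖ ≤ 2) ∧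
    ∀ q, ‖p.1 q - p.2 q‖ ≤ η) with hS
  set lam := Θ * η * (Real.sqrt (2 ^ h * ℓ) * Real.sqrt (2 ^ (h - g))) with hlam
  have hcard : (S.card : ℝ) ≤ ((Grid.card : ℝ) ^ 2) ^ (2 ^ (h - g)) := by
    have h1 : S.card ≤ W.card * W.card := by
      rw [← Finset.card_product]; exact Finset.card_filter_le _ _
    have h2 : W.card = Grid.card ^ (2 ^ (h - g)) := by
      rw [hW, Fintype.card_piFinset]; simp
    rw [h2] at h1
    calc (S.card : ℝ) ≤ ((Grid.card ^ (2 ^ (h - g)) * Grid.card ^ (2 ^ (h - g)) : ℕ) : ℝ) := by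
          exact_mod_cast h1
      _ = _ := by push_cast; ring
  refine ⟨⋃ p ∈ S, {ω | lam ≤ |∑ m : Fin (2 ^ h), ℓ * (F ω ((s0 + m * ℓ) • v + p.1 ⟨m / 2 ^ g, hlt m⟩) i -
          F ω ((s0 + m * ℓ) • v + p.2 ⟨m / 2 ^ g, hlt m⟩) i)|}, ?_, ?_⟩
  · refine (uni_bd S _ (c := 2 * Real.exp (-Θ ^ 2 / (2 * C ^ 2)) ^ (2 ^ (h - g))) hcard (by positivity) fun p hp => ?_).trans ?_
    · have hp' := (Finset.mem_filter.1 hp).2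
      refine ((H i ℓ s0 hℓ hℓ1 (2 ^ h) (fun m => p.1 ⟨m / 2 ^ g, hlt m⟩) (by positivity)
        (fun m l => hp'.1 _ _)).2 (fun m => p.2 ⟨m / 2 ^ g, hlt m⟩) η hη (fun m l => hp'.2.1 _ _)
        (fun m => hp'.2.2 _) lam (by positivity)).trans (le_of_eq ?_)
      congr 2
      rw [← Real.exp_nat_mul]
      congr 1
      rw [hlam, mul_pow, mul_pow, mul_pow, Real.sq_sqrt hpos.le, Real.sq_sqrt (by positivity)]
      push_cast
      field_simp
    · apply ENNReal.ofReal_le_ofReal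
      calc ((Grid.card : ℝ) ^ 2) ^ (2 ^ (h - g)) * (2 * Real.exp (-Θ ^ 2 / (2 * C ^ 2)) ^ (2 ^ (h - g)))
          = 2 * (Grid.card ^ 2 * Real.exp (-Θ ^ 2 / (2 * C ^ 2))) ^ (2 ^ (h - g)) := by
            rw [mul_pow]; ring
        _ ≤ 2 * (Grid.card ^ 2 * Real.exp (-Θ ^ 2 / (2 * C ^ 2))) := by
            gcongr
            exact pow_le_of_le_one (by positivity) hr (by positivity)
  · intro ω hω w w' h1 h2 h3 h4 h5
    simp only [mem_iUnion, mem_ofPred_eq, not_exists, not_le] at hω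
    have := hω (fun q => w q, fun q => w' q) (by
      rw [hS, Finset.mem_filter, Finset.mem_product, hW, Fintype.mem_piFinset, Fintype.mem_piFinset]
      exact ⟨⟨fun q => h1 q q.2, fun q => h2 q q.2⟩, fun q l => h3 q q.2 l l.2, fun q l => h4 q q.2 l l.2,
        fun q => h5 q q.2⟩)
    rw [Fin.sum_univ_eq_sum_range (fun m => ℓ * (F ω ((s0 + m * ℓ) • v + w (m / 2 ^ g)) i -
          F ω ((s0 + m * ℓ) • v + w' (m / 2 ^ g)) i))] at this
    exact this.le

lemma union_all {d : ℕ} {v : EuclideanSpace ℝ (Fin d)} {Ω : Type*} [MeasurableSpace Ω] {P : Measure Ω}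
    {F : Ω → EuclideanSpace ℝ (Fin d) → EuclideanSpace ℝ (Fin d)} {C : ℝ} (hC : 0 < C)
    (H : TailP v P F C) (Grid : Finset (EuclideanSpace ℝ (Fin d))) {ℓ : ℝ}
    (hℓ : 0 < ℓ) (hℓ1 : ℓ ≤ 1) {Θ : ℝ} {η : ℕ → ℝ} (hΘ : 0 ≤ Θ) (hη : ∀ g, 0 < η g) (J : ℕ)
    (hr : (Grid.card : ℝ) ^ 2 * Real.exp (-Θ ^ 2 / (2 * C ^ 2)) ≤ 1) :
    ∃ B : Set Ω, P B ≤ ENNReal.ofReal ((J + 1) * (2 ^ J * ((J + 1) * (d * (2 * (Grid.card ^ 2 * Real.exp (-Θ ^ 2 / (2 * C ^ 2)))))))) ∧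
      ∀ ω ∉ B, ∀ yt : ℕ → EuclideanSpace ℝ (Fin d), (∀ m < 2 ^ J, yt m ∈ Grid) →
      (∀ h ≤ J, ∀ b < 2 ^ (J - h),
      ‖∑ m ∈ Finset.range (2 ^ h), ℓ • F ω (((b * 2 ^ h + m : ℕ) * ℓ) • v + (yt (b * 2 ^ h)))‖ ≤
        d * Θ * Real.sqrt (2 ^ h * ℓ)) ∧
    (∀ h ≤ J, ∀ g < h, ∀ b < 2 ^ (J - h),
      (∀ m < 2 ^ h, ∀ l < 2 ^ h, ‖yt (b * 2 ^ h + tr g m) - yt (b * 2 ^ h + tr g l)‖ ≤ 2) →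
      (∀ m < 2 ^ h, ∀ l < 2 ^ h, ‖yt (b * 2 ^ h + tr (g+1) m) - yt (b * 2 ^ h + tr (g+1) l)‖ ≤ 2) →
      (∀ m < 2 ^ h, ‖yt (b * 2 ^ h + tr g m) - yt (b * 2 ^ h + tr (g+1) m)‖ ≤ η g) →
      ‖∑ m ∈ Finset.range (2 ^ h), ℓ • (F ω (((b * 2 ^ h + m : ℕ) * ℓ) • v + (yt (b * 2 ^ h + tr g m))) -
        F ω (((b * 2 ^ h + m : ℕ) * ℓ) • v + (yt (b * 2 ^ h + tr (g+1) m))))‖ ≤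
        d * Θ * η g *
          (Real.sqrt (2 ^ h * ℓ) * Real.sqrt (2 ^ (h - g)))) := by
  have A1 : ∀ (h b : ℕ) (i : Fin d), _ := fun h b i =>
    block_one hC H Grid i ((b * 2 ^ h : ℕ) * ℓ) hℓ hℓ1 hΘ h
  have A2 : ∀ (h b : ℕ) (i : Fin d) (g : ℕ), ∃ B : Set Ω,
      P B ≤ ENNReal.ofReal (2 * (Grid.card ^ 2 * Real.exp (-Θ ^ 2 / (2 * C ^ 2)))) ∧ (g < h →
      ∀ ω ∉ B, ∀ w w' : ℕ → EuclideanSpace ℝ (Fin d),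
        (∀ q < 2 ^ (h - g), w q ∈ Grid) → (∀ q < 2 ^ (h - g), w' q ∈ Grid) →
        (∀ q < 2 ^ (h - g), ∀ l < 2 ^ (h - g), ‖w q - w l‖ ≤ 2) →
        (∀ q < 2 ^ (h - g), ∀ l < 2 ^ (h - g), ‖w' q - w' l‖ ≤ 2) →
        (∀ q < 2 ^ (h - g), ‖w q - w' q‖ ≤ η g) →
        |∑ m ∈ Finset.range (2 ^ h), ℓ * (F ω ((((b * 2 ^ h : ℕ) * ℓ) + m * ℓ) • v + w (m / 2 ^ g)) i -
          F ω ((((b * 2 ^ h : ℕ) * ℓ) + m * ℓ) • v + w' (m / 2 ^ g)) i)| ≤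
        Θ * η g * (Real.sqrt (2 ^ h * ℓ) * Real.sqrt (2 ^ (h - g)))) := by
    intro h b i g
    by_cases hg : g < h
    · obtain ⟨B, hB1, hB2⟩ := block_two hC H Grid i ((b * 2 ^ h : ℕ) * ℓ) hℓ hℓ1 hΘ (hη g) hg.le hr
      exact ⟨B, hB1, fun _ => hB2⟩
    · exact ⟨∅, by simp, fun h => absurd h hg⟩
  choose B1 hB1 hB1' using A1
  choose B2 hB2 hB2' using A2
  set r2 : ℝ := 2 * (Grid.card ^ 2 * Real.exp (-Θ ^ 2 / (2 * C ^ 2))) with hr2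
  have hr20 : 0 ≤ r2 := by positivity
  have hle : (Grid.card * (2 * Real.exp (-Θ ^ 2 / (2 * C ^ 2))) : ℝ) ≤ r2 := by
    have : (Grid.card : ℝ) ≤ Grid.card ^ 2 := by exact_mod_cast Nat.le_self_pow (by norm_num) _
    rw [hr2]
    have h0 := Real.exp_pos (-Θ ^ 2 / (2 * C ^ 2))
    nlinarith
  refine ⟨⋃ h ∈ Finset.range (J+1), ⋃ b ∈ Finset.range (2 ^ (J - h)), ⋃ g ∈ Finset.range (h + 1),
    ⋃ i ∈ (Finset.univ : Finset (Fin d)), if g = h then B1 h b i else B2 h b i g, ?_, ?_⟩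
  · refine uni_bd _ _ (by simp) (by positivity) fun h hh => ?_
    have hh' : h ≤ J := by simpa [Nat.lt_succ_iff] using hh
    refine uni_bd _ _ ?_ (by positivity) fun b _ => ?_
    · simp only [Finset.card_range]; push_cast
      exact pow_le_pow_right₀ (by norm_num) (by omega)
    refine uni_bd _ _ ?_ (by positivity) fun g _ => ?_
    · simp only [Finset.card_range]; push_cast
      have : (h:ℝ) ≤ J := by exact_mod_cast hh'
      linarith
    refine uni_bd _ _ (by simp) hr20 fun i _ => ?_
    split_ifs
    · exact (hB1 h b i).trans (ENNReal.ofReal_le_ofReal hle)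
    · exact hB2 h b i g
  · intro ω hω yt hyt
    simp only [mem_iUnion, not_exists] at hω
    have hidx : ∀ h ≤ J, ∀ b < 2 ^ (J - h), ∀ m < 2 ^ h, b * 2 ^ h + m < 2 ^ J := by
      intro h hh b hb' m hm
      have : 2 ^ J = 2 ^ (J - h) * 2 ^ h := by rw [← pow_add]; congr 1; omega
      rw [this]
      calc b * 2 ^ h + m < b * 2 ^ h + 2 ^ h := by omega
        _ = (b + 1) * 2 ^ h := by ring
        _ ≤ _ := Nat.mul_le_mul_right _ hb'
    have ecoef : ∀ h b m : ℕ, ((b * 2 ^ h + m : ℕ) : ℝ) * ℓ = ((b * 2 ^ h : ℕ) * ℓ) + m * ℓ := by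
      intro h b m; push_cast; ring
    constructor
    · intro h hh b hb
      rw [mul_assoc]
      apply norm_le_card_mul (by positivity)
      intro i
      have hn := hω h (by simpa [Nat.lt_succ_iff] using hh) b (by simpa using hb) h (by simp) i (Finset.mem_univ _)
      rw [if_pos rfl] at hn
      have := hB1' h b i ω hn (yt (b * 2 ^ h)) (hyt _ (hidx h hh b hb 0 (by positivity)))
      simp only [ecoef]
      simpa using this
    · intro h hh g hg b hb p1 p2 p3
      rw [mul_assoc, mul_assoc]
      have hη' := hη g
      apply norm_le_card_mul (by positivity)
      intro i
      have hn := hω h (by simpa [Nat.lt_succ_iff] using hh) b (by simpa using hb) g (by simp; omega) i (Finset.mem_univ _)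
      rw [if_neg hg.ne] at hn
      have hm : ∀ q < 2 ^ (h - g), q * 2 ^ g < 2 ^ h := by
        intro q hq
        have : 2 ^ h = 2 ^ (h - g) * 2 ^ g := by rw [← pow_add]; congr 1; omega
        rw [this]; exact Nat.mul_lt_mul_of_pos_right hq (by positivity)
      have etr : ∀ q, tr g (q * 2 ^ g) = q * 2 ^ g := by
        intro q; unfold tr; rw [Nat.mul_div_cancel _ (by positivity)]
      have etr2 : ∀ m, tr (g+1) (m / 2 ^ g * 2 ^ g) = tr (g+1) m := by
        intro m; unfold tr
        rw [pow_succ, ← Nat.div_div_eq_div_mul, ← Nat.div_div_eq_div_mul, Nat.mul_div_cancel _ (by positivity)]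
      have := hB2' h b i g hg ω hn (fun q => yt (b * 2 ^ h + tr g (q * 2 ^ g)))
        (fun q => yt (b * 2 ^ h + tr (g+1) (q * 2 ^ g)))
        (fun q hq => hyt _ (hidx h hh b hb _ ((tr_le _ _).trans_lt (hm q hq))))
        (fun q hq => hyt _ (hidx h hh b hb _ ((tr_le _ _).trans_lt (hm q hq))))
        (fun q hq l hl => p1 _ (hm q hq) _ (hm l hl))
        (fun q hq l hl => p2 _ (hm q hq) _ (hm l hl))
        (fun q hq => p3 _ (hm q hq))
      simp only [etr2, etr] at this
      simp only [ecoef]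
      rw [mul_assoc] at this
      simpa [tr] using this


lemma exists_two_pow {x : ℝ} (hx : 1 ≤ x) : ∃ J : ℕ, x ≤ 2 ^ J ∧ (2:ℝ) ^ J ≤ 2 * x := by
  obtain ⟨n, h1, h2⟩ := exists_nat_pow_near hx (one_lt_two)
  refine ⟨n + 1, h2.le, ?_⟩
  rw [pow_succ]; linarith

/-- finite dyadic grid -/
noncomputable def gridF (d k : ℕ) (M : ℤ) : Finset (EuclideanSpace ℝ (Fin d)) := by
  classical
  exact (Fintype.piFinset fun _ : Fin d => Finset.Icc (-M) M).image (dpt d k)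

lemma gridF_card {d k : ℕ} {M : ℤ} (hM : 0 ≤ M) {A : ℝ} (hA : (2 * M + 1 : ℝ) ≤ A) :
    ((gridF d k M).card : ℝ) ≤ A ^ d := by
  classical
  have h1 : (gridF d k M).card ≤ (2 * M + 1).toNat ^ d := by
    unfold gridF
    refine Finset.card_image_le.trans ?_
    rw [Fintype.card_piFinset]
    simp only [Int.card_Icc, Finset.prod_const, Finset.card_univ, Fintype.card_fin]
    apply le_of_eq; congr 2; ring
  have h2 : (((2 * M + 1).toNat : ℕ) : ℝ) ≤ A := by
    have : (((2 * M + 1).toNat : ℕ) : ℤ) = 2 * M + 1 := Int.toNat_of_nonneg (by omega)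
    have h3 : (((2 * M + 1).toNat : ℕ) : ℝ) = ((2 * M + 1 : ℤ) : ℝ) := by
      rw [← this]; norm_cast
    rw [h3]; push_cast; exact hA
  calc ((gridF d k M).card : ℝ) ≤ (((2 * M + 1).toNat ^ d : ℕ) : ℝ) := by exact_mod_cast h1
    _ ≤ A ^ d := by push_cast; gcongr

lemma gridF_mem {d k : ℕ} {Y A : ℝ} {x : EuclideanSpace ℝ (Fin d)} (hx : ‖x‖ ≤ Y)
    (hY : 2 ^ k * Y + 1 ≤ A) : dpt d k (dfl d k x) ∈ gridF d k ⌊A⌋ := by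
  classical
  unfold gridF
  rw [Finset.mem_image]
  refine ⟨_, ?_, rfl⟩
  rw [Fintype.mem_piFinset]
  intro j
  have hj : |x j| ≤ Y := by
    have := PiLp.norm_apply_le x j
    rw [Real.norm_eq_abs] at this
    exact this.trans hx
  have hj' := abs_le.1 hj
  have hp : (0:ℝ) < 2 ^ k := by positivity
  rw [Finset.mem_Icc]
  have hfl := Int.sub_one_lt_floor A
  constructor
  · unfold dfl
    rw [Int.le_floor]
    push_cast
    nlinarith
  · unfold dfl
    apply Int.floor_mono
    nlinarith

section
variable {d : ℕ} {v : EuclideanSpace ℝ (Fin d)} {δ D N T : ℝ}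
  {f : EuclideanSpace ℝ (Fin d) → EuclideanSpace ℝ (Fin d)} {x : ℝ → EuclideanSpace ℝ (Fin d)}

lemma pw_badN (hd : 2 ≤ d) (hv : ‖v‖ = 1) (hδ : 0 < δ) (hδ1 : δ ≤ 1) (hδD : δ * D = 1)
    (hN : D ^ 4 ≤ N)
    (hf : ∀ x, ‖f x‖ ≤ N * Real.sqrt (1 + d + ‖x‖))
    (hx0 : x 0 = 0) (hx : ∀ s, 0 ≤ s → HasDerivAt x (v + δ • f (x s)) s)
    (hT : 0 ≤ T) (hTD : T ≤ D ^ 3) :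
    ‖x T - T • v‖ ^ 2 ≤ (32 * (1 + d) ^ 2) ^ 2 * δ ^ 12 * N ^ (4 * d + 2) := by
  have hD0 : 0 < D := by
    by_contra h
    push Not at h
    nlinarith
  have hD1 : 1 ≤ D := by nlinarith
  have hN1 : 1 ≤ N := (one_le_pow₀ hD1).trans hN
  have h1 := ode_growth hv hδ hδ1 (by linarith) hf hx0 hx hT
  have h2 : ‖x T - T • v‖ ≤ ‖x T‖ + T := by
    refine (norm_sub_le _ _).trans ?_
    rw [norm_smul, hv, mul_one, Real.norm_of_nonneg hT]
  have hD3 : 1 ≤ D ^ 3 := one_le_pow₀ hD1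
  have h3 : ‖x T - T • v‖ ≤ 32 * (1 + d) ^ 2 * (N ^ 2 * D ^ 6) := by
    have a1 : (1 + N) ^ 2 ≤ 4 * N ^ 2 := by nlinarith
    have a2 : (1 + T) ^ 2 ≤ 4 * D ^ 6 := by
      have : (1 + T) ^ 2 ≤ (2 * D ^ 3) ^ 2 := by gcongr; linarith
      nlinarith
    have a3 : (1 + (d:ℝ)) ^ 2 * (1 + N) ^ 2 * (1 + T) ^ 2 ≤ (1 + d) ^ 2 * (4 * N ^ 2) * (4 * D ^ 6) := by
      gcongr
    have a4 : T ≤ 16 * ((1 + (d:ℝ)) ^ 2 * (N ^ 2 * D ^ 6)) := by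
      have b1 : D ^ 3 ≤ D ^ 6 := pow_le_pow_right₀ hD1 (by norm_num)
      have b2 : (1:ℝ) ≤ (1 + d) ^ 2 := one_le_pow₀ (by have : (0:ℝ) ≤ d := by positivity
                                                       linarith)
      have b3 : 1 ≤ N ^ 2 := one_le_pow₀ hN1
      calc T ≤ 1 * (1 * D ^ 6) := by linarith
        _ ≤ 16 * ((1 + (d:ℝ)) ^ 2 * (N ^ 2 * D ^ 6)) := by
          have : (1:ℝ) * (1 * D ^ 6) ≤ (1 + (d:ℝ)) ^ 2 * (N ^ 2 * D ^ 6) := by gcongr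
          have : 0 ≤ (1 + (d:ℝ)) ^ 2 * (N ^ 2 * D ^ 6) := by positivity
          linarith
    linarith
  have h4 : ‖x T - T • v‖ ^ 2 ≤ (32 * (1 + d) ^ 2 * (N ^ 2 * D ^ 6)) ^ 2 := by gcongr
  refine h4.trans ?_
  have e1 : (32 * (1 + (d:ℝ)) ^ 2 * (N ^ 2 * D ^ 6)) ^ 2 = (32 * (1 + d) ^ 2) ^ 2 * (N ^ 4 * D ^ 12) := by ring
  rw [e1, mul_assoc]
  refine mul_le_mul_of_nonneg_left ?_ (by positivity)
  have e2 : δ ^ 12 * D ^ 12 = 1 := by rw [← mul_pow, hδD, one_pow]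
  have e3 : D ^ 24 ≤ N ^ 6 := by
    calc D ^ 24 = (D ^ 4) ^ 6 := by ring
      _ ≤ N ^ 6 := by gcongr
  calc N ^ 4 * D ^ 12 = δ ^ 12 * (N ^ 4 * D ^ 24) := by
        have : δ ^ 12 * (N ^ 4 * D ^ 24) = (δ ^ 12 * D ^ 12) * (N ^ 4 * D ^ 12) := by ring
        rw [this, e2, one_mul]
    _ ≤ δ ^ 12 * (N ^ 4 * N ^ 6) := by gcongr
    _ = δ ^ 12 * N ^ 10 := by ring
    _ ≤ δ ^ 12 * N ^ (4 * d + 2) := by gcongr; omega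

lemma pw_N (hv : ‖v‖ = 1) (hδ : 0 < δ) (hδ1 : δ ≤ 1) (hD : 64 * (1 + (d:ℝ)) ^ 2 ≤ D)
    (hN0 : 0 ≤ N) (hN : N ≤ D ^ 4)
    (hf : ∀ x, ‖f x‖ ≤ N * Real.sqrt (1 + d + ‖x‖))
    (hx0 : x 0 = 0) (hx : ∀ s, 0 ≤ s → HasDerivAt x (v + δ • f (x s)) s)
    (hTD : T ≤ D ^ 3) {s : ℝ} (hs : 0 ≤ s) (hsT : s ≤ T) :
    ‖x s‖ ≤ D ^ 15 ∧ ‖x s - s • v‖ ≤ D ^ 16 := by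
  have hdd : (0:ℝ) ≤ d := by positivity
  have hD1 : 64 ≤ D := by nlinarith
  have h1 := ode_growth hv hδ hδ1 hN0 hf hx0 hx hs
  have h2 : ‖x s - s • v‖ ≤ ‖x s‖ + s := by
    refine (norm_sub_le _ _).trans ?_
    rw [norm_smul, hv, mul_one, Real.norm_of_nonneg hs]
  have hD3 : 1 ≤ D ^ 3 := one_le_pow₀ (by linarith)
  have hD4 : 1 ≤ D ^ 4 := one_le_pow₀ (by linarith)
  have h3 : ‖x s‖ ≤ D ^ 15 := by
    refine h1.trans ?_
    calc (1 + (d:ℝ)) ^ 2 * (1 + N) ^ 2 * (1 + s) ^ 2 ≤ (1 + (d:ℝ)) ^ 2 * (2 * D ^ 4) ^ 2 * (2 * D ^ 3) ^ 2 := by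
          gcongr <;> linarith
      _ = 16 * (1 + (d:ℝ)) ^ 2 * D ^ 14 := by ring
      _ ≤ D * D ^ 14 := by gcongr; nlinarith
      _ = D ^ 15 := by ring
  refine ⟨h3, h2.trans ?_⟩
  have h4 : D ^ 3 ≤ D ^ 15 := pow_le_pow_right₀ (by linarith) (by norm_num)
  have h5 : 0 ≤ D ^ 15 := by positivity
  calc ‖x s‖ + s ≤ 2 * D ^ 15 := by linarith
    _ ≤ D * D ^ 15 := by gcongr; linarith
    _ = D ^ 16 := by ring

set_option maxHeartbeats 2000000 in
lemma pw_good (hv : ‖v‖ = 1) (hd : 2 ≤ d) (hδ : 0 < δ) (hδ1 : δ ≤ 1) (hδD : δ * D = 1)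
    (hD : 64 * (1 + (d:ℝ)) ^ 2 ≤ D)
    (hN0 : 0 ≤ N) (hN : N ≤ D ^ 4)
    (hf : ∀ x, ‖f x‖ ≤ N * Real.sqrt (1 + d + ‖x‖))
    (hf2 : ∀ (k : ℕ) x x', ‖x - x'‖ ≤ 1 / 2 ^ k →
          ‖f x - f x'‖ ≤ N * sh ^ k * Real.sqrt (1 + d + ‖x‖))
    (hx0 : x 0 = 0) (hx : ∀ s, 0 ≤ s → HasDerivAt x (v + δ • f (x s)) s)
    (hTD : T ≤ D ^ 3) {q : ℕ} (hTq : δ ^ q ≤ T) {Θ : ℝ} (hΘ : 1 ≤ Θ) {J k : ℕ}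
    (hJ1 : D ^ 68 ≤ 2 ^ J) (hJ2 : (2:ℝ) ^ J ≤ 2 * D ^ 68)
    (hk1 : D ^ (q + 72) ≤ 2 ^ k) (hk2 : (2:ℝ) ^ k ≤ 2 * D ^ (q + 72))
    (hJ : J * Θ * (δ * (Θ + 3) * Real.sqrt T) ≤ 1 / 2)
    {ℓ μ : ℝ} (hℓ : ℓ = T / 2 ^ J) (hμ : μ = d * (1 / 2 ^ k))
    (good : ∀ yt : ℕ → EuclideanSpace ℝ (Fin d), (∀ m < 2 ^ J, yt m ∈ gridF d k ⌊D ^ (q + 90)⌋) →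
      (∀ h ≤ J, ∀ b < 2 ^ (J - h),
      ‖∑ m ∈ Finset.range (2 ^ h), ℓ • f (((b * 2 ^ h + m : ℕ) * ℓ) • v + (yt (b * 2 ^ h)))‖ ≤
        Θ * Real.sqrt (2 ^ h * ℓ)) ∧
    (∀ h ≤ J, ∀ g < h, ∀ b < 2 ^ (J - h),
      (∀ m < 2 ^ h, ∀ l < 2 ^ h, ‖yt (b * 2 ^ h + tr g m) - yt (b * 2 ^ h + tr g l)‖ ≤ 2) →
      (∀ m < 2 ^ h, ∀ l < 2 ^ h, ‖yt (b * 2 ^ h + tr (g+1) m) - yt (b * 2 ^ h + tr (g+1) l)‖ ≤ 2) →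
      (∀ m < 2 ^ h, ‖yt (b * 2 ^ h + tr g m) - yt (b * 2 ^ h + tr (g+1) m)‖ ≤
        δ * (Θ + 2) * Real.sqrt (2 ^ g * ℓ) + 2 * μ) →
      ‖∑ m ∈ Finset.range (2 ^ h), ℓ • (f (((b * 2 ^ h + m : ℕ) * ℓ) • v + (yt (b * 2 ^ h + tr g m))) -
        f (((b * 2 ^ h + m : ℕ) * ℓ) • v + (yt (b * 2 ^ h + tr (g+1) m))))‖ ≤
        Θ * (δ * (Θ + 2) * Real.sqrt (2 ^ g * ℓ) + 2 * μ) *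
          (Real.sqrt (2 ^ h * ℓ) * Real.sqrt (2 ^ (h - g))))) :
    ‖x T - T • v‖ ≤ δ * (Θ + 2) * Real.sqrt T := by
  have hdd : (2:ℝ) ≤ d := by exact_mod_cast hd
  have hD1 : 64 ≤ D := by nlinarith
  have hDd : d ≤ D := by nlinarith
  have hD0 : 0 < D := by linarith
  have hδ64 : δ * 64 ≤ 1 := by rw [← hδD]; gcongr
  have hδd : δ * d ≤ 1 := by rw [← hδD]; gcongr
  have hdp : ∀ n : ℕ, δ ^ n * D ^ n = 1 := fun n => by rw [← mul_pow, hδD, one_pow]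
  have hT0 : 0 < T := lt_of_lt_of_le (by positivity) hTq
  have h2J : (0:ℝ) < 2 ^ J := by positivity
  have hℓ0 : 0 < ℓ := by rw [hℓ]; positivity
  have hTℓ : 2 ^ J * ℓ = T := by rw [hℓ]; field_simp
  have hℓu : ℓ ≤ δ ^ 65 := by
    rw [hℓ, div_le_iff₀ h2J]
    calc T ≤ D ^ 3 := hTD
      _ = δ ^ 65 * D ^ 65 * D ^ 3 := by rw [hdp, one_mul]
      _ = δ ^ 65 * D ^ 68 := by ring
      _ ≤ _ := by gcongr
  have hℓl : δ ^ (q + 68) / 2 ≤ ℓ := by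
    rw [hℓ, le_div_iff₀ h2J]
    calc δ ^ (q + 68) / 2 * 2 ^ J ≤ δ ^ (q + 68) / 2 * (2 * D ^ 68) := by gcongr
      _ = δ ^ q * (δ ^ 68 * D ^ 68) := by ring
      _ = δ ^ q := by rw [hdp, mul_one]
      _ ≤ T := hTq
  have hμ0 : 0 ≤ μ := by rw [hμ]; positivity
  have hμu : μ ≤ δ ^ (q + 71) := by
    rw [hμ, mul_one_div, div_le_iff₀ (by positivity)]
    calc (d:ℝ) ≤ D := hDd
      _ = δ ^ (q+71) * D ^ (q + 71) * D := by rw [hdp, one_mul]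
      _ = δ ^ (q+71) * D ^ (q + 72) := by ring
      _ ≤ _ := by gcongr
  have hℓ1 : ℓ ≤ 1 := hℓu.trans (pow_le_one₀ hδ.le hδ1)
  have hsqℓ : ℓ ≤ Real.sqrt ℓ := Real.le_sqrt_of_sq_le (by nlinarith)
  have hμ2 : 2 * μ ≤ δ * Real.sqrt ℓ := by
    calc 2 * μ ≤ 2 * δ ^ (q + 71) := by linarith
      _ = (2 * δ ^ 2) * δ ^ (q + 69) := by ring
      _ ≤ (1 / 2) * δ ^ (q + 69) := by gcongr; nlinarith
      _ = δ * (δ ^ (q + 68) / 2) := by ring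
      _ ≤ δ * Real.sqrt ℓ := by gcongr; linarith
  have hJ1' : (1:ℝ) ≤ J := by
    rcases Nat.eq_zero_or_pos J with rfl | h
    · exfalso
      have : D ≤ D ^ 68 := le_self_pow₀ (by linarith) (by norm_num)
      simp at hJ1; linarith
    · exact_mod_cast h
  have hsT0 : 0 ≤ Real.sqrt T := Real.sqrt_nonneg T
  have hδT : δ * Real.sqrt T ≤ 1 := by
    have a0 : 0 ≤ δ * Real.sqrt T := by positivity
    have a1 : 1 * 1 * (δ * (0 + 1) * Real.sqrt T) ≤ J * Θ * (δ * (Θ + 3) * Real.sqrt T) := by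
      gcongr <;> linarith
    linarith
  obtain ⟨j, hj1, hj2⟩ := exists_two_pow (x := D ^ 21) (one_le_pow₀ (by linarith))
  have hBB : ∀ s, 0 ≤ s → s ≤ T → ‖x s‖ ≤ D ^ 15 ∧ ‖x s - s • v‖ ≤ D ^ 16 := fun s hs hsT =>
    pw_N hv hδ hδ1 hD hN0 hN hf hx0 hx hTD hs hsT
  have hD15 : 1 ≤ D ^ 15 := one_le_pow₀ (by linarith)
  have hV : N * Real.sqrt (1 + d + D ^ 15) ≤ D ^ 20 := by
    have a1 : 1 + (d:ℝ) + D ^ 15 ≤ D ^ 16 := by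
      calc 1 + (d:ℝ) + D ^ 15 ≤ (1 + d) * D ^ 15 + D ^ 15 := by nlinarith
        _ = (2 + d) * D ^ 15 := by ring
        _ ≤ D * D ^ 15 := by gcongr; nlinarith
        _ = D ^ 16 := by ring
    have a2 : Real.sqrt (1 + d + D ^ 15) ≤ D ^ 16 := by
      apply Real.sqrt_le_iff.2
      have : 1 ≤ D ^ 16 := one_le_pow₀ (by linarith)
      exact ⟨by positivity, by nlinarith⟩
    calc N * Real.sqrt (1 + d + D ^ 15) ≤ D ^ 4 * D ^ 16 := by gcongr
      _ = D ^ 20 := by ring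
  have hk' : ℓ * (1 + D ^ 20) + μ ≤ 1 / 2 ^ (2 * j) := by
    have a1 : δ ^ 42 / 4 ≤ 1 / 2 ^ (2 * j) := by
      rw [le_div_iff₀ (by positivity)]
      calc δ ^ 42 / 4 * 2 ^ (2 * j) = δ ^ 42 / 4 * (2 ^ j) ^ 2 := by ring
        _ ≤ δ ^ 42 / 4 * (2 * D ^ 21) ^ 2 := by gcongr
        _ = δ ^ 42 * D ^ 42 := by ring
        _ = 1 := hdp 42
    refine le_trans ?_ a1
    have a2 : ℓ * (1 + D ^ 20) ≤ δ ^ 65 * (1 + D ^ 20) := by gcongr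
    have a3 : δ ^ 65 * (1 + D ^ 20) = δ ^ 65 + δ ^ 45 := by
      have : δ ^ 65 * (1 + D ^ 20) = δ ^ 65 + δ ^ 45 * (δ ^ 20 * D ^ 20) := by ring
      rw [this, hdp, mul_one]
    have a4 : δ ^ 65 ≤ δ ^ 45 := pow_le_pow_of_le_one hδ.le hδ1 (by norm_num)
    have a5 : δ ^ (q + 71) ≤ δ ^ 45 := pow_le_pow_of_le_one hδ.le hδ1 (by omega)
    have a6 : δ ^ 45 ≤ δ ^ 42 * (1 / 64) := by
      have : δ ^ 45 = δ ^ 42 * (δ ^ 2 * δ) := by ring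
      rw [this]
      gcongr
      have : δ ^ 2 ≤ 1 := pow_le_one₀ hδ.le hδ1
      nlinarith
    have : 0 < δ ^ 42 := by positivity
    linarith
  have hε : sh ^ (2 * j) * D ^ 20 ≤ δ := by
    rw [pow_mul, sh_sq, one_div, inv_pow, inv_mul_le_iff₀ (by positivity)]
    calc D ^ 20 = δ * D * D ^ 20 := by rw [hδD, one_mul]
      _ = D ^ 21 * δ := by ring
      _ ≤ 2 ^ j * δ := by gcongr
  have hsm : ∀ m : ℕ, m ≤ 2 ^ J → (m:ℝ) * ℓ ≤ T := by
    intro m hm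
    rw [← hTℓ]
    gcongr
    exact_mod_cast hm
  set y : ℕ → EuclideanSpace ℝ (Fin d) := fun m => x (m * ℓ) - (m * ℓ) • v with hy
  set yt : ℕ → EuclideanSpace ℝ (Fin d) := fun m => dpt d k (dfl d k (y m)) with hyt
  have hclose : ∀ m, ‖yt m - y m‖ ≤ μ := fun m => by
    rw [hμ]; exact dpt_dfl_norm k (y m)
  have hmem : ∀ m < 2 ^ J, yt m ∈ gridF d k ⌊D ^ (q + 90)⌋ := by
    intro m hm
    refine gridF_mem (hBB (m * ℓ) (by positivity) (hsm m hm.le)).2 ?_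
    have a1 : 1 ≤ D ^ (q + 88) := one_le_pow₀ (by linarith)
    calc (2:ℝ) ^ k * D ^ 16 + 1 ≤ 2 * D ^ (q + 72) * D ^ 16 + 1 := by gcongr
      _ = 2 * D ^ (q + 88) + 1 := by ring
      _ ≤ 64 * 64 * D ^ (q + 88) := by linarith
      _ ≤ D * D * D ^ (q + 88) := by gcongr
      _ = D ^ (q + 90) := by ring
  obtain ⟨hb, hc⟩ := good yt hmem
  have ha : ∀ m < 2 ^ J, ‖y (m+1) - y m - (δ * ℓ) • f ((m * ℓ) • v + yt m)‖ ≤ δ * ℓ * δ := by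
    intro m hm
    have hm1 : (m:ℝ) * ℓ + ℓ = ((m + 1 : ℕ) : ℝ) * ℓ := by push_cast; ring
    have := ode_step hv hδ hδ1 hN0 hf hf2 hx (fun s hs hsT => (hBB s hs hsT).1) hV hℓ0 (2 * j) hk' hε
      (s := m * ℓ) (by positivity) (by rw [hm1]; exact hsm _ hm) (hclose m)
    rw [hm1] at this
    exact this
  have key := multiscale (y := y) (yt := yt) (G := fun m z => f ((m * ℓ) • v + z)) hδ hℓ0 hΘ hδ.le le_rfl hμ0 hμ2
    (hμ2.trans (by
      refine le_trans ?_ hδT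
      gcongr
      rw [← hTℓ]
      have : (1:ℝ) ≤ 2 ^ J := one_le_pow₀ (by norm_num)
      nlinarith)) (by rw [hTℓ]; exact hδT) (by rw [hTℓ]; exact hJ) ha (fun m _ => hclose m) hb hc J le_rfl 0
      (by simp)
  rw [hTℓ] at key
  have e1 : y ((0 + 1) * 2 ^ J) = x T - T • v := by
    simp only [hy]; push_cast; rw [← hTℓ]; simp
  have e2 : y (0 * 2 ^ J) = 0 := by
    simp [hy, hx0]
  rw [e1, e2, sub_zero] at key
  exact key

end


set_option maxHeartbeats 2000000 in
lemma delta_bound {d : ℕ} (hd : 2 ≤ d) {v : EuclideanSpace ℝ (Fin d)} (hv : ‖v‖ = 1)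
    {Ω : Type*} [MeasurableSpace Ω] {P : Measure Ω} [IsProbabilityMeasure P]
    {F : Ω → EuclideanSpace ℝ (Fin d) → EuclideanSpace ℝ (Fin d)} {C : ℝ} (hC : 0 < C)
    (H : TailP v P F C) {N : Ω → ℝ} (hNm : Measurable N) (hN0 : ∀ ω, 0 ≤ N ω)
    (hNfin : ∫⁻ ω, ENNReal.ofReal (N ω ^ (4 * d + 2)) ∂P < ⊤)
    (hNb : ∀ᵐ ω ∂P, (∀ x, ‖F ω x‖ ≤ N ω * Real.sqrt (1 + d + ‖x‖)) ∧
        ∀ (k : ℕ) x x', ‖x - x'‖ ≤ 1 / 2 ^ k →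
          ‖F ω x - F ω x'‖ ≤ N ω * sh ^ k * Real.sqrt (1 + d + ‖x‖))
    {δ D T : ℝ} (hδ : 0 < δ) (hδ1 : δ ≤ 1) (hδD : δ * D = 1) (hD : 64 * (1 + (d:ℝ)) ^ 2 ≤ D)
    {x : Ω → ℝ → EuclideanSpace ℝ (Fin d)}
    (hx : ∀ᵐ ω ∂P, x ω 0 = 0 ∧ ∀ s : ℝ, 0 ≤ s → HasDerivAt (x ω) (v + δ • F ω (x ω s)) s)
    (hint : Integrable (fun ω => ‖x ω T - T • v‖ ^ 2) P)
    (hTD : T ≤ D ^ 3) {q : ℕ} (hTq : δ ^ q ≤ T) {Θ : ℝ} (hΘ : 1 ≤ Θ)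
    (hr : ((D ^ (q + 91)) ^ d) ^ 2 * Real.exp (-Θ ^ 2 / (2 * C ^ 2)) ≤ 1)
    (hJ : ∀ J : ℕ, (2:ℝ) ^ J ≤ 2 * D ^ 68 →
      J * (d * Θ) * (δ * (d * Θ + 3) * Real.sqrt T) ≤ 1 / 2) :
    ∫ ω, ‖x ω T - T • v‖ ^ 2 ∂P ≤ (δ * (d * Θ + 2) * Real.sqrt T) ^ 2 +
      D ^ 32 * ((2 * D ^ 68) ^ 3 * (d * (2 * (((D ^ (q + 91)) ^ d) ^ 2 * Real.exp (-Θ ^ 2 / (2 * C ^ 2)))))) +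
      (32 * (1 + d) ^ 2) ^ 2 * δ ^ 12 * (∫⁻ ω, ENNReal.ofReal (N ω ^ (4 * d + 2)) ∂P).toReal := by
  have hdd : (2:ℝ) ≤ d := by exact_mod_cast hd
  have hD1 : 64 ≤ D := by nlinarith
  have hD0 : 0 < D := by linarith
  have hT0 : 0 < T := lt_of_lt_of_le (by positivity) hTq
  obtain ⟨J, hJ1, hJ2⟩ := exists_two_pow (x := D ^ 68) (one_le_pow₀ (by linarith))
  obtain ⟨k, hk1, hk2⟩ := exists_two_pow (x := D ^ (q + 72)) (one_le_pow₀ (by linarith))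
  set ℓ : ℝ := T / 2 ^ J with hℓ
  set μ : ℝ := d * (1 / 2 ^ k) with hμ
  have hℓ0 : 0 < ℓ := by positivity
  have hμ0 : 0 < μ := by positivity
  have hℓ1 : ℓ ≤ 1 := by
    rw [hℓ, div_le_one (by positivity)]
    refine hTD.trans (le_trans ?_ hJ1)
    exact pow_le_pow_right₀ (by linarith) (by norm_num)
  set M : ℤ := ⌊D ^ (q + 90)⌋ with hM
  set Ex := Real.exp (-Θ ^ 2 / (2 * C ^ 2)) with hEx
  have hEx0 : 0 < Ex := Real.exp_pos _
  have hcard : ((gridF d k M).card : ℝ) ≤ (D ^ (q + 91)) ^ d := by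
    apply gridF_card
    · exact Int.floor_nonneg.2 (by positivity)
    · have a1 := Int.floor_le (D ^ (q + 90))
      have a2 : 1 ≤ D ^ (q + 90) := one_le_pow₀ (by linarith)
      calc (2 * M + 1 : ℝ) ≤ 64 * D ^ (q + 90) := by linarith
        _ ≤ D * D ^ (q + 90) := by gcongr
        _ = D ^ (q + 91) := by ring
  have hr2 : ((gridF d k M).card : ℝ) ^ 2 * Ex ≤ ((D ^ (q + 91)) ^ d) ^ 2 * Ex := by gcongr
  obtain ⟨B, hB1, hB2⟩ := union_all hC H (gridF d k M) hℓ0 hℓ1 (Θ := Θ)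
    (η := fun g => δ * (d * Θ + 2) * Real.sqrt (2 ^ g * ℓ) + 2 * μ) (by linarith)
    (fun g => by positivity) J (hr2.trans hr)
  have hPB : P B ≤ ENNReal.ofReal ((2 * D ^ 68) ^ 3 * (d * (2 * (((D ^ (q + 91)) ^ d) ^ 2 * Ex)))) := by
    refine hB1.trans (ENNReal.ofReal_le_ofReal ?_)
    have hJJ : (J + 1 : ℝ) ≤ 2 ^ J := by exact_mod_cast Nat.lt_two_pow_self
    have hJJ' : (J + 1 : ℝ) ≤ 2 * D ^ 68 := hJJ.trans hJ2
    calc (J + 1 : ℝ) * (2 ^ J * ((J + 1) * (d * (2 * ((gridF d k M).card ^ 2 * Ex)))))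
        ≤ (2 * D ^ 68) * ((2 * D ^ 68) * ((2 * D ^ 68) * (d * (2 * (((D ^ (q + 91)) ^ d) ^ 2 * Ex))))) := by
          gcongr
      _ = _ := by ring
  set e1 : ℝ := (δ * (d * Θ + 2) * Real.sqrt T) ^ 2 with he1
  set pb : ℝ := (2 * D ^ 68) ^ 3 * (d * (2 * (((D ^ (q + 91)) ^ d) ^ 2 * Ex))) with hpb
  set c : ℝ := (32 * (1 + d) ^ 2) ^ 2 * δ ^ 12 with hc
  set B' := toMeasurable P B with hB'
  have hB'm : MeasurableSet B' := measurableSet_toMeasurable P B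
  have hpt : ∀ᵐ ω ∂P, ENNReal.ofReal (‖x ω T - T • v‖ ^ 2) ≤ ENNReal.ofReal e1 +
      B'.indicator (fun _ => ENNReal.ofReal (D ^ 32)) ω +
      ENNReal.ofReal c * ENNReal.ofReal (N ω ^ (4 * d + 2)) := by
    filter_upwards [hNb, hx] with ω h1 h2
    rcases le_total (D ^ 4) (N ω) with hN | hN
    · have := pw_badN hd hv hδ hδ1 hδD hN h1.1 h2.1 h2.2 hT0.le hTD
      refine le_trans (ENNReal.ofReal_le_ofReal this) ?_
      rw [ENNReal.ofReal_mul (by positivity)]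
      exact le_add_self
    · refine le_trans ?_ le_self_add
      by_cases hω : ω ∈ B'
      · refine le_trans ?_ le_add_self
        rw [indicator_of_mem hω]
        apply ENNReal.ofReal_le_ofReal
        have := (pw_N hv hδ hδ1 hD (hN0 ω) hN h1.1 h2.1 h2.2 hTD hT0.le le_rfl).2
        calc ‖x ω T - T • v‖ ^ 2 ≤ (D ^ 16) ^ 2 := by gcongr
          _ = D ^ 32 := by ring
      · refine le_trans ?_ le_self_add
        apply ENNReal.ofReal_le_ofReal
        have hωB : ω ∉ B := fun h => hω (subset_toMeasurable P B h)
        have hdΘ : 1 ≤ (d:ℝ) * Θ := by nlinarith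
        have := pw_good hv hd hδ hδ1 hδD hD (hN0 ω) hN h1.1 h1.2 h2.1 h2.2 hTD hTq hdΘ hJ1 hJ2 hk1 hk2
          (hJ J hJ2) hℓ hμ (hB2 ω hωB)
        rw [he1]
        gcongr
  have hmeas : Measurable fun ω => ENNReal.ofReal e1 +
      B'.indicator (fun _ => ENNReal.ofReal (D ^ 32)) ω :=
    Measurable.const_add (measurable_const.indicator hB'm) _
  have hpb0 : 0 ≤ pb := by positivity
  have he10 : 0 ≤ e1 := by positivity
  have hc0 : 0 ≤ c := by positivity
  clear_value pb e1 c
  have hlin : ENNReal.ofReal (∫ ω, ‖x ω T - T • v‖ ^ 2 ∂P) ≤ ENNReal.ofReal e1 +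
      ENNReal.ofReal (D ^ 32) * ENNReal.ofReal pb +
      ENNReal.ofReal c * ∫⁻ ω, ENNReal.ofReal (N ω ^ (4 * d + 2)) ∂P := by
    rw [ofReal_integral_eq_lintegral_ofReal hint (ae_of_all _ fun ω => by positivity)]
    refine (lintegral_mono_ae hpt).trans ?_
    rw [lintegral_add_left hmeas, lintegral_add_left measurable_const,
      lintegral_const_mul _ ((hNm.pow_const _).ennreal_ofReal), lintegral_const, measure_univ, mul_one,
      lintegral_indicator_const hB'm, measure_toMeasurable]
    gcongr
  have hlin2 : ENNReal.ofReal (∫ ω, ‖x ω T - T • v‖ ^ 2 ∂P) ≤ ENNReal.ofReal (e1 + D ^ 32 * pb +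
      c * (∫⁻ ω, ENNReal.ofReal (N ω ^ (4 * d + 2)) ∂P).toReal) := by
    refine hlin.trans (le_of_eq ?_)
    rw [ENNReal.ofReal_add (by positivity) (by positivity), ENNReal.ofReal_add (by positivity) (by positivity),
      ENNReal.ofReal_mul (by positivity), ENNReal.ofReal_mul (by positivity), ENNReal.ofReal_toReal hNfin.ne]
  exact (ENNReal.ofReal_le_ofReal_iff (by positivity)).1 hlin2


lemma tend_rpow {s : ℝ} (hs : 0 < s) :
    Tendsto (fun δ : ℝ => δ ^ s) (nhdsWithin 0 (Ioi 0)) (nhds 0) := by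
  have h := (Real.continuousAt_rpow_const 0 s (Or.inr hs.le)).tendsto
  rw [Real.zero_rpow hs.ne'] at h
  exact h.mono_left nhdsWithin_le_nhds

lemma tend_super {κ c : ℝ} (hκ : 0 < κ) (hc : 0 < c) (n : ℕ) :
    Tendsto (fun D : ℝ => D ^ n * Real.exp (-(D ^ κ) ^ 2 / c)) atTop (nhds 0) := by
  have h1 := tendsto_rpow_mul_exp_neg_mul_atTop_nhds_zero (n / (2 * κ)) (1 / c) (by positivity)
  have h2 := h1.comp (tendsto_rpow_atTop (y := 2 * κ) (by positivity))
  refine h2.congr' ?_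
  filter_upwards [eventually_gt_atTop 0] with D hD
  simp only [Function.comp]
  rw [← Real.rpow_mul hD.le]
  have e1 : 2 * κ * (n / (2 * κ)) = n := by field_simp
  have e2 : (D ^ κ) ^ 2 = D ^ (2 * κ) := by
    rw [← Real.rpow_natCast, ← Real.rpow_mul hD.le]; congr 1; push_cast; ring
  rw [e1, Real.rpow_natCast, e2]
  congr 2
  ring

lemma J_bound {D κ : ℝ} (hκ : 0 < κ) (hD : 1 ≤ D) {J : ℕ} (hJ : (2:ℝ) ^ J ≤ 2 * D ^ 68) :
    (J : ℝ) ≤ (1 + 68 / (κ * Real.log 2)) * D ^ κ := by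
  have hl2 : 0 < Real.log 2 := Real.log_pos (by norm_num)
  have h1 := Real.log_le_log (by positivity) hJ
  rw [Real.log_pow, Real.log_mul (by norm_num) (by positivity), Real.log_pow] at h1
  have h2 := Real.log_le_rpow_div (by linarith : 0 ≤ D) hκ
  have h3 : 1 ≤ D ^ κ := Real.one_le_rpow hD hκ.le
  have h4 : (J:ℝ) * Real.log 2 ≤ ((1 + 68 / (κ * Real.log 2)) * D ^ κ) * Real.log 2 := by
    have e : ((1 + 68 / (κ * Real.log 2)) * D ^ κ) * Real.log 2 = D ^ κ * Real.log 2 + 68 * (D ^ κ / κ) := by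
      field_simp
    rw [e]
    push_cast at h1
    nlinarith
  exact le_of_mul_le_mul_right h4 hl2


/-- In the same setting (Gaussian, centered, homogeneous, divergence-free
field with power spectrum determined by `a` and `α`), assume `α < 1/2`. Then for every
`t > 0` and `ρ > 0` one has `lim_{δ→0+} E|y_δ(t δ^{-2(1-ρ)})|² = 0`. -/
theorem stmt3 (d : ℕ) (hd : 2 ≤ d)
    (α : ℝ) (hα1 : α < 1) (hα2 : α < 1 / 2)
    (K : ℝ) (hK : 0 < K)
    (a : ℝ → ℝ)
    (ha_nonneg : ∀ r : ℝ, 0 ≤ r → 0 ≤ a r)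
    (ha_bdd : ∃ M : ℝ, ∀ r : ℝ, 0 ≤ r → a r ≤ M)
    (ha_meas : Measurable a)
    (ha_supp : ∀ r : ℝ, K < r → a r = 0)
    (ha_cont : ContinuousAt a 0)
    (ha_one : a 0 = 1)
    (v : EuclideanSpace ℝ (Fin d)) (hv : ‖v‖ = 1)
    (Ω : Type*) [MeasurableSpace Ω] (P : Measure Ω) [IsProbabilityMeasure P]
    (F : Ω → EuclideanSpace ℝ (Fin d) → EuclideanSpace ℝ (Fin d))
    (hF_meas : Measurable (Function.uncurry F))
    (hF_reg : ∀ᵐ ω ∂P, ContDiff ℝ 1 (F ω) ∧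
      ∀ x : EuclideanSpace ℝ (Fin d),
        ∑ i : Fin d, fderiv ℝ (F ω) x (EuclideanSpace.single i 1) i = 0)
    (hF_gauss : ∀ (N : ℕ) (x c : Fin N → EuclideanSpace ℝ (Fin d)),
      Measure.map (fun ω => ∑ j : Fin N, ⟪c j, F ω (x j)⟫) P =
        gaussianReal 0 (Real.toNNReal (∑ j : Fin N, ∑ l : Fin N,
          ∑ i : Fin d, ∑ i' : Fin d,
            c j i * covEntry d α a (x j - x l) i i' * c l i')))
    (X : ℝ → Ω → ℝ → EuclideanSpace ℝ (Fin d))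
    (hX_meas : ∀ δ ∈ Ioc (0:ℝ) 1, Measurable (Function.uncurry (X δ)))
    (hX_sol : ∀ δ ∈ Ioc (0:ℝ) 1, ∀ᵐ ω ∂P, X δ ω 0 = 0 ∧
      ∀ s : ℝ, 0 ≤ s → HasDerivAt (X δ ω) (v + δ • F ω (X δ ω s)) s)
    (hy_int : ∀ δ ∈ Ioc (0:ℝ) 1, ∀ s : ℝ,
      Integrable (fun ω => ‖X δ ω s - s • v‖ ^ 2) P)
    (t ρ : ℝ) (ht : 0 < t) (hρ : 0 < ρ) :
    Tendsto (fun δ : ℝ =>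
        ∫ ω, ‖X δ ω (t * δ ^ (-2 * (1 - ρ))) -
            (t * δ ^ (-2 * (1 - ρ))) • v‖ ^ 2 ∂P)
      (nhdsWithin 0 (Ioi 0)) (nhds 0) := by
  obtain ⟨C, hC, m0, m1, htail⟩ := field_props hd hα2 hK ha_nonneg ha_bdd ha_meas ha_supp v hv hF_meas hF_gauss
  have H : TailP v P F C := htail
  have hcont : ∀ᵐ ω ∂P, Continuous (F ω) := hF_reg.mono fun ω h => h.1.continuous
  obtain ⟨N, hNm, hN0, hNfin, hNb⟩ := field_env hd hF_meas hcont hC m0 m1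
  set EN := (∫⁻ ω, ENNReal.ofReal (N ω ^ (4 * d + 2)) ∂P).toReal with hEN
  set κ := ρ / 8 with hκ
  have hκ0 : 0 < κ := by positivity
  set q : ℕ := ⌈2 * ρ⌉₊ with hq
  have hinv : Tendsto (fun δ : ℝ => δ⁻¹) (nhdsWithin 0 (Ioi 0)) atTop := tendsto_inv_nhdsGT_zero
  set A : ℝ := 1 + 68 / (κ * Real.log 2) with hA
  have hA0 : 0 < A := by
    have : 0 < Real.log 2 := Real.log_pos (by norm_num)
    positivity
  have hpos : ∀ᶠ δ : ℝ in nhdsWithin 0 (Ioi 0), 0 < δ := eventually_mem_nhdsWithin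
  -- square root of the time
  have hsqrt : ∀ δ : ℝ, 0 < δ → δ * Real.sqrt (t * δ ^ (-2 * (1 - ρ))) = Real.sqrt t * δ ^ ρ := by
    intro δ hδ
    have e : δ ^ (-2 * (1 - ρ)) = (δ ^ (-(1 - ρ))) ^ 2 := by
      rw [← Real.rpow_natCast, ← Real.rpow_mul hδ.le]; congr 1; push_cast; ring
    rw [e, Real.sqrt_mul ht.le, Real.sqrt_sq (by positivity)]
    have e2 : δ ^ ρ = δ * δ ^ (-(1 - ρ)) := by
      nth_rewrite 2 [← Real.rpow_one δ]
      rw [← Real.rpow_add hδ]; congr 1; ring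
    rw [e2]; ring
  have hsuper := fun n : ℕ => (tend_super (κ := κ) (c := 2 * C ^ 2) hκ0 (by positivity) n).comp hinv
  -- the bounding function
  have hbound : Tendsto (fun δ : ℝ => (Real.sqrt t * (d * δ ^ (ρ - κ) + 2 * δ ^ ρ)) ^ 2 +
      (16 * d) * ((δ⁻¹) ^ (236 + (q + 91) * d * 2) * Real.exp (-((δ⁻¹) ^ κ) ^ 2 / (2 * C ^ 2))) +
      (32 * (1 + (d:ℝ)) ^ 2) ^ 2 * δ ^ (12:ℝ) * EN) (nhdsWithin 0 (Ioi 0)) (nhds 0) := by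
    have b1 := ((((tend_rpow (s := ρ - κ) (by rw [hκ]; linarith)).const_mul (d:ℝ)).add
      ((tend_rpow hρ).const_mul 2)).const_mul (Real.sqrt t)).pow 2
    have b2 := (hsuper (236 + (q + 91) * d * 2)).const_mul (16 * (d:ℝ))
    have b3 := ((tend_rpow (s := 12) (by norm_num)).const_mul ((32 * (1 + (d:ℝ)) ^ 2) ^ 2)).mul_const EN
    have := (b1.add b2).add b3
    simpa using this
  have c1 : ∀ᶠ δ : ℝ in nhdsWithin 0 (Ioi 0), 64 * (1 + (d:ℝ)) ^ 2 ≤ δ⁻¹ := hinv.eventually_ge_atTop _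
  have c2 : ∀ᶠ δ : ℝ in nhdsWithin 0 (Ioi 0), t * δ ^ (1 + 2 * ρ) ≤ 1 := by
    have := (tend_rpow (s := 1 + 2 * ρ) (by positivity)).const_mul t
    rw [mul_zero] at this
    exact this.eventually_le_const one_pos
  have c3 : ∀ᶠ δ : ℝ in nhdsWithin 0 (Ioi 0), δ ^ (2:ℝ) ≤ t :=
    (tend_rpow (s := 2) (by norm_num)).eventually_le_const ht
  have c4 : ∀ᶠ δ : ℝ in nhdsWithin 0 (Ioi 0), (δ⁻¹) ^ ((q + 91) * d * 2) *
      Real.exp (-((δ⁻¹) ^ κ) ^ 2 / (2 * C ^ 2)) ≤ 1 := (hsuper _).eventually_le_const one_pos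
  have c5 : ∀ᶠ δ : ℝ in nhdsWithin 0 (Ioi 0), A * d * (d + 3) * Real.sqrt t * δ ^ (ρ - 3 * κ) ≤ 1 / 2 := by
    have := (tend_rpow (s := ρ - 3 * κ) (by rw [hκ]; linarith)).const_mul (A * d * (d + 3) * Real.sqrt t)
    rw [mul_zero] at this
    exact this.eventually_le_const (by norm_num)
  refine squeeze_zero' (Eventually.of_forall fun δ => integral_nonneg fun ω => by positivity) ?_ hbound
  filter_upwards [hpos, c1, c2, c3, c4, c5] with δ hδ h1 h2 h3 h4 h5
  have hdd : (2:ℝ) ≤ d := by exact_mod_cast hd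
  set D := δ⁻¹ with hD
  have hδD : δ * D = 1 := mul_inv_cancel₀ hδ.ne'
  have hD1 : 1 ≤ D := by nlinarith
  have hδ1 : δ ≤ 1 := by nlinarith
  have hD0 : 0 < D := by linarith
  have hDκ : D ^ κ = δ ^ (-κ) := by rw [hD, Real.inv_rpow hδ.le, Real.rpow_neg hδ.le]
  have hΘ : 1 ≤ D ^ κ := Real.one_le_rpow hD1 hκ0.le
  set T := t * δ ^ (-2 * (1 - ρ)) with hT
  have hsT := hsqrt δ hδ
  rw [← hT] at hsT
  have hTD : T ≤ D ^ 3 := by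
    have e1 : T = t * δ ^ (1 + 2 * ρ) * D ^ 3 := by
      have : D ^ 3 = δ ^ (-3 : ℝ) := by
        rw [hD, Real.rpow_neg hδ.le, inv_pow]; norm_cast
      rw [this, mul_assoc, ← Real.rpow_add hδ, hT]; congr 2; ring
    rw [e1]
    have : 0 < D ^ 3 := by positivity
    nlinarith
  have hTq : δ ^ q ≤ T := by
    have a1 : δ ^ q ≤ δ ^ (2 * ρ) := by
      rw [← Real.rpow_natCast]
      exact Real.rpow_le_rpow_of_exponent_ge hδ hδ1 (Nat.le_ceil _)
    have e1 : δ ^ (2 * ρ) = δ ^ (2:ℝ) * δ ^ (-2 * (1 - ρ)) := by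
      rw [← Real.rpow_add hδ]; congr 1; ring
    rw [e1] at a1
    refine a1.trans ?_
    rw [hT]
    gcongr
  have hr : ((D ^ (q + 91)) ^ d) ^ 2 * Real.exp (-(D ^ κ) ^ 2 / (2 * C ^ 2)) ≤ 1 := by
    rw [← pow_mul, ← pow_mul, ← mul_assoc]; exact h4
  have hJ : ∀ J : ℕ, (2:ℝ) ^ J ≤ 2 * D ^ 68 →
      J * (d * D ^ κ) * (δ * (d * D ^ κ + 3) * Real.sqrt T) ≤ 1 / 2 := by
    intro J hJ
    have hJb := J_bound hκ0 hD1 hJ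
    refine le_trans ?_ h5
    have e1 : δ ^ (ρ - 3 * κ) = (D ^ κ) ^ 3 * δ ^ ρ := by
      rw [hDκ, ← Real.rpow_natCast, ← Real.rpow_mul hδ.le, ← Real.rpow_add hδ]
      congr 1; push_cast; ring
    calc (J:ℝ) * (d * D ^ κ) * (δ * (d * D ^ κ + 3) * Real.sqrt T)
        = (J:ℝ) * (d * D ^ κ) * (d * D ^ κ + 3) * (Real.sqrt t * δ ^ ρ) := by rw [← hsT]; ring
      _ ≤ (A * D ^ κ) * (d * D ^ κ) * (d * D ^ κ + 3 * D ^ κ) * (Real.sqrt t * δ ^ ρ) := by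
          gcongr; linarith
      _ = A * d * (d + 3) * Real.sqrt t * δ ^ (ρ - 3 * κ) := by rw [e1]; ring
  have hmem : δ ∈ Ioc (0:ℝ) 1 := ⟨hδ, hδ1⟩
  have key := delta_bound hd hv hC H hNm hN0 hNfin hNb hδ hδ1 hδD h1 (hX_sol δ hmem) (hy_int δ hmem T)
    hTD hTq hΘ hr hJ
  refine key.trans (le_of_eq ?_)
  rw [← hEN]
  have f1 : δ * (d * D ^ κ + 2) * Real.sqrt T = Real.sqrt t * (d * δ ^ (ρ - κ) + 2 * δ ^ ρ) := by
    have e1 : δ ^ (ρ - κ) = D ^ κ * δ ^ ρ := by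
      rw [hDκ, ← Real.rpow_add hδ]; congr 1; ring
    calc δ * (d * D ^ κ + 2) * Real.sqrt T = (d * D ^ κ + 2) * (δ * Real.sqrt T) := by ring
      _ = _ := by rw [hsT, e1]; ring
  have f2 : δ ^ (12:ℝ) = δ ^ 12 := by norm_cast
  have f3 : D ^ 32 * ((2 * D ^ 68) ^ 3 * (d * (2 * (((D ^ (q + 91)) ^ d) ^ 2 *
      Real.exp (-(D ^ κ) ^ 2 / (2 * C ^ 2)))))) =
      (16 * d) * (D ^ (236 + (q + 91) * d * 2) * Real.exp (-(D ^ κ) ^ 2 / (2 * C ^ 2))) := by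
    rw [← pow_mul, ← pow_mul, pow_add]
    ring
  rw [f1, f2, f3]
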